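/- arXiv:1708.06411 — 3 statements merged into one kernel-verified Lean document; each statement's English description precedes it below -/
import Mathlib

section
/- For every graph G on n vertices, every tree decomposition (T,X) of G of width at most t−1, every nonredundant path P ⊆ T, and every integer m with 1 ≤ m ≤ n, there is a cut (B,W,Z) in G such that one of the following holds: (1) |B| = m, Z = ∅, and e_G(B,W,Z) ≤ 2·t·Δ(G); or (2) |B| ≤ m ≤ |B| + |Z|, 0 < |Z| ≤ n/2, e_G(B,W,Z) ≤ t·Δ(G)·log₂(16/w*(P,X)), and there exist a tree decomposition (T',X') of the induced subgraph G[Z] of width at most t−1 and a nonredundant path P' ⊆ T' with w*(P',X') ≥ 2·w*(P,X). Here Δ(G) is the maximum degree of G. -/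
/-!
Why a cut as claimed exists. Root the tree at a nonredundant end of the path `P`, write `top v` for
the node nearest to the root whose cluster contains `v`, and attach each vertex to the last path
node above `top v`. Let `R_k` be the vertices attached to the `k`-th path node that lie on the path
(that is, in a cluster of `P`), and `S_k` the remaining ones. Arrange the `n` vertices on a cycle
in the order `S_0, R_0, S_1, R_1, …`. Two facts make this order useful.

* Cutting the cycle at two on-path vertices `u` and `v` destroys only edges that meet one of the two
  clusters at `top u` and `top v` (`Layout.edge_cyclic`).
* Since `P` is nonredundant, no `R_k` is empty, so the vertices strictly between two cyclically
  consecutive on-path vertices, if there are any, form one of the sets `S_k` (`Layout.gap`), and the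
  edges leaving `S_k` meet the cluster of the `k`-th path node.

If two on-path vertices are exactly `m` apart, the interval between them is the set `B` of a cut of
the first kind (`Layout.exists_interval_cut`). Otherwise the set `R` of on-path positions and its
translate by `-m` are disjoint, `n`-periodic, and have `w = w(P, X)` points per period. Consecutive
points of different kinds have a potential, and at a pair where it is minimal there starts a run
`[a, b]` of one kind, inside a gap of the other kind, such that the number of points in the run is
at least `w / n` times the length of the run plus the length of the gap (`exists_denseRun`).

Let `Z` consist of the vertices at the positions in the run. The run is not longer than the gap, so
a proportion of at least `2 w / n` of `Z` is on the path, and `|Z| ≤ n / 2`. If `R` supplies the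
run, then the set `B` contains everything from the end of the run up to the gap shifted by `m`, and
it has to be completed by vertices of this gap, up to an error of `|Z|`. The gap is a set `S_k`
behind one cluster. A tree decomposition allows one to cut off a piece of a prescribed set of
vertices with a prescribed size up to a factor of two, paying one cluster (`Rooted.exists_half_set`),
so `j` repetitions reduce the error by the factor `2 ^ j` (`Rooted.exists_approx_set`). The gap
having length at most `(n / w) |Z|`, some `j ≤ log₂ (2 n / w)` suffices. Together with the clusters
at the two ends of the run and at the gap, at most `3 + j ≤ log₂ (16 n / w)` clusters meet all
destroyed edges (`Layout.exists_gap_cut`). If the translate of `R` supplies the run, exchange the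
roles of `B` and `W`, that is, replace `m` by `n - m` (`PathData.exists_cut`).

Finally, intersecting all clusters with `Z` and bypassing the path nodes that became redundant
gives a tree decomposition of `G[Z]` with a nonredundant path whose clusters contain all on-path
vertices of `Z` (`PathData.exists_restrict`).
-/

open scoped Classical

namespace MinBisection

noncomputable section

variable {V ι : Type*}

/-- The number of edges of `G` with one endpoint in `B` and the other outside of `B`,
i.e., the width `e_G(B, W)` of the cut `(B, W)` where `W` is the complement of `B`. -/
def cutWidth (G : SimpleGraph V) (B : Finset V) : ℕ :=
  Nat.card {e : Sym2 V // ∃ x y, G.Adj x y ∧ x ∈ B ∧ y ∉ B ∧ e = s(x, y)}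

/-- The number of edges of `G` whose endpoints lie in two different parts of the
partition `(B, W, Z)` of the vertex set. -/
def cutWidth3 (G : SimpleGraph V) (B W Z : Finset V) : ℕ :=
  Nat.card {e : Sym2 V // ∃ x y, G.Adj x y ∧ e = s(x, y) ∧
    ¬ ((x ∈ B ∧ y ∈ B) ∨ (x ∈ W ∧ y ∈ W) ∨ (x ∈ Z ∧ y ∈ Z))}

/-- `(B, Bᶜ)` is a bisection: the sizes of the two parts differ by at most one. -/
def IsBisection [Fintype V] (B : Finset V) : Prop :=
  B.card ≤ Bᶜ.card + 1 ∧ Bᶜ.card ≤ B.card + 1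

/-- The minimum bisection width `MinBis(G)`. -/
def minBis (G : SimpleGraph V) [Fintype V] : ℕ :=
  sInf {k | ∃ B : Finset V, IsBisection B ∧ cutWidth G B = k}

/-- The maximum degree `Δ(G)`. -/
def maxDeg (G : SimpleGraph V) [Fintype V] : ℕ :=
  Finset.univ.sup fun v => Nat.card {u // G.Adj v u}

/-- The number of vertices on a longest path in `G`. -/
def longestPathCard (G : SimpleGraph V) : ℕ :=
  sSup {k | ∃ (u v : V) (p : G.Walk u v), p.IsPath ∧ k = p.support.length}

/-- The relative diameter `diam*` of a connected graph: the number of vertices on a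
longest path divided by the number of vertices. -/
def diamStar (G : SimpleGraph V) [Fintype V] : ℝ :=
  (longestPathCard G : ℝ) / (Fintype.card V : ℝ)

/-- The number of vertices on a longest path contained in the connected component `c`. -/
def compLongestPathCard (G : SimpleGraph V) (c : G.ConnectedComponent) : ℕ :=
  sSup {k | ∃ (u v : V) (p : G.Walk u v), p.IsPath ∧ G.connectedComponentMk u = c ∧
    k = p.support.length}

/-- The relative diameter `diam*` of a forest: the sum over all connected components of the
number of vertices on a longest path in the component, divided by the number of vertices. -/
def forestDiamStar (G : SimpleGraph V) [Fintype V] : ℝ :=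
  letI : Fintype G.ConnectedComponent := Fintype.ofFinite _
  (∑ c : G.ConnectedComponent, (compLongestPathCard G c : ℝ)) / (Fintype.card V : ℝ)

/-- `(T, X)` is a tree decomposition of `G`. -/
structure IsTreeDecomp (G : SimpleGraph V) (T : SimpleGraph ι) (X : ι → Finset V) : Prop where
  isTree : T.IsTree
  mem_cluster : ∀ v : V, ∃ i, v ∈ X i
  edge_cluster : ∀ ⦃u v : V⦄, G.Adj u v → ∃ i, u ∈ X i ∧ v ∈ X i
  inter_subset : ∀ ⦃i j : ι⦄ (p : T.Walk i j), p.IsPath → ∀ h ∈ p.support, X i ∩ X j ⊆ X h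

/-- The weight `w(P, X)` of a path `p` of the tree `T` with respect to the clusters `X`:
the cardinality of the union of the clusters along the path. -/
def walkWeight (X : ι → Finset V) {T : SimpleGraph ι} {i j : ι} (p : T.Walk i j) : ℕ :=
  (p.support.toFinset.biUnion X).card

/-- The relative weight `r(T, X)` of a heaviest path in the tree decomposition `(T, X)`. -/
def rTD [Fintype V] (T : SimpleGraph ι) (X : ι → Finset V) : ℝ :=
  (↑(sSup {w : ℕ | ∃ (i j : ι) (p : T.Walk i j), p.IsPath ∧ w = walkWeight X p}) : ℝ) /
    (Fintype.card V : ℝ)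

/-- The path `p` is nonredundant: one of its two ends `i` is a nonredundant end, i.e.,
`X i ≠ ∅` and no cluster along the path contains the previous one when traversed from `i`. -/
def NonredundantPath (X : ι → Finset V) {T : SimpleGraph ι} {i j : ι} (p : T.Walk i j) : Prop :=
  (X i ≠ ∅ ∧ List.Chain' (fun a b => ¬ X b ⊆ X a) p.support) ∨
  (X j ≠ ∅ ∧ List.Chain' (fun a b => ¬ X b ⊆ X a) p.reverse.support)

/-- `R_i`: the set of vertices whose path node (first node along `p`, traversed from the
end `i₀`, whose cluster contains the vertex) is `i`. -/
def Rset (X : ι → Finset V) {T : SimpleGraph ι} {i₀ j₀ : ι} (p : T.Walk i₀ j₀) (i : ι) :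
    Set V :=
  {x | ∃ (k : ℕ) (hk : k < p.support.length), p.support.get ⟨k, hk⟩ = i ∧ x ∈ X i ∧
    ∀ (l : ℕ) (hl : l < k), x ∉ X (p.support.get ⟨l, hl.trans hk⟩)}

/-- `S_i`: the union of the clusters over the component `T_i` of `T - E(P)` containing `i`,
minus `R = ⋃_{h ∈ V(P)} X^h`. -/
def Sset (X : ι → Finset V) {T : SimpleGraph ι} {i₀ j₀ : ι} (p : T.Walk i₀ j₀) (i : ι) :
    Set V :=
  {x | (∃ j, (∃ q : T.Walk i j, ∀ e ∈ q.edges, e ∉ p.edges) ∧ x ∈ X j) ∧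
    ∀ h ∈ p.support, x ∉ X h}

end

end MinBisection

/-! ### Rooted tree decompositions -/

namespace MinBisection

/-- A tree decomposition written with a parent map `π` on the nodes: `r` is the root, `d` a depth
function, and `top v` is the node closest to the root whose cluster contains `v`. -/
structure Rooted {V ι : Type*} (G : SimpleGraph V) (X : ι → Finset V) (π : ι → ι) (d : ι → ℕ)
    (r : ι) (top : V → ι) : Prop where
  par_root : π r = r
  par_lt : ∀ i, i ≠ r → d (π i) < d i
  mem_top : ∀ v, v ∈ X (top v)
  mem_par : ∀ v i, v ∈ X i → i ≠ top v → i ≠ r ∧ v ∈ X (π i)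
  edge : ∀ u v, G.Adj u v → ∃ i, u ∈ X i ∧ v ∈ X i

/-- `i` is an ancestor of `j` (possibly `j` itself) with respect to the parent map `π`. -/
def Anc {ι : Type*} (π : ι → ι) (i j : ι) : Prop := ∃ k, π^[k] j = i

section anc
variable {V ι : Type*} {G : SimpleGraph V} {X : ι → Finset V} {π : ι → ι} {d : ι → ℕ}
  {r : ι} {top : V → ι}

lemma Anc.refl (i : ι) : Anc π i i := ⟨0, rfl⟩

lemma Anc.par (i : ι) : Anc π (π i) i := ⟨1, rfl⟩

lemma Anc.trans {i j k : ι} (h : Anc π i j) (h' : Anc π j k) : Anc π i k := by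
  obtain ⟨a, rfl⟩ := h
  obtain ⟨b, rfl⟩ := h'
  exact ⟨a + b, by rw [Function.iterate_add_apply]⟩

lemma Anc.eq_or_par {i j : ι} (h : Anc π i j) : i = j ∨ Anc π i (π j) := by
  obtain ⟨k, rfl⟩ := h
  cases k with
  | zero => exact Or.inl rfl
  | succ k => exact Or.inr ⟨k, rfl⟩

/-- The ancestors of a node form a chain. -/
lemma Anc.comparable {i j k : ι} (h : Anc π i k) (h' : Anc π j k) : Anc π i j ∨ Anc π j i := by
  obtain ⟨a, rfl⟩ := h
  obtain ⟨b, rfl⟩ := h'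
  rcases le_total a b with hab | hab
  · right
    exact ⟨b - a, by rw [← Function.iterate_add_apply]; congr 2; omega⟩
  · left
    exact ⟨a - b, by rw [← Function.iterate_add_apply]; congr 2; omega⟩

namespace Rooted
variable (H : Rooted G X π d r top)
include H

lemma anc_eq_or_lt {i j : ι} (h : Anc π i j) : i = j ∨ d i < d j := by
  obtain ⟨k, rfl⟩ := h
  induction k generalizing j with
  | zero => exact Or.inl rfl
  | succ k ih =>
    rw [Function.iterate_succ_apply]
    by_cases hj : j = r
    · subst hj
      have := @ih (π j)
      rw [H.par_root] at this ⊢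
      exact this
    · have h1 := H.par_lt j hj
      rcases @ih (π j) with h | h
      · rw [h]; exact Or.inr h1
      · exact Or.inr (h.trans h1)

lemma anc_antisymm {i j : ι} (h : Anc π i j) (h' : Anc π j i) : i = j := by
  rcases H.anc_eq_or_lt h with h1 | h1
  · exact h1
  · rcases H.anc_eq_or_lt h' with h2 | h2
    · exact h2.symm
    · omega

/-- The cluster of `v` nearest to the root lies above every cluster containing `v`. -/
lemma anc_top {v : V} {i : ι} (h : v ∈ X i) : Anc π (top v) i := by
  induction hd : d i using Nat.strong_induction_on generalizing i with
  | _ n ih =>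
    by_cases hi : i = top v
    · exact hi ▸ Anc.refl _
    · obtain ⟨h1, h2⟩ := H.mem_par v i h hi
      exact (ih _ (hd ▸ H.par_lt i h1) h2 rfl).trans (Anc.par i)

/-- The nodes whose cluster contains `v` are closed under walking up towards `top v`. -/
lemma mem_between {v : V} {i h : ι} (hi : v ∈ X i) (hh : Anc π h i) (ht : Anc π (top v) h) :
    v ∈ X h := by
  obtain ⟨k, hk⟩ := hh
  induction k generalizing i with
  | zero => rw [← hk]; exact hi
  | succ k ih =>
    by_cases hi' : i = top v
    · have : h = top v := H.anc_antisymm (hi' ▸ ⟨k + 1, hk⟩) ht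
      rw [this]; exact H.mem_top v
    · exact ih (H.mem_par v i hi hi').2 hk

lemma edge_top {u v : V} (h : G.Adj u v) :
    (Anc π (top u) (top v) ∧ u ∈ X (top v)) ∨ (Anc π (top v) (top u) ∧ v ∈ X (top u)) := by
  obtain ⟨i, hu, hv⟩ := H.edge u v h
  have h1 := H.anc_top hu
  have h2 := H.anc_top hv
  rcases h1.comparable h2 with h3 | h3
  · exact Or.inl ⟨h3, H.mem_between hu h2 h3⟩
  · exact Or.inr ⟨h3, H.mem_between hv h1 h3⟩

lemma anc_root (i : ι) : Anc π r i := by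
  induction hd : d i using Nat.strong_induction_on generalizing i with
  | _ n ih =>
    by_cases hi : i = r
    · exact hi ▸ Anc.refl _
    · exact (ih _ (hd ▸ H.par_lt i hi) _ rfl).trans (Anc.par i)

/-- An edge leaving the part of the graph below a non-root node `c` meets the parent cluster. -/
lemma edge_below {c : ι} {u v : V} (h : G.Adj u v) (hu : Anc π c (top u))
    (hv : ¬ Anc π c (top v)) : v ∈ X (π c) := by
  rcases H.edge_top h with ⟨h1, -⟩ | ⟨h1, h2⟩
  · exact absurd (hu.trans h1) hv
  · rcases hu.comparable h1 with h3 | h3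
    · exact absurd h3 hv
    · rcases h3.eq_or_par with h4 | h4
      · exact absurd (h4 ▸ Anc.refl _) hv
      · exact H.mem_between h2 ((Anc.par c).trans hu) h4

end Rooted
end anc

/-- A tree decomposition can be rooted at any node `r`; the parent of a node is its neighbour in
the direction of `r`. -/
lemma IsTreeDecomp.exists_rooted {V ι : Type*} [Fintype ι] {G : SimpleGraph V}
    {T : SimpleGraph ι} {X : ι → Finset V} (hTD : IsTreeDecomp G T X) (r : ι) :
    ∃ (π : ι → ι) (top : V → ι), Rooted G X π (T.dist r) r top ∧
      ∀ i, i ≠ r → T.Adj (π i) i := by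
  have hconn := hTD.isTree.connected
  have hpar : ∀ i, ∃ j, (i = r → j = r) ∧ (i ≠ r → T.Adj j i ∧ T.dist r j < T.dist r i) := by
    intro i
    by_cases hi : i = r
    · exact ⟨r, by simp, fun h => absurd hi h⟩
    · obtain ⟨p, hp⟩ := hconn.exists_walk_length_eq_dist i r
      cases p with
      | nil => exact absurd rfl hi
      | @cons _ j _ hadj q =>
        refine ⟨j, fun h => absurd h hi, fun _ => ⟨hadj.symm, ?_⟩⟩
        have := SimpleGraph.dist_le q
        rw [SimpleGraph.dist_comm, T.dist_comm (u := r) (v := i), ← hp]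
        simp only [SimpleGraph.Walk.length_cons]
        omega
  choose π hπ1 hπ2 using hpar
  have htop : ∀ v : V, ∃ i, v ∈ X i ∧ ∀ j, v ∈ X j → T.dist r i ≤ T.dist r j := by
    intro v
    obtain ⟨i, hi⟩ := hTD.mem_cluster v
    obtain ⟨k, hk, hk'⟩ := Finset.exists_min_image (Finset.univ.filter fun i => v ∈ X i)
      (fun i => T.dist r i) ⟨i, by simpa using hi⟩
    exact ⟨k, by simpa using hk, fun j hj => hk' j (by simpa using hj)⟩
  choose top htop1 htop2 using htop
  have hup : ∀ i, ∃ w : T.Walk i r, ∀ x ∈ w.support, x = i ∨ T.dist r x < T.dist r i := by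
    intro i
    induction hd : T.dist r i using Nat.strong_induction_on generalizing i with
    | _ n ih =>
      by_cases hi : i = r
      · subst hi
        exact ⟨SimpleGraph.Walk.nil, by simp⟩
      · obtain ⟨h1, h2⟩ := hπ2 i hi
        obtain ⟨w, hw⟩ := ih _ (hd ▸ h2) (π i) rfl
        refine ⟨SimpleGraph.Walk.cons h1.symm w, fun x hx => ?_⟩
        rw [SimpleGraph.Walk.support_cons, List.mem_cons] at hx
        rcases hx with rfl | hx
        · exact Or.inl rfl
        · right
          rcases hw x hx with rfl | h
          · omega
          · omega
  refine ⟨π, top, ⟨hπ1 r rfl, fun i hi => (hπ2 i hi).2, htop1, ?_,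
    fun u v h => hTD.edge_cluster h⟩, fun i hi => (hπ2 i hi).1⟩
  intro v i hv hi
  have hle := htop2 v i hv
  have hir : i ≠ r := by
    rintro rfl
    rw [SimpleGraph.dist_self] at hle
    exact hi ((hconn.dist_eq_zero_iff).1 (Nat.le_zero.1 hle))
  refine ⟨hir, ?_⟩
  obtain ⟨hadj, hlt⟩ := hπ2 i hir
  -- The walk from `π i` up to the root and down to `top v` avoids `i`, so the path from `i` to
  -- `top v` starts with `π i`.
  obtain ⟨w1, hw1⟩ := hup (π i)
  obtain ⟨w2, hw2⟩ := hup (top v)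
  have havoid : i ∉ (w1.append w2.reverse).support := by
    rw [SimpleGraph.Walk.mem_support_append_iff, SimpleGraph.Walk.support_reverse,
      List.mem_reverse]
    rintro (h | h)
    · rcases hw1 i h with h | h
      · rw [← h] at hlt; exact lt_irrefl _ hlt
      · omega
    · rcases hw2 i h with h | h
      · exact hi h
      · omega
  have hpath : (SimpleGraph.Walk.cons hadj.symm (w1.append w2.reverse).bypass).IsPath := by
    rw [SimpleGraph.Walk.cons_isPath_iff]
    exact ⟨SimpleGraph.Walk.bypass_isPath _,
      fun h => havoid (SimpleGraph.Walk.support_bypass_subset_support _ h)⟩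
  exact hTD.inter_subset _ hpath (π i) (by simp) (Finset.mem_inter.2 ⟨hv, htop1 v⟩)

end MinBisection

/-! ### Cutting off a set of approximately prescribed size -/

namespace MinBisection

/-- One cluster suffices to cut off a piece of `U` whose size lies between `q / 2` and `q`: take
the cluster of a deepest node below which at least `q` vertices of `U` live, and collect as many
of the pieces below that node as possible. -/
lemma Rooted.exists_half_set {V ι : Type*} [Fintype ι] {G : SimpleGraph V} {X : ι → Finset V}
    {π : ι → ι} {d : ι → ℕ} {r : ι} {top : V → ι} (H : Rooted G X π d r top)
    (U : Finset V) (q : ℕ) (hq : q ≤ U.card) :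
    ∃ B ⊆ U, B.card ≤ q ∧ q ≤ 2 * B.card ∧
      ∃ i, ∀ u ∈ B, ∀ v ∈ U \ B, G.Adj u v → u ∈ X i ∨ v ∈ X i := by
  rcases Nat.eq_zero_or_pos q with rfl | hq0
  · exact ⟨∅, by simp, by simp, by simp, r, by simp⟩
  let D : ι → Finset V := fun i => U.filter fun v => Anc π i (top v)
  obtain ⟨i, hi, hmax⟩ := Finset.exists_max_image
    (Finset.univ.filter fun i => q ≤ (D i).card) d
    ⟨r, by
      have : D r = U := Finset.filter_true_of_mem fun v _ => H.anc_root _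
      simp [this, hq]⟩
  simp only [Finset.mem_filter, Finset.mem_univ, true_and] at hi hmax
  -- `good B` says that `B` contains each piece hanging below `i` completely or not at all.
  let good : Finset V → Prop := fun B =>
    ∀ c, π c = i → c ≠ i → D c ⊆ B ∨ Disjoint (D c) B
  obtain ⟨B, hB, hBmax⟩ := Finset.exists_max_image
    ((D i).powerset.filter fun B => good B ∧ B.card ≤ q) Finset.card
    ⟨∅, by simp [good]⟩
  simp only [Finset.mem_filter, Finset.mem_powerset] at hB hBmax
  obtain ⟨hBD, hgood, hBq⟩ := hB
  have hchild : ∀ c, π c = i → c ≠ i → c ≠ r := by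
    rintro c hc hci rfl
    exact hci (H.par_root ▸ hc)
  have hDsub : ∀ c, π c = i → D c ⊆ D i := by
    intro c hc v hv
    simp only [D, Finset.mem_filter] at hv ⊢
    exact ⟨hv.1, (hc ▸ Anc.par c : Anc π i c).trans hv.2⟩
  have hdisj : ∀ c c', π c = i → π c' = i → c ≠ i → c' ≠ i → c ≠ c' → Disjoint (D c) (D c') := by
    intro c c' hc hc' hci hci' hne
    rw [Finset.disjoint_left]
    intro v hv hv'
    simp only [D, Finset.mem_filter] at hv hv'
    have key : ∀ a b, π a = i → π b = i → a ≠ i → a ≠ b → ¬ Anc π a b := by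
      intro a b ha hb hai hab h
      rcases h.eq_or_par with h | h
      · exact hab h
      · exact hai (H.anc_antisymm (hb ▸ h) (ha ▸ Anc.par a))
    rcases hv.2.comparable hv'.2 with h | h
    · exact key _ _ hc hc' hci hne h
    · exact key _ _ hc' hc hci' hne.symm h
  refine ⟨B, hBD.trans (Finset.filter_subset _ _), hBq, ?_, i, ?_⟩
  · by_contra hlt
    push Not at hlt
    obtain ⟨v, hvD, hvB⟩ : ∃ v ∈ D i, v ∉ B := by
      by_contra hcon
      push Not at hcon
      have := Finset.card_le_card (show D i ⊆ B from hcon)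
      omega
    -- The piece containing `v`.
    obtain ⟨Q, hvQ, hQD, hQgood, hQq, hQB⟩ : ∃ Q, v ∈ Q ∧ Q ⊆ D i ∧ good Q ∧ Q.card ≤ q ∧
        good (B ∪ Q) := by
      have hvD' := hvD
      simp only [D, Finset.mem_filter] at hvD'
      obtain ⟨hvU, hanc⟩ := hvD'
      have hgoodQ : ∀ Q, good Q → good (B ∪ Q) := by
        intro Q hQ c hc hci
        rcases hgood c hc hci with h | h
        · exact Or.inl (h.trans Finset.subset_union_left)
        · rcases hQ c hc hci with h' | h'
          · exact Or.inl (h'.trans Finset.subset_union_right)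
          · exact Or.inr (Finset.disjoint_union_right.2 ⟨h, h'⟩)
      by_cases hex : ∃ c, π c = i ∧ c ≠ i ∧ Anc π c (top v)
      · obtain ⟨c, hc, hci, hcv⟩ := hex
        have hg : good (D c) := by
          intro c' hc' hci'
          by_cases hcc : c' = c
          · exact Or.inl (hcc ▸ subset_rfl)
          · exact Or.inr (hdisj _ _ hc' hc hci' hci hcc)
        refine ⟨D c, by simp [D, hvU, hcv], hDsub c hc, hg, ?_, hgoodQ _ hg⟩
        by_contra hcq
        push Not at hcq
        have h1 := hmax c hcq.le
        have h2 := H.par_lt c (hchild c hc hci)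
        rw [hc] at h2
        omega
      · have hg : good {v} := by
          intro c hc hci
          right
          rw [Finset.disjoint_singleton_right]
          intro h
          simp only [D, Finset.mem_filter] at h
          exact hex ⟨c, hc, hci, h.2⟩
        exact ⟨{v}, by simp, by simpa using hvD, hg, by rw [Finset.card_singleton]; exact hq0, hgoodQ _ hg⟩
    have h1 := hBmax Q ⟨hQD, hQgood, hQq⟩
    have h2 := Finset.card_union_le B Q
    have h3 := hBmax (B ∪ Q) ⟨Finset.union_subset hBD hQD, hQB, by omega⟩
    have h4 : B ⊂ B ∪ Q :=
      Finset.ssubset_iff_subset_ne.2 ⟨Finset.subset_union_left, fun h =>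
        hvB (h ▸ Finset.mem_union_right _ hvQ)⟩
    have := Finset.card_lt_card h4
    omega
  · intro u hu v hv hadj
    have huD := hBD hu
    simp only [D, Finset.mem_filter] at huD
    obtain ⟨huU, hui⟩ := huD
    by_cases hui' : top u = i
    · left; rw [← hui']; exact H.mem_top u
    · -- the child of `i` above `top u`
      obtain ⟨c, hc, hci, hcu⟩ : ∃ c, π c = i ∧ c ≠ i ∧ Anc π c (top u) := by
        obtain ⟨k, hk⟩ := hui
        obtain ⟨k, hk, hmin⟩ : ∃ k, π^[k] (top u) = i ∧ ∀ l < k, π^[l] (top u) ≠ i :=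
          by
          have hex : ∃ k, π^[k] (top u) = i := ⟨k, hk⟩
          exact ⟨_, Nat.find_spec hex, fun l hl => Nat.find_min hex hl⟩
        cases k with
        | zero => exact absurd hk hui'
        | succ k =>
          exact ⟨π^[k] (top u), by rw [Function.iterate_succ_apply'] at hk; exact hk, hmin k (by omega),
            k, rfl⟩
      right
      rw [← hc]
      rw [Finset.mem_sdiff] at hv
      refine H.edge_below hadj hcu fun hcv => hv.2 ?_
      have huDc : u ∈ D c := by simp [D, huU, hcu]
      rcases hgood c hc hci with h | h
      · exact h (by simp [D, hv.1, hcv])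
      · exact absurd hu (Finset.disjoint_left.1 h huDc)

/-- Iterating the previous lemma `k` times misses the target size `β` by at most `β / 2 ^ k`, at
the cost of `k` clusters. -/
lemma Rooted.exists_approx_set {V ι : Type*} [Fintype ι] {G : SimpleGraph V} {X : ι → Finset V}
    {π : ι → ι} {d : ι → ℕ} {r : ι} {top : V → ι} (H : Rooted G X π d r top) {t : ℕ}
    (hwidth : ∀ i, (X i).card ≤ t) (U : Finset V) (β : ℕ) (hβ : β ≤ U.card) (k : ℕ) :
    ∃ B ⊆ U, B.card ≤ β ∧ (β - B.card) * 2 ^ k ≤ β ∧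
      ∃ C : Finset V, C.card ≤ k * t ∧
        ∀ u ∈ B, ∀ v ∈ U \ B, G.Adj u v → u ∈ C ∨ v ∈ C := by
  induction k with
  | zero => exact ⟨∅, by simp, by simp, by simp, ∅, by simp, by simp⟩
  | succ k ih =>
    obtain ⟨B, hBU, hB, hk, C, hC, hcov⟩ := ih
    have hcard := Finset.card_sdiff_add_card_eq_card hBU
    obtain ⟨B', hB'U, hB', hhalf, i, hi⟩ := H.exists_half_set (U \ B) (β - B.card) (by omega)
    have hdisj : Disjoint B B' :=
      Finset.disjoint_left.2 fun x hx hx' => (Finset.mem_sdiff.1 (hB'U hx')).2 hx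
    have hun := Finset.card_union_of_disjoint hdisj
    refine ⟨B ∪ B', Finset.union_subset hBU (hB'U.trans Finset.sdiff_subset), by omega, ?_,
      C ∪ X i, ?_, ?_⟩
    · rw [hun, pow_succ]
      have : (β - (B.card + B'.card)) * 2 ≤ β - B.card := by omega
      calc (β - (B.card + B'.card)) * (2 ^ k * 2)
          = ((β - (B.card + B'.card)) * 2) * 2 ^ k := by ring
        _ ≤ (β - B.card) * 2 ^ k := Nat.mul_le_mul_right _ this
        _ ≤ β := hk
    · have := Finset.card_union_le C (X i)
      have := hwidth i
      rw [Nat.succ_mul]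
      omega
    · intro u hu v hv hadj
      simp only [Finset.mem_union, Finset.mem_sdiff, not_or] at hu hv ⊢
      rcases hu with hu | hu
      · rcases hcov u hu v (by simp [hv.1, hv.2.1]) hadj with h | h <;> simp [h]
      · rcases hi u hu v (by simp [hv.1, hv.2.1, hv.2.2]) hadj with h | h <;> simp [h]

end MinBisection

/-! ### Dense runs of disjoint periodic sets -/

namespace MinBisection

/-- A dense run of `A`-points between two consecutive `B`-points `g < g'`: it stretches from `a` to
`b`, and its number of points is at least the proportion `w / n` of the length of the run plus the
number of integers strictly between `g` and `g'`. -/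
def DenseRun (A B : ℕ → Prop) (n w : ℕ) : Prop :=
  ∃ g a b g', g < a ∧ a ≤ b ∧ b < g' ∧ A a ∧ A b ∧ B g ∧ B g' ∧
    (∀ x, g < x → x < g' → ¬ B x) ∧
    w * (g' - g + (b - a)) ≤ n * ((Finset.Icc a b).filter A).card

lemma count_eq_add (A : ℕ → Prop) {a c : ℕ} (h : a ≤ c) :
    Nat.count A c = Nat.count A a + ((Finset.Ico a c).filter A).card := by
  rw [Nat.count_eq_card_filter_range, Nat.count_eq_card_filter_range,
    ← Finset.card_union_of_disjoint, ← Finset.filter_union]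
  · congr 2
    ext x
    simp only [Finset.mem_range, Finset.mem_union, Finset.mem_Ico]
    omega
  · rw [Finset.disjoint_left]
    intro x
    simp only [Finset.mem_filter, Finset.mem_range, Finset.mem_Ico]
    omega

lemma periodic_add_mul {A : ℕ → Prop} {n : ℕ} (hA : ∀ x, A (x + n) ↔ A x) (x k : ℕ) :
    A (x + n * k) ↔ A x := by
  induction k with
  | zero => simp
  | succ k ih => rw [Nat.mul_succ, ← add_assoc, hA, ih]

lemma count_mul_periodic {A : ℕ → Prop} {n : ℕ} (hA : ∀ x, A (x + n) ↔ A x) (k : ℕ) :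
    Nat.count A (n * k) = k * Nat.count A n := by
  induction k with
  | zero => simp
  | succ k ih =>
    rw [Nat.mul_succ, Nat.count_add, ih, Nat.succ_mul]
    congr 1
    rw [Nat.count_eq_card_filter_range, Nat.count_eq_card_filter_range]
    congr 1
    refine Finset.filter_congr fun x _ => ?_
    rw [add_comm (n * k) x, periodic_add_mul hA]

lemma count_periodic_ge {A : ℕ → Prop} {n : ℕ} (hn : 0 < n) (hA : ∀ x, A (x + n) ↔ A x) (a : ℕ) :
    Nat.count A n * a ≤ n * Nat.count A a + n * Nat.count A n := by
  have h1 : Nat.count A (n * (a / n)) ≤ Nat.count A a :=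
    Nat.count_monotone _ (Nat.mul_div_le a n)
  rw [count_mul_periodic hA] at h1
  have h2 : a ≤ n * (a / n) + n := by
    have := Nat.div_add_mod a n
    have := Nat.mod_lt a hn
    omega
  calc Nat.count A n * a ≤ Nat.count A n * (n * (a / n) + n) := Nat.mul_le_mul_left _ h2
    _ = n * (a / n * Nat.count A n) + n * Nat.count A n := by ring
    _ ≤ _ := by gcongr

lemma periodic_exists_gt {A : ℕ → Prop} {n : ℕ} (hn : 0 < n) (hA : ∀ x, A (x + n) ↔ A x)
    (hw : 0 < Nat.count A n) (N : ℕ) : ∃ x, N < x ∧ A x := by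
  obtain ⟨x, hx⟩ : ∃ x, A x := by
    by_contra h
    push Not at h
    rw [Nat.count_eq_card_filter_range, Finset.card_pos] at hw
    obtain ⟨x, hx⟩ := hw
    exact h x (Finset.mem_filter.1 hx).2
  refine ⟨x + n * (N + 1), ?_, (periodic_add_mul hA _ _).2 hx⟩
  have : N + 1 ≤ n * (N + 1) := Nat.le_mul_of_pos_left _ hn
  omega

lemma exists_first_gt {A : ℕ → Prop} {N : ℕ} (h : ∃ x, N < x ∧ A x) :
    ∃ x, N < x ∧ A x ∧ ∀ y, N < y → y < x → ¬ A y :=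
  ⟨Nat.find h, (Nat.find_spec h).1, (Nat.find_spec h).2,
    fun _ hy hyx hAy => Nat.find_min h hyx ⟨hy, hAy⟩⟩

lemma exists_last_lt {A : ℕ → Prop} {N x : ℕ} (hx : A x) (hxN : x < N) :
    ∃ y, x ≤ y ∧ y < N ∧ A y ∧ ∀ z, y < z → z < N → ¬ A z := by
  refine ⟨Nat.findGreatest A (N - 1), Nat.le_findGreatest (by omega) hx, ?_,
    Nat.findGreatest_spec (m := x) (by omega) hx, fun z hz hzN => ?_⟩
  · have := Nat.findGreatest_le (P := A) (N - 1)
    omega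
  · exact Nat.findGreatest_is_greatest hz (by omega)

/-- From a `B`-point `g` followed by an `A`-point `a` one moves to the last point `b` of the run of
`A`-points starting at `a` and the `B`-point `g'` following it. -/
lemma denseRun_step {A B : ℕ → Prop} {n w : ℕ} (hAB : ∀ x, ¬ (A x ∧ B x))
    (hBinf : ∀ N, ∃ x, N < x ∧ B x) {g a : ℕ} (hga : g < a) (hg : B g) (ha : A a)
    (hbet : ∀ x, g < x → x < a → ¬ A x ∧ ¬ B x)
    (hmin : ∀ b g', b < g' → A b → B g' → (∀ x, b < x → x < g' → ¬ B x ∧ ¬ A x) →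
      (n * (Nat.count A a + Nat.count B a) - w * (g + a) : ℤ) ≤
        n * (Nat.count A g' + Nat.count B g') - w * (b + g')) :
    DenseRun A B n w := by
  obtain ⟨g', hag', hg', hfirst⟩ := exists_first_gt (hBinf a)
  obtain ⟨b, hab, hbg', hb, hlast⟩ := exists_last_lt ha hag'
  refine ⟨g, a, b, g', hga, hab, hbg', ha, hb, hg, hg', ?_, ?_⟩
  · intro x h1 h2 hx
    rcases lt_trichotomy x a with h | h | h
    · exact (hbet x h1 h).2 hx
    · exact hAB x ⟨h ▸ ha, hx⟩
    · exact hfirst x h h2 hx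
  · have h := hmin b g' hbg' hb hg' fun x h1 h2 =>
      ⟨hfirst x (by omega) h2, hlast x h1 h2⟩
    rw [count_eq_add A hag'.le, count_eq_add B hag'.le] at h
    have h1 : (Finset.Ico a g').filter B = ∅ := by
      rw [Finset.filter_eq_empty_iff]
      intro x hx hBx
      rw [Finset.mem_Ico] at hx
      rcases hx.1.eq_or_lt with h' | h'
      · exact hAB x ⟨h' ▸ ha, hBx⟩
      · exact hfirst x h' hx.2 hBx
    have h2 : (Finset.Ico a g').filter A = (Finset.Icc a b).filter A := by
      ext x
      simp only [Finset.mem_filter, Finset.mem_Ico, Finset.mem_Icc]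
      constructor
      · rintro ⟨⟨h3, h4⟩, h5⟩
        refine ⟨⟨h3, ?_⟩, h5⟩
        by_contra h6
        exact hlast x (by omega) h4 h5
      · rintro ⟨⟨h3, h4⟩, h5⟩
        exact ⟨⟨h3, by omega⟩, h5⟩
    rw [h1, h2, Finset.card_empty] at h
    zify [hab, (by omega : g ≤ g')]
    push_cast at h
    linarith

/-- Two disjoint `n`-periodic sets with `w` points per period admit a dense run of one of them.
The potential `n * #points below a - w * (g + a)` of consecutive points `g < a` of different
colours is bounded below; at its minimum the run starting at `a` is dense. -/
lemma exists_denseRun {A B : ℕ → Prop} {n w : ℕ} (hn : 0 < n) (hA : ∀ x, A (x + n) ↔ A x)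
    (hB : ∀ x, B (x + n) ↔ B x) (hAB : ∀ x, ¬ (A x ∧ B x)) (hcA : Nat.count A n = w)
    (hcB : Nat.count B n = w) (hw : 0 < w) : DenseRun A B n w ∨ DenseRun B A n w := by
  let S : Set (ℕ × ℕ) := {c | c.1 < c.2 ∧ (∀ x, c.1 < x → x < c.2 → ¬ A x ∧ ¬ B x) ∧
    ((B c.1 ∧ A c.2) ∨ (A c.1 ∧ B c.2))}
  let Ψ : ℕ × ℕ → ℤ := fun c =>
    n * (Nat.count A c.2 + Nat.count B c.2) - w * (c.1 + c.2)
  have hAinf := periodic_exists_gt hn hA (hcA ▸ hw)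
  have hBinf := periodic_exists_gt hn hB (hcB ▸ hw)
  have hS : S.Nonempty := by
    obtain ⟨y, -, hy⟩ := hBinf 0
    obtain ⟨a, hya, ha, hfirst⟩ := exists_first_gt (hAinf y)
    obtain ⟨g, hyg, hga, hg, hlast⟩ := exists_last_lt hy hya
    exact ⟨(g, a), hga, fun x h1 h2 => ⟨hfirst x (lt_of_le_of_lt hyg h1) h2, hlast x h1 h2⟩,
      Or.inl ⟨hg, ha⟩⟩
  have hbound : ∀ c ∈ S, 0 ≤ Ψ c + 2 * w * n := by
    rintro ⟨g, a⟩ ⟨hga, -, -⟩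
    have h1 := count_periodic_ge hn hA a
    have h2 := count_periodic_ge hn hB a
    rw [hcA] at h1
    rw [hcB] at h2
    have h3 : w * g ≤ w * a := Nat.mul_le_mul_left _ hga.le
    zify at h1 h2 h3
    simp only [Ψ]
    linarith
  obtain ⟨⟨g, a⟩, hc, hmin⟩ := WellFounded.has_min
    (measure fun c : ℕ × ℕ => (Ψ c + 2 * w * n).toNat).wf S hS
  have hmin' : ∀ c ∈ S, Ψ (g, a) ≤ Ψ c := by
    intro c hcS
    have h1 := hmin c hcS
    change ¬ ((Ψ c + 2 * w * n).toNat < (Ψ (g, a) + 2 * w * n).toNat) at h1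
    have h2 := hbound c hcS
    have h3 := hbound _ hc
    omega
  obtain ⟨hga, hbet, h | h⟩ := hc
  · left
    refine denseRun_step hAB hBinf hga h.1 h.2 hbet fun b g' h1 h2 h3 h4 => ?_
    exact hmin' (b, g') ⟨h1, fun x hx hx' => (h4 x hx hx').symm, Or.inr ⟨h2, h3⟩⟩
  · right
    refine denseRun_step (fun x hx => hAB x hx.symm) hAinf hga h.1 h.2
      (fun x hx hx' => (hbet x hx hx').symm) fun b g' h1 h2 h3 h4 => ?_
    have := hmin' (b, g') ⟨h1, h4, Or.inl ⟨h2, h3⟩⟩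
    simp only [Ψ] at this
    rw [add_comm (Nat.count B a : ℤ), add_comm (Nat.count B g' : ℤ)]
    exact this

end MinBisection

/-! ### The cyclic order of the vertices along the path -/

namespace MinBisection

/-- The index of the last node of the path `s 0, …, s ℓ` that is an ancestor of the node `i`. -/
noncomputable def idx {ι : Type*} (π : ι → ι) (s : ℕ → ι) (ℓ : ℕ) (i : ι) : ℕ :=
  Nat.findGreatest (fun k => Anc π (s k) i) ℓ

/-- The vertex `v` lies in a cluster of the path `s 0, …, s ℓ`. In a decomposition rooted at `s 0`
this means that `top v` is one of the path nodes. -/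
def OnPath {V ι : Type*} (top : V → ι) (s : ℕ → ι) (ℓ : ℕ) (v : V) : Prop :=
  ∃ k ≤ ℓ, top v = s k

/-- The sorting key of the vertices: the vertices attached to the `k`-th path node get `2 k` if
they lie off the path (the set `S_k`), and `2 k + 1` if they lie on the path (the set `R_k`). -/
noncomputable def key {V ι : Type*} (π : ι → ι) (top : V → ι) (s : ℕ → ι) (ℓ : ℕ) (v : V) : ℕ :=
  2 * idx π s ℓ (top v) + if OnPath top s ℓ v then 1 else 0

/-- A rooted tree decomposition with a path `s 0, …, s ℓ` descending from the root, such that each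
path node is the top node of some vertex. -/
structure PathData {V ι : Type*} (G : SimpleGraph V) (X : ι → Finset V) (π : ι → ι) (d : ι → ℕ)
    (r : ι) (top : V → ι) (s : ℕ → ι) (ℓ : ℕ) : Prop extends Rooted G X π d r top where
  s_zero : s 0 = r
  s_par : ∀ k < ℓ, π (s (k + 1)) = s k
  s_ne : ∀ k < ℓ, s (k + 1) ≠ r
  s_top : ∀ k ≤ ℓ, ∃ v, top v = s k

namespace PathData
variable {V ι : Type*} {G : SimpleGraph V} {X : ι → Finset V} {π : ι → ι} {d : ι → ℕ}
  {r : ι} {top : V → ι} {s : ℕ → ι} {ℓ : ℕ} (P : PathData G X π d r top s ℓ)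
include P

lemma anc_s {j k : ℕ} (hjk : j ≤ k) (hk : k ≤ ℓ) : Anc π (s j) (s k) := by
  induction k with
  | zero => rw [Nat.le_zero.1 hjk]; exact Anc.refl _
  | succ k ih =>
    rcases hjk.eq_or_lt with h | h
    · rw [h]; exact Anc.refl _
    · have := Anc.par (π := π) (s (k + 1))
      rw [P.s_par k (by omega)] at this
      exact (ih (by omega) (by omega)).trans this

lemma d_s_lt {j k : ℕ} (hjk : j < k) (hk : k ≤ ℓ) : d (s j) < d (s k) := by
  obtain ⟨k, rfl⟩ : ∃ m, k = m + 1 := ⟨k - 1, by omega⟩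
  have h1 := P.par_lt _ (P.s_ne k (by omega))
  rw [P.s_par k (by omega)] at h1
  rcases P.anc_eq_or_lt (P.anc_s (show j ≤ k by omega) (by omega)) with h | h
  · rw [h]; exact h1
  · exact h.trans h1

lemma idx_le (i : ι) : idx π s ℓ i ≤ ℓ := Nat.findGreatest_le _

lemma idx_anc (i : ι) : Anc π (s (idx π s ℓ i)) i :=
  Nat.findGreatest_spec (P := fun k => Anc π (s k) i) (Nat.zero_le ℓ)
    (P.s_zero ▸ P.anc_root i)

lemma le_idx {i : ι} {k : ℕ} (hk : k ≤ ℓ) (h : Anc π (s k) i) : k ≤ idx π s ℓ i :=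
  Nat.le_findGreatest hk h

lemma anc_of_le_idx {i : ι} {k : ℕ} (h : k ≤ idx π s ℓ i) : Anc π (s k) i :=
  (P.anc_s h (P.idx_le i)).trans (P.idx_anc i)

lemma idx_s {k : ℕ} (hk : k ≤ ℓ) : idx π s ℓ (s k) = k := by
  refine le_antisymm ?_ (P.le_idx hk (Anc.refl _))
  by_contra h
  push Not at h
  have h1 := P.d_s_lt h (P.idx_le _)
  rcases P.anc_eq_or_lt (P.idx_anc (s k)) with h2 | h2
  · rw [h2] at h1; exact lt_irrefl _ h1
  · omega

lemma onPath_top {v : V} (h : OnPath top s ℓ v) : top v = s (idx π s ℓ (top v)) := by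
  obtain ⟨k, hk, h⟩ := h
  rw [h, P.idx_s hk]

lemma mem_of_onPath {v : V} (h : OnPath top s ℓ v) : v ∈ X (s (idx π s ℓ (top v))) := by
  rw [← P.onPath_top h]; exact P.mem_top v

lemma onPath_of_mem {v : V} {k : ℕ} (hk : k ≤ ℓ) (h : v ∈ X (s k)) : OnPath top s ℓ v := by
  have h1 := P.anc_top h
  induction k with
  | zero =>
    refine ⟨0, hk, P.anc_antisymm h1 ?_⟩
    rw [P.s_zero]; exact P.anc_root _
  | succ k ih =>
    rcases h1.eq_or_par with h2 | h2
    · exact ⟨k + 1, hk, h2⟩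
    · rw [P.s_par k (by omega)] at h2
      exact ih (by omega) (P.mem_between h (P.anc_s (Nat.le_succ k) hk) h2) h2

/-- An edge leading from the part at or before path node `k` to the part after it starts in the
cluster of `s k`. -/
lemma edge_idx {u v : V} (h : G.Adj u v) {k : ℕ} (hu : idx π s ℓ (top u) ≤ k)
    (hv : k < idx π s ℓ (top v)) : u ∈ X (s k) := by
  have hk : k < ℓ := hv.trans_le (P.idx_le _)
  rw [← P.s_par k hk]
  refine P.edge_below h.symm (P.anc_of_le_idx hv) fun hc => ?_
  have := P.le_idx hk hc
  omega

/-- Cutting the order given by the keys at a vertex `p` on the path only destroys edges with an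
end in the cluster `X (top p)`. -/
lemma edge_cut {u v p : V} (h : G.Adj u v) (hp : OnPath top s ℓ p)
    (hup : key π top s ℓ u ≤ key π top s ℓ p) (hpv : key π top s ℓ p ≤ key π top s ℓ v) :
    u ∈ X (top p) ∨ v ∈ X (top p) := by
  rw [P.onPath_top hp]
  unfold key at hup hpv
  rw [if_pos hp] at hup hpv
  have hu : idx π s ℓ (top u) ≤ idx π s ℓ (top p) := by split_ifs at hup <;> omega
  by_cases hv : idx π s ℓ (top p) < idx π s ℓ (top v)
  · exact Or.inl (P.edge_idx h hu hv)
  · right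
    split_ifs at hpv with hv'
    · have : idx π s ℓ (top p) = idx π s ℓ (top v) := by omega
      rw [this]
      exact P.mem_of_onPath hv'
    · omega

/-- An edge leaving the set of vertices attached to, but not on, the path at node `k` meets the
cluster of `s k`. -/
lemma edge_branch {u v : V} (h : G.Adj u v) {k : ℕ} (hu : idx π s ℓ (top u) = k)
    (hv : ¬ (idx π s ℓ (top v) = k ∧ ¬ OnPath top s ℓ v)) :
    u ∈ X (s k) ∨ v ∈ X (s k) := by
  rcases lt_trichotomy (idx π s ℓ (top v)) k with h1 | h1 | h1
  · right
    have hk : k ≤ ℓ := hu ▸ P.idx_le _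
    have hsu : Anc π (s k) (top u) := P.anc_of_le_idx hu.ge
    have hsv : ¬ Anc π (s k) (top v) := fun hc => by
      have := P.le_idx hk hc
      omega
    rcases P.edge_top h with ⟨h2, -⟩ | ⟨h2, h3⟩
    · exact absurd (hsu.trans h2) hsv
    · exact P.mem_between h3 hsu ((hsu.comparable h2).resolve_left hsv)
  · right
    by_cases hv' : OnPath top s ℓ v
    · exact h1 ▸ P.mem_of_onPath hv'
    · exact absurd ⟨h1, hv'⟩ hv
  · left
    exact P.edge_idx h hu.le h1

end PathData

/-- A labelling of the `n` vertices, extended `n`-periodically to all of `ℕ`, that is compatible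
with the sorting key. -/
structure Layout {V ι : Type*} (G : SimpleGraph V) (X : ι → Finset V) (π : ι → ι) (d : ι → ℕ)
    (r : ι) (top : V → ι) (s : ℕ → ι) (ℓ n : ℕ) (σ : ℕ → V) : Prop
    extends PathData G X π d r top s ℓ where
  n_pos : 0 < n
  σ_per : ∀ x, σ (x + n) = σ x
  σ_inj : ∀ x < n, ∀ y < n, σ x = σ y → x = y
  σ_surj : ∀ v, ∃ x < n, σ x = v
  σ_mono : ∀ x y, x ≤ y → y < n → key π top s ℓ (σ x) ≤ key π top s ℓ (σ y)

/-- Sort the vertices by their keys. -/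
lemma PathData.exists_layout {V ι : Type*} [Fintype V] {G : SimpleGraph V} {X : ι → Finset V}
    {π : ι → ι} {d : ι → ℕ} {r : ι} {top : V → ι} {s : ℕ → ι} {ℓ : ℕ}
    (P : PathData G X π d r top s ℓ) :
    ∃ σ, Layout G X π d r top s ℓ (Fintype.card V) σ := by
  obtain ⟨v0, -⟩ := P.s_top 0 (Nat.zero_le _)
  have hn : 0 < Fintype.card V := Fintype.card_pos_iff.2 ⟨v0⟩
  set n := Fintype.card V with hndef
  let e : Fin n ≃ V := (Fintype.equivFin V).symm
  let f : Fin n → ℕ := fun x => key π top s ℓ (e x)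
  let g : Fin n ≃ V := (Tuple.sort f).trans e
  refine ⟨fun x => g ⟨x % n, Nat.mod_lt _ hn⟩, { P with
    n_pos := hn
    σ_per := fun x => by simp
    σ_inj := fun x hx y hy h => by
      have h1 := g.injective h
      rw [Fin.mk.injEq, Nat.mod_eq_of_lt hx, Nat.mod_eq_of_lt hy] at h1
      exact h1
    σ_surj := fun v => ⟨(g.symm v).1, (g.symm v).2, by
      have : (⟨(g.symm v).1 % n, Nat.mod_lt _ hn⟩ : Fin n) = g.symm v :=
        Fin.ext (Nat.mod_eq_of_lt (g.symm v).2)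
      simp only [this, Equiv.apply_symm_apply]⟩
    σ_mono := fun x y hxy hy => by
      have := Tuple.monotone_sort f (a := ⟨x % n, Nat.mod_lt _ hn⟩)
        (b := ⟨y % n, Nat.mod_lt _ hn⟩) (by
          rw [Fin.mk_le_mk, Nat.mod_eq_of_lt hy, Nat.mod_eq_of_lt (hxy.trans_lt hy)]
          exact hxy)
      exact this }⟩

namespace Layout
variable {V ι : Type*} {G : SimpleGraph V} {X : ι → Finset V} {π : ι → ι} {d : ι → ℕ}
  {r : ι} {top : V → ι} {s : ℕ → ι} {ℓ n : ℕ} {σ : ℕ → V}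
  (L : Layout G X π d r top s ℓ n σ)
include L

lemma σ_add_mul (x k : ℕ) : σ (x + n * k) = σ x := by
  induction k with
  | zero => simp
  | succ k ih => rw [Nat.mul_succ, ← add_assoc, L.σ_per, ih]

lemma σ_mod (x : ℕ) : σ (x % n) = σ x := by
  conv_rhs => rw [← Nat.mod_add_div x n]
  rw [L.σ_add_mul]

lemma key_mono {x y : ℕ} (hxy : x ≤ y) (hb : x / n = y / n) :
    key π top s ℓ (σ x) ≤ key π top s ℓ (σ y) := by
  rw [← L.σ_mod x, ← L.σ_mod y]
  refine L.σ_mono _ _ ?_ (Nat.mod_lt _ L.n_pos)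
  have h1 := Nat.mod_add_div x n
  have h2 := Nat.mod_add_div y n
  rw [hb] at h1
  omega

/-- The labels in a window of length `n` enumerate the vertices without repetition. -/
lemma window_inj {a x y : ℕ} (hx : a ≤ x) (hx' : x < a + n) (hy : a ≤ y) (hy' : y < a + n)
    (h : σ x = σ y) : x = y := by
  rw [← L.σ_mod x, ← L.σ_mod y] at h
  have h1 := L.σ_inj _ (Nat.mod_lt _ L.n_pos) _ (Nat.mod_lt _ L.n_pos) h
  have h2 : x ≡ y [MOD n] := h1
  rcases le_total x y with hle | hle
  · have := (Nat.modEq_iff_dvd' hle).1 h2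
    have := Nat.eq_zero_of_dvd_of_lt this (by omega)
    omega
  · have := (Nat.modEq_iff_dvd' hle).1 h2.symm
    have := Nat.eq_zero_of_dvd_of_lt this (by omega)
    omega

lemma window_surj (a : ℕ) (v : V) : ∃ x, a ≤ x ∧ x < a + n ∧ σ x = v := by
  obtain ⟨y, hy, rfl⟩ := L.σ_surj v
  have h := Nat.mod_add_div a n
  have h' := Nat.mod_lt a L.n_pos
  by_cases hc : a % n ≤ y
  · exact ⟨y + n * (a / n), by omega, by omega, L.σ_add_mul _ _⟩
  · refine ⟨y + n * (a / n + 1), ?_, ?_, L.σ_add_mul _ _⟩ <;> rw [Nat.mul_succ] <;> omega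

/-- An edge crossing from a cyclic interval `[a, q]` of labels to its complement meets the
cluster of the vertex `σ a` or that of `σ q`, provided that both of them are on the path. -/
lemma edge_cyclic {a q x y : ℕ} (ha : OnPath top s ℓ (σ a)) (hq : OnPath top s ℓ (σ q))
    (hax : a ≤ x) (hxq : x ≤ q) (hqy : q ≤ y) (hya : y ≤ a + n) (h : G.Adj (σ x) (σ y)) :
    (σ x ∈ X (top (σ a)) ∨ σ y ∈ X (top (σ a))) ∨
      (σ x ∈ X (top (σ q)) ∨ σ y ∈ X (top (σ q))) := by
  have hn := L.n_pos
  have d1 : a / n ≤ x / n := Nat.div_le_div_right hax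
  have d2 : x / n ≤ q / n := Nat.div_le_div_right hxq
  have d3 : q / n ≤ y / n := Nat.div_le_div_right hqy
  have d4 : y / n ≤ a / n + 1 := by
    rw [← Nat.add_div_right a hn]; exact Nat.div_le_div_right hya
  by_cases hxy : x / n = y / n
  · exact Or.inr (L.edge_cut h hq (L.key_mono hxq (by omega)) (L.key_mono hqy (by omega)))
  · left
    have hny : n ≤ y := by
      by_contra hlt
      push Not at hlt
      rw [Nat.div_eq_of_lt hlt] at hxy d3
      exact hxy (Nat.le_zero.1 (d2.trans d3))
    have hσ : σ (y - n) = σ y := by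
      conv_rhs => rw [← Nat.sub_add_cancel hny, L.σ_per]
    have hd : (y - n) / n = a / n := by
      have := Nat.add_div_right (y - n) hn
      rw [Nat.sub_add_cancel hny] at this
      omega
    have h1 := L.key_mono (show y - n ≤ a by omega) hd
    have h2 := L.key_mono hax (by omega)
    rw [hσ] at h1
    exact (L.edge_cut h.symm ha h1 h2).symm

/-- The labels strictly between two consecutive on-path labels `g < g'` are exactly those of the
off-path vertices attached to the path at the node of `σ g'`; every path node being the top node of some
vertex, a gap does not spread over several path nodes. -/
lemma gap {g g' x₀ : ℕ} (hg : OnPath top s ℓ (σ g)) (hg' : OnPath top s ℓ (σ g'))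
    (hgap : ∀ x, g < x → x < g' → ¬ OnPath top s ℓ (σ x)) (h0 : g < x₀) (h0' : x₀ < g') :
    (∀ x, g < x → x < g' → idx π s ℓ (top (σ x)) = idx π s ℓ (top (σ g'))) ∧
    (∀ v, idx π s ℓ (top v) = idx π s ℓ (top (σ g')) → ¬ OnPath top s ℓ v →
      ∃ x, g < x ∧ x < g' ∧ σ x = v) := by
  have hn := L.n_pos
  have hkon : ∀ v, OnPath top s ℓ v → key π top s ℓ v = 2 * idx π s ℓ (top v) + 1 :=
    fun v hv => by unfold key; rw [if_pos hv]
  have hkoff : ∀ v, ¬ OnPath top s ℓ v → key π top s ℓ v = 2 * idx π s ℓ (top v) :=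
    fun v hv => by unfold key; rw [if_neg hv]; rfl
  set N := n * (g' / n) with hN
  have hNg : N ≤ g' := Nat.mul_div_le _ _
  have hgN : g' < N + n := by
    have := Nat.mod_add_div g' n
    have := Nat.mod_lt g' hn
    omega
  have hblock : ∀ x, N ≤ x → x < N + n → x / n = g' / n := by
    intro x h1 h2
    apply Nat.div_eq_of_lt_le
    · rw [mul_comm]; exact h1
    · rw [Nat.succ_mul, mul_comm]; exact h2
  have hexists : ∀ v, ∃ x, N ≤ x ∧ x < N + n ∧ σ x = v := L.window_surj N
  -- the last label of each period belongs to the last path node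
  have hlast : OnPath top s ℓ (σ (n - 1)) := by
    obtain ⟨v, hv⟩ := L.s_top ℓ le_rfl
    obtain ⟨x, hx, rfl⟩ := L.σ_surj v
    have h1 := L.σ_mono x (n - 1) (by omega) (by omega)
    rw [hkon _ ⟨ℓ, le_rfl, hv⟩, hv, L.idx_s le_rfl] at h1
    by_contra hcon
    rw [hkoff _ hcon] at h1
    have := L.idx_le (top (σ (n - 1)))
    omega
  have hNx : ∀ x, g < x → x < g' → N ≤ x := by
    intro x h1 h2
    by_contra hlt
    push Not at hlt
    refine hgap (N - 1) (by omega) (by omega) ?_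
    obtain ⟨q, hq⟩ : ∃ q, g' / n = q + 1 := by
      refine ⟨g' / n - 1, ?_⟩
      rcases Nat.eq_zero_or_pos (g' / n) with h | h
      · rw [h, mul_zero] at hN; omega
      · omega
    have : N - 1 = (n - 1) + n * q := by
      rw [hN, hq, Nat.mul_succ]; omega
    rw [this, L.σ_add_mul]
    exact hlast
  have hidx : ∀ x, g < x → x < g' → idx π s ℓ (top (σ x)) = idx π s ℓ (top (σ g')) := by
    intro x h1 h2
    have hx := hNx x h1 h2
    have hxb := hblock x hx (by omega)
    have hk := L.key_mono h2.le hxb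
    have hxoff := hkoff _ (hgap x h1 h2)
    rw [hxoff, hkon _ hg'] at hk
    by_contra hne
    obtain ⟨v, hv⟩ := L.s_top _ (L.idx_le (top (σ x)))
    obtain ⟨y, hy1, hy2, rfl⟩ := hexists v
    have hyon : OnPath top s ℓ (σ y) := ⟨_, L.idx_le _, hv⟩
    have hky := hkon _ hyon
    rw [hv, L.idx_s (L.idx_le _)] at hky
    have hyb := hblock y hy1 hy2
    rcases le_total y x with h | h
    · have := L.key_mono h (by omega)
      omega
    · rcases le_or_gt g' y with h' | h'
      · have := L.key_mono h' (by omega)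
        have := hkon _ hg'
        omega
      · refine hgap y ?_ h' hyon
        omega
  refine ⟨hidx, fun v hv hoff => ?_⟩
  obtain ⟨y, hy1, hy2, rfl⟩ := hexists v
  have hyb := hblock y hy1 hy2
  have hky := hkoff _ hoff
  have hkg' := hkon _ hg'
  refine ⟨y, ?_, ?_, rfl⟩
  · by_contra hle
    push Not at hle
    have h1 := L.key_mono hle (by rw [hyb, hblock g (by omega) (by omega)])
    have h2 := L.key_mono h0.le
      (by rw [hblock g (by omega) (by omega), hblock x₀ (by omega) (by omega)])
    have h3 := hkoff _ (hgap x₀ h0 h0')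
    rw [hidx x₀ h0 h0'] at h3
    have h4 := hkon _ hg
    omega
  · by_contra hle
    push Not at hle
    have h1 := L.key_mono hle (by rw [hyb])
    omega

end Layout

end MinBisection

/-! ### Restricting the tree decomposition to `Z` -/

namespace MinBisection

/-- The graph on the nodes in which every node is joined to its parent. -/
def parTree {ι : Type*} (π : ι → ι) : SimpleGraph ι := SimpleGraph.fromRel fun i j => π i = j

lemma parTree_adj {ι : Type*} {π : ι → ι} {i : ι} (h : π i ≠ i) : (parTree π).Adj i (π i) := by
  rw [parTree, SimpleGraph.fromRel_adj]
  exact ⟨h.symm, Or.inl rfl⟩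

namespace Rooted
variable {V ι : Type*} {G : SimpleGraph V} {X : ι → Finset V} {π : ι → ι} {d : ι → ℕ}
  {r : ι} {top : V → ι} (H : Rooted G X π d r top)
include H

lemma par_ne {i : ι} (h : i ≠ r) : π i ≠ i := fun hc => by
  have := H.par_lt i h
  rw [hc] at this
  exact lt_irrefl _ this

/-- The parent graph is connected and has one edge per non-root node. -/
lemma isTree [Fintype ι] : (parTree π).IsTree := by
  rw [SimpleGraph.isTree_iff_connected_and_card]
  constructor
  · have hreach : ∀ i, (parTree π).Reachable i r := by
      intro i
      induction hd : d i using Nat.strong_induction_on generalizing i with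
      | _ n ih =>
        by_cases hi : i = r
        · rw [hi]
        · exact (parTree_adj (H.par_ne hi)).reachable.trans (ih _ (hd ▸ H.par_lt i hi) _ rfl)
    have : Nonempty ι := ⟨r⟩
    exact ⟨fun i j => (hreach i).trans (hreach j).symm⟩
  · let f : {i // i ≠ r} → (parTree π).edgeSet :=
      fun i => ⟨s(i.1, π i.1), parTree_adj (H.par_ne i.2)⟩
    have hf : Function.Bijective f := by
      constructor
      · rintro ⟨i, hi⟩ ⟨j, hj⟩ h
        have h1 : s(i, π i) = s(j, π j) := congrArg Subtype.val h
        rw [Sym2.eq_iff] at h1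
        rcases h1 with ⟨h1, -⟩ | ⟨h1, h2⟩
        · exact Subtype.ext h1
        · have h3 := H.par_lt i hi
          have h4 := H.par_lt j hj
          rw [h2] at h3
          rw [← h1] at h4
          omega
      · rintro ⟨e, he⟩
        induction e using Sym2.ind with
        | _ a b =>
          have hab : a ≠ b ∧ (π a = b ∨ π b = a) := by
            have h1 : (parTree π).Adj a b := he
            rwa [parTree, SimpleGraph.fromRel_adj] at h1
          obtain ⟨hne, h | h⟩ := hab
          · refine ⟨⟨a, ?_⟩, Subtype.ext ?_⟩
            · rintro rfl
              exact hne (H.par_root.symm.trans h)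
            · change s(a, π a) = s(a, b)
              rw [h]
          · refine ⟨⟨b, ?_⟩, Subtype.ext ?_⟩
            · rintro rfl
              exact hne (H.par_root.symm.trans h).symm
            · change s(b, π b) = s(a, b)
              rw [h, Sym2.eq_swap]
    rw [← Nat.card_congr (Equiv.ofBijective f hf), Nat.card_eq_fintype_card,
      Nat.card_eq_fintype_card, Fintype.card_subtype_compl, Fintype.card_subtype_eq]
    have : 0 < Fintype.card ι := Fintype.card_pos_iff.2 ⟨r⟩
    omega

lemma exists_walk_top {v : V} {i : ι} (hv : v ∈ X i) :
    ∃ w : (parTree π).Walk i (top v), ∀ x ∈ w.support, v ∈ X x := by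
  induction hd : d i using Nat.strong_induction_on generalizing i with
  | _ n ih =>
    by_cases hi : i = top v
    · subst hi
      exact ⟨SimpleGraph.Walk.nil, by simpa using hv⟩
    · obtain ⟨h1, h2⟩ := H.mem_par v i hv hi
      obtain ⟨w, hw⟩ := ih _ (hd ▸ H.par_lt i h1) h2 rfl
      refine ⟨SimpleGraph.Walk.cons (parTree_adj (H.par_ne h1)) w, fun x hx => ?_⟩
      rw [SimpleGraph.Walk.support_cons, List.mem_cons] at hx
      rcases hx with rfl | hx
      · exact hv
      · exact hw x hx

lemma isTreeDecomp [Fintype ι] : IsTreeDecomp G (parTree π) X where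
  isTree := H.isTree
  mem_cluster v := ⟨top v, H.mem_top v⟩
  edge_cluster u v h := H.edge u v h
  inter_subset i j p hp h hh v hv := by
    obtain ⟨hi, hj⟩ := Finset.mem_inter.1 hv
    obtain ⟨w1, hw1⟩ := H.exists_walk_top hi
    obtain ⟨w2, hw2⟩ := H.exists_walk_top hj
    have h1 : (⟨p, hp⟩ : (parTree π).Path i j) =
        ⟨(w1.append w2.reverse).bypass, SimpleGraph.Walk.bypass_isPath _⟩ :=
      (H.isTree.isAcyclic.subsingleton_path i j).elim _ _
    rw [show p = _ from congrArg Subtype.val h1] at hh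
    have h2 := SimpleGraph.Walk.support_bypass_subset_support _ hh
    rw [SimpleGraph.Walk.mem_support_append_iff, SimpleGraph.Walk.support_reverse,
      List.mem_reverse] at h2
    rcases h2 with h2 | h2
    · exact hw1 h h2
    · exact hw2 h h2

end Rooted

/-- A lower bound for the weight of a path whose clusters consist of elements of another type
(below, a subtype of the vertices): it suffices that their images under `f` cover `S`. -/
lemma le_walkWeight {V V' ι : Type*} (X : ι → Finset V') {T : SimpleGraph ι} {i j : ι}
    (q : T.Walk i j) (S : Finset V) (f : V' → V)
    (h : ∀ v ∈ S, ∃ i ∈ q.support, ∃ x ∈ X i, f x = v) : S.card ≤ walkWeight X q := by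
  unfold walkWeight
  refine Finset.card_le_card_of_surjOn f fun v hv => ?_
  obtain ⟨i, hi, x, hx, hxv⟩ := h v (Finset.mem_coe.1 hv)
  exact ⟨x, Finset.mem_coe.2 (Finset.mem_biUnion.2 ⟨i, List.mem_toFinset.2 hi, hx⟩), hxv⟩

/-- The tree decomposition of `G[Z]` obtained from that of `G` by intersecting all clusters with
`Z` and bypassing those path nodes `s k` that are not the top node of a vertex of `Z`: a path node
is hung below the last preceding path node that is the top node of a vertex of `Z`, if there is
one. The path nodes that are not bypassed then form a nonredundant path, traversed downwards. -/
lemma PathData.exists_restrict {V ι : Type*} [Fintype ι] {G : SimpleGraph V}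
    {X : ι → Finset V} {π : ι → ι} {d : ι → ℕ} {r : ι} {top : V → ι} {s : ℕ → ι} {ℓ : ℕ}
    (P : PathData G X π d r top s ℓ) {t : ℕ} (hwidth : ∀ i, (X i).card ≤ t) (Z : Finset V)
    (hZ : ∃ v ∈ Z, OnPath top s ℓ v) :
    ∃ (T' : SimpleGraph ι) (X' : ι → Finset (Z : Set V)),
      IsTreeDecomp (G.induce (Z : Set V)) T' X' ∧ (∀ a, (X' a).card ≤ t) ∧
      ∃ (a b : ι) (q : T'.Walk a b), q.IsPath ∧ NonredundantPath X' q ∧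
        (Z.filter fun v => OnPath top s ℓ v).card ≤ walkWeight X' q := by
  -- `kept k` says that the path node `s k` is not bypassed.
  let kept : ℕ → Prop := fun k => ∃ v ∈ Z, top v = s k
  let X' : ι → Finset (Z : Set V) := fun i => Finset.univ.filter fun v => (v : V) ∈ X i
  have hX' : ∀ (v : (Z : Set V)) i, v ∈ X' i ↔ (v : V) ∈ X i := fun v i => by simp [X']
  have hπ : ∀ i, ∃ i', (∀ j k, j < k → k ≤ ℓ → i = s k → kept j →
        (∀ h, j < h → h < k → ¬ kept h) → i' = s j) ∧
      (i' = π i ∧ (∀ j k, j < k → k ≤ ℓ → i = s k → ¬ kept j) ∨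
        ∃ j k, j < k ∧ k ≤ ℓ ∧ i = s k ∧ kept j ∧
        (∀ h, j < h → h < k → ¬ kept h) ∧ i' = s j) := by
    intro i
    by_cases hc : ∃ j k, j < k ∧ k ≤ ℓ ∧ i = s k ∧ kept j
    · obtain ⟨j₀, k, hjk, hk, hi, hj₀⟩ := hc
      obtain ⟨hj1, hj2⟩ : Nat.findGreatest kept (k - 1) ≤ k - 1 ∧
          kept (Nat.findGreatest kept (k - 1)) :=
        ⟨Nat.findGreatest_le _, Nat.findGreatest_spec (P := kept) (m := j₀) (by omega) hj₀⟩
      have hj3 : ∀ h, Nat.findGreatest kept (k - 1) < h → h < k → ¬ kept h :=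
        fun h h1 h2 => Nat.findGreatest_is_greatest h1 (by omega)
      set j := Nat.findGreatest kept (k - 1)
      refine ⟨s j, ?_, Or.inr ⟨j, k, by omega, hk, hi, hj2, hj3, rfl⟩⟩
      intro j' k' hjk' hk' hi' hj' hb
      have hkk : k' = k := by rw [← P.idx_s hk', ← P.idx_s hk, ← hi, ← hi']
      subst hkk
      rcases lt_trichotomy j j' with h | h | h
      · exact absurd hj' (hj3 j' h hjk')
      · rw [h]
      · exact absurd hj2 (hb j h (by omega))
    · push Not at hc
      exact ⟨π i, fun j k h1 h2 h3 h4 => absurd h4 (hc j k h1 h2 h3), Or.inl ⟨rfl, hc⟩⟩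
  choose π' hπ1 hπ2 using hπ
  have H : Rooted (G.induce (Z : Set V)) X' π' d r (fun v => top v) := by
    refine ⟨?_, ?_, ?_, ?_, ?_⟩
    · rcases hπ2 r with ⟨h, -⟩ | ⟨j, k, hjk, hk, hr, -⟩
      · rw [h, P.par_root]
      · have h1 := P.d_s_lt (Nat.lt_of_le_of_lt (Nat.zero_le j) hjk) hk
        rw [P.s_zero, ← hr] at h1
        exact absurd h1 (lt_irrefl _)
    · intro i hi
      rcases hπ2 i with ⟨h, -⟩ | ⟨j, k, hjk, hk, rfl, -, -, h⟩
      · rw [h]; exact P.par_lt i hi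
      · rw [h]; exact P.d_s_lt hjk hk
    · intro v
      exact (hX' _ _).2 (P.mem_top _)
    · intro v i hv hne
      rw [hX'] at hv ⊢
      obtain ⟨h1, h2⟩ := P.mem_par _ i hv hne
      refine ⟨h1, ?_⟩
      rcases hπ2 i with ⟨h, -⟩ | ⟨j, k, hjk, hk, rfl, hj, hb, h⟩
      · rw [h]; exact h2
      · rw [h]
        have hon := P.onPath_of_mem hk hv
        have htop := P.onPath_top hon
        set h' := idx π s ℓ (top (v : V)) with hh'
        have hle : h' ≤ k := by
          have := P.le_idx (P.idx_le _) (htop ▸ P.anc_top hv : Anc π (s h') (s k))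
          rwa [P.idx_s hk] at this
        have hlt : h' < k := lt_of_le_of_ne hle (by rintro rfl; exact hne htop.symm)
        have hkept : kept h' := ⟨v, v.2, htop⟩
        have hj' : h' ≤ j := by
          by_contra hc
          exact hb h' (by omega) hlt hkept
        exact P.mem_between hv (P.anc_s hjk.le hk) (htop ▸ P.anc_s hj' (by omega))
    · intro u v huv
      obtain ⟨i, h1, h2⟩ := P.edge _ _ huv
      exact ⟨i, (hX' _ _).2 h1, (hX' _ _).2 h2⟩
  have hnotmem : ∀ v : V, ∀ j k, j < k → k ≤ ℓ → top v = s k → v ∉ X (s j) := by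
    intro v j k hjk hk hv hmem
    have h1 := P.anc_top hmem
    rw [hv] at h1
    have := P.le_idx hk h1
    rw [P.idx_s (by omega)] at this
    omega
  -- For a kept path node `s k`, the walk from it up to the first kept path node; read from the
  -- upper end `f`, no cluster is contained in the previous one.
  have hwalk : ∀ k ≤ ℓ, kept k → ∃ (f : ι) (q : (parTree π').Walk (s k) f),
      q.IsPath ∧ X' f ≠ ∅ ∧ (∀ x ∈ q.support, d x ≤ d (s k)) ∧
      (∀ h ≤ k, kept h → s h ∈ q.support) ∧
      List.IsChain (fun a b => ¬ X' a ⊆ X' b) q.support := by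
    intro k
    induction k using Nat.strong_induction_on with
    | _ k ih =>
      intro hk hkept
      by_cases hc : ∃ j < k, kept j
      · obtain ⟨j₀, hj₀k, hj₀⟩ := hc
        obtain ⟨hj1, hj2⟩ : Nat.findGreatest kept (k - 1) ≤ k - 1 ∧
            kept (Nat.findGreatest kept (k - 1)) :=
          ⟨Nat.findGreatest_le _, Nat.findGreatest_spec (P := kept) (m := j₀) (by omega) hj₀⟩
        have hj3 : ∀ h, Nat.findGreatest kept (k - 1) < h → h < k → ¬ kept h :=
          fun h h1 h2 => Nat.findGreatest_is_greatest h1 (by omega)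
        set j := Nat.findGreatest kept (k - 1)
        have hjk : j < k := by omega
        obtain ⟨f, q, hq1, hq2, hq3, hq4, hq5⟩ := ih j hjk (by omega) hj2
        have hpar : π' (s k) = s j := hπ1 _ j k hjk hk rfl hj2 hj3
        have hlt := P.d_s_lt hjk hk
        have hadj : (parTree π').Adj (s k) (s j) := by
          rw [← hpar]
          refine parTree_adj fun he => ?_
          rw [hpar] at he
          rw [he] at hlt
          exact lt_irrefl _ hlt
        refine ⟨f, SimpleGraph.Walk.cons hadj q, ?_, hq2, ?_, ?_, ?_⟩
        · rw [SimpleGraph.Walk.cons_isPath_iff]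
          refine ⟨hq1, fun hm => ?_⟩
          have := hq3 _ hm
          omega
        · intro x hx
          rw [SimpleGraph.Walk.support_cons, List.mem_cons] at hx
          rcases hx with rfl | hx
          · exact le_rfl
          · exact (hq3 x hx).trans hlt.le
        · intro h hh hkh
          rw [SimpleGraph.Walk.support_cons, List.mem_cons]
          rcases hh.eq_or_lt with rfl | hh
          · exact Or.inl rfl
          · right
            refine hq4 h ?_ hkh
            by_contra hlt'
            exact hj3 h (by omega) hh hkh
        · rw [SimpleGraph.Walk.support_cons, List.isChain_cons]
          refine ⟨fun b hb => ?_, hq5⟩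
          rw [← SimpleGraph.Walk.cons_tail_support, List.head?_cons, Option.mem_some_iff] at hb
          subst hb
          obtain ⟨v, hvZ, hv⟩ := hkept
          intro hsub
          have h1 : (⟨v, hvZ⟩ : (Z : Set V)) ∈ X' (s k) :=
            (hX' _ _).2 (hv ▸ P.mem_top v)
          exact hnotmem v j k hjk hk hv ((hX' _ _).1 (hsub h1))
      · push Not at hc
        refine ⟨s k, SimpleGraph.Walk.nil, SimpleGraph.Walk.IsPath.nil, ?_, by simp, ?_, by simp⟩
        · obtain ⟨v, hvZ, hv⟩ := hkept
          exact Finset.ne_empty_of_mem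
            ((hX' ⟨v, hvZ⟩ _).2 (hv ▸ P.mem_top v))
        · intro h hh hkh
          rcases hh.eq_or_lt with rfl | hh
          · simp
          · exact absurd hkh (hc h hh)
  obtain ⟨v, hvZ, k₀, hk₀, hv⟩ := hZ
  have hKle : Nat.findGreatest kept ℓ ≤ ℓ := Nat.findGreatest_le _
  have hK : kept (Nat.findGreatest kept ℓ) :=
    Nat.findGreatest_spec (P := kept) hk₀ ⟨v, hvZ, hv⟩
  have hKmax : ∀ k ≤ ℓ, kept k → k ≤ Nat.findGreatest kept ℓ :=
    fun k hk hkk => Nat.le_findGreatest hk hkk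
  set K := Nat.findGreatest kept ℓ
  obtain ⟨f, q, hq1, hq2, -, hq4, hq5⟩ := hwalk K hKle hK
  refine ⟨parTree π', X', H.isTreeDecomp, fun i => ?_, s K, f, q, hq1, Or.inr ⟨hq2, ?_⟩, ?_⟩
  · refine le_trans ?_ (hwidth i)
    exact Finset.card_le_card_of_injOn Subtype.val (fun v hv => (hX' _ _).1 hv)
      Subtype.val_injective.injOn
  · rw [SimpleGraph.Walk.support_reverse]
    exact List.isChain_reverse.2 hq5
  · refine le_walkWeight X' q _ Subtype.val fun v hv => ?_
    obtain ⟨hvZ, k, hk, hvk⟩ := Finset.mem_filter.1 hv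
    have hkk : kept k := ⟨v, hvZ, hvk⟩
    exact ⟨s k, hq4 k (hKmax k hk hkk) hkk, ⟨v, hvZ⟩, (hX' _ _).2 (hvk ▸ P.mem_top v), rfl⟩

/-- Renaming the nodes of the tree. -/
lemma PathData.transport {V ι κ : Type*} {G : SimpleGraph V} {X : ι → Finset V} {π : ι → ι}
    {d : ι → ℕ} {r : ι} {top : V → ι} {s : ℕ → ι} {ℓ : ℕ} (P : PathData G X π d r top s ℓ)
    (e : ι ≃ κ) :
    PathData G (fun i => X (e.symm i)) (fun i => e (π (e.symm i))) (fun i => d (e.symm i)) (e r)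
      (fun v => e (top v)) (fun k => e (s k)) ℓ where
  par_root := by simp [P.par_root]
  par_lt i hi := by
    simpa using P.par_lt (e.symm i) fun h => hi (by rw [← h, e.apply_symm_apply])
  mem_top v := by simpa using P.mem_top v
  mem_par v i hv hi := by
    obtain ⟨h1, h2⟩ := P.mem_par v (e.symm i) hv fun h => hi (by rw [← h, e.apply_symm_apply])
    refine ⟨fun h => h1 (by rw [h, e.symm_apply_apply]), by simpa using h2⟩
  edge u v h := by
    obtain ⟨i, h1, h2⟩ := P.edge u v h
    exact ⟨e i, by simpa using h1, by simpa using h2⟩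
  s_zero := congrArg e P.s_zero
  s_par k hk := by simp [P.s_par k hk]
  s_ne k hk h := P.s_ne k hk (e.injective h)
  s_top k hk := by
    obtain ⟨v, hv⟩ := P.s_top k hk
    exact ⟨v, congrArg e hv⟩

/-- The restricted decomposition with nodes in some `Fin k`. -/
lemma PathData.exists_restrict_fin {V ι : Type*} [Fintype ι] {G : SimpleGraph V}
    {X : ι → Finset V} {π : ι → ι} {d : ι → ℕ} {r : ι} {top : V → ι} {s : ℕ → ι} {ℓ : ℕ}
    (P : PathData G X π d r top s ℓ) {t : ℕ} (hwidth : ∀ i, (X i).card ≤ t) (Z : Finset V)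
    (hZ : ∃ v ∈ Z, OnPath top s ℓ v) :
    ∃ (k : ℕ) (T' : SimpleGraph (Fin k)) (X' : Fin k → Finset (Z : Set V)),
      IsTreeDecomp (G.induce (Z : Set V)) T' X' ∧ (∀ a, (X' a).card ≤ t) ∧
      ∃ (a b : Fin k) (q : T'.Walk a b), q.IsPath ∧ NonredundantPath X' q ∧
        (Z.filter fun v => OnPath top s ℓ v).card ≤ walkWeight X' q := by
  have hon : ∀ v, OnPath (fun v => Fintype.equivFin ι (top v))
      (fun k => Fintype.equivFin ι (s k)) ℓ v ↔ OnPath top s ℓ v := fun v => by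
    unfold OnPath
    simp only [EmbeddingLike.apply_eq_iff_eq]
  obtain ⟨T', X', h1, h2, a, b, q, h3, h4, h5⟩ :=
    (P.transport (Fintype.equivFin ι)).exists_restrict (t := t)
      (fun i => hwidth _) Z (by simpa only [hon] using hZ)
  simp only [hon] at h5
  exact ⟨_, T', X', h1, h2, a, b, q, h3, h4, h5⟩

end MinBisection

/-! ### The two kinds of cuts -/

namespace MinBisection

/-- If each edge destroyed by the cut meets the set `C`, then the width of the cut is at most
`|C| Δ(G)`. -/
lemma cutWidth3_le {V : Type*} [Fintype V] {G : SimpleGraph V} {B W Z : Finset V} (C : Finset V)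
    (h : ∀ x y, G.Adj x y → ¬ ((x ∈ B ∧ y ∈ B) ∨ (x ∈ W ∧ y ∈ W) ∨ (x ∈ Z ∧ y ∈ Z)) →
      x ∈ C ∨ y ∈ C) : cutWidth3 G B W Z ≤ C.card * maxDeg G := by
  set E : Finset (Sym2 V) :=
    C.biUnion fun c => (Finset.univ.filter fun u => G.Adj c u).image fun u => s(c, u) with hE
  have hmem : ∀ x y, G.Adj x y → x ∈ C → s(x, y) ∈ E := fun x y hxy hx =>
    Finset.mem_biUnion.2 ⟨x, hx, Finset.mem_image.2 ⟨y, by simpa using hxy, rfl⟩⟩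
  have h1 : cutWidth3 G B W Z ≤ E.card := by
    unfold cutWidth3
    rw [← Set.ncard_coe_finset E]
    refine Set.ncard_le_ncard (s := {e : Sym2 V | ∃ x y, G.Adj x y ∧ e = s(x, y) ∧
      ¬ ((x ∈ B ∧ y ∈ B) ∨ (x ∈ W ∧ y ∈ W) ∨ (x ∈ Z ∧ y ∈ Z))}) ?_ (Finset.finite_toSet _)
    rintro e ⟨x, y, hxy, rfl, hne⟩
    rcases h x y hxy hne with hx | hy
    · exact hmem x y hxy hx
    · rw [Sym2.eq_swap]
      exact hmem y x hxy.symm hy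
  refine h1.trans (Finset.card_biUnion_le_card_mul _ _ _ fun c _ => Finset.card_image_le.trans ?_)
  have h2 : Nat.card {u // G.Adj c u} ≤ maxDeg G :=
    Finset.le_sup (f := fun v => Nat.card {u // G.Adj v u}) (Finset.mem_univ c)
  rwa [Nat.card_eq_fintype_card, Fintype.card_subtype] at h2

namespace Layout
variable {V ι : Type*} {G : SimpleGraph V} {X : ι → Finset V} {π : ι → ι}
  {d : ι → ℕ} {r : ι} {top : V → ι} {s : ℕ → ι} {ℓ n : ℕ} {σ : ℕ → V}
  (L : Layout G X π d r top s ℓ n σ)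
include L

lemma mem_image_iff {a x : ℕ} {I : Finset ℕ} (hI : ∀ y ∈ I, a ≤ y ∧ y < a + n) (hx : a ≤ x)
    (hx' : x < a + n) : σ x ∈ I.image σ ↔ x ∈ I := by
  refine ⟨fun h => ?_, fun h => Finset.mem_image_of_mem _ h⟩
  obtain ⟨y, hy, hyx⟩ := Finset.mem_image.1 h
  rwa [← L.window_inj (hI y hy).1 (hI y hy).2 hx hx' hyx]

lemma card_image {a : ℕ} {I : Finset ℕ} (hI : ∀ y ∈ I, a ≤ y ∧ y < a + n) :
    (I.image σ).card = I.card :=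
  Finset.card_image_of_injOn fun x hx y hy h =>
    L.window_inj (hI x hx).1 (hI x hx).2 (hI y hy).1 (hI y hy).2 h

/-- Each window of `n` consecutive labels contains every on-path vertex once. -/
lemma count_eq [Fintype V] (c : ℕ) : Nat.count (fun x => OnPath top s ℓ (σ (x + c))) n =
    (Finset.univ.filter fun v => OnPath top s ℓ v).card := by
  rw [Nat.count_eq_card_filter_range]
  refine Finset.card_bij (fun x _ => σ (x + c)) ?_ ?_ ?_
  · intro x hx
    simpa using (Finset.mem_filter.1 hx).2
  · intro x hx y hy h
    have hx1 := Finset.mem_range.1 (Finset.mem_filter.1 hx).1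
    have hy1 := Finset.mem_range.1 (Finset.mem_filter.1 hy).1
    have := L.window_inj (a := c) (by omega) (by omega) (by omega) (by omega) h
    omega
  · intro v hv
    obtain ⟨x, h1, h2, rfl⟩ := L.window_surj c v
    refine ⟨x - c, Finset.mem_filter.2 ⟨Finset.mem_range.2 (by omega), ?_⟩, ?_⟩
    · rw [Nat.sub_add_cancel h1]
      exact (Finset.mem_filter.1 hv).2
    · rw [Nat.sub_add_cancel h1]

/-- If two on-path vertices are exactly `m` apart in the cyclic order, then the interval between
them is a set of `m` vertices with a small cut. -/
lemma exists_interval_cut [Fintype V] {t : ℕ} (hwidth : ∀ i, (X i).card ≤ t) {a m : ℕ} (hm : m ≤ n)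
    (ha : OnPath top s ℓ (σ a)) (ham : OnPath top s ℓ (σ (a + m))) :
    ∃ B : Finset V, B.card = m ∧
      cutWidth3 G B (Finset.univ \ B) ∅ ≤ 2 * t * maxDeg G := by
  have hI : ∀ y ∈ Finset.Ioc a (a + m), a + 1 ≤ y ∧ y < a + 1 + n := by
    intro y hy
    rw [Finset.mem_Ioc] at hy
    omega
  refine ⟨(Finset.Ioc a (a + m)).image σ, by rw [L.card_image hI, Nat.card_Ioc]; omega, ?_⟩
  refine (cutWidth3_le (X (top (σ a)) ∪ X (top (σ (a + m)))) ?_).trans ?_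
  · have hcross : ∀ u v, G.Adj u v → u ∈ (Finset.Ioc a (a + m)).image σ →
        v ∉ (Finset.Ioc a (a + m)).image σ →
        u ∈ X (top (σ a)) ∪ X (top (σ (a + m))) ∨ v ∈ X (top (σ a)) ∪ X (top (σ (a + m))) := by
      intro u v huv hu hv
      obtain ⟨x, hx, rfl⟩ := Finset.mem_image.1 hu
      obtain ⟨y, hy1, hy2, rfl⟩ := L.window_surj (a + 1) v
      rw [L.mem_image_iff hI hy1 hy2] at hv
      rw [Finset.mem_Ioc] at hx hv
      have := L.edge_cyclic ha ham (x := x) (y := y) (by omega) (by omega) (by omega) (by omega) huv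
      simp only [Finset.mem_union]
      tauto
    intro u v huv hne
    by_cases hu : u ∈ (Finset.Ioc a (a + m)).image σ
    · by_cases hv : v ∈ (Finset.Ioc a (a + m)).image σ
      · exact absurd (Or.inl ⟨hu, hv⟩) hne
      · exact hcross u v huv hu hv
    · by_cases hv : v ∈ (Finset.Ioc a (a + m)).image σ
      · exact (hcross v u huv.symm hv hu).symm
      · exact absurd (Or.inr (Or.inl ⟨by simpa using hu, by simpa using hv⟩)) hne
  · refine Nat.mul_le_mul_right _ ((Finset.card_union_le _ _).trans ?_)
    have h1 := hwidth (top (σ a))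
    have h2 := hwidth (top (σ (a + m)))
    omega

/-- The main construction. Let `Z` be the set of vertices with labels in a dense run `[a, b]`,
whose translate by `m` lies inside a gap `(g, g')` between on-path labels. The vertices with labels
in `(b, g]`, together with a subset of the gap of approximately the right size, form the set `B`;
the error in the size is made up for by `Z`. -/
lemma exists_gap_cut [Fintype V] [Fintype ι] {t : ℕ} (hwidth : ∀ i, (X i).card ≤ t)
    {w m a b g g' : ℕ}
    (hw : w ≤ n) (hm : m ≤ n) (ha : OnPath top s ℓ (σ a)) (hb : OnPath top s ℓ (σ b))
    (hg : OnPath top s ℓ (σ g)) (hg' : OnPath top s ℓ (σ g')) (hab : a ≤ b) (hga : g < a + m)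
    (hbg : b + m < g') (hgap : ∀ x, g < x → x < g' → ¬ OnPath top s ℓ (σ x))
    (hdense : w * (g' - g + (b - a)) ≤
      n * ((Finset.Icc a b).filter fun x => OnPath top s ℓ (σ x)).card) :
    ∃ B W Z : Finset V, Disjoint B W ∧ Disjoint B Z ∧ Disjoint W Z ∧
      B ∪ W ∪ Z = Finset.univ ∧ B.card ≤ m ∧ m ≤ B.card + Z.card ∧ 0 < Z.card ∧
      2 * Z.card ≤ n ∧ (∃ v ∈ Z, OnPath top s ℓ v) ∧
      2 * w * Z.card ≤ n * (Z.filter fun v => OnPath top s ℓ v).card ∧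
      ∃ k, w * 2 ^ k ≤ 2 * n ∧ ∃ C : Finset V, C.card ≤ (3 + k) * t ∧
        ∀ x y, G.Adj x y → ¬ ((x ∈ B ∧ y ∈ B) ∨ (x ∈ W ∧ y ∈ W) ∨ (x ∈ Z ∧ y ∈ Z)) →
          x ∈ C ∨ y ∈ C := by
  have hbg0 : b ≤ g := by
    by_contra h
    exact hgap b (by omega) (by omega) hb
  have hg'a : g' ≤ a + n := by
    by_contra h
    refine hgap (a + n) (by omega) (by omega) ?_
    rw [L.σ_per]
    exact ha
  have hIZ : ∀ y ∈ Finset.Icc a b, a ≤ y ∧ y < a + n := by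
    intro y hy; rw [Finset.mem_Icc] at hy; omega
  have hIB : ∀ y ∈ Finset.Ioc b g, a ≤ y ∧ y < a + n := by
    intro y hy; rw [Finset.mem_Ioc] at hy; omega
  have hIU : ∀ y ∈ Finset.Ioo g g', a ≤ y ∧ y < a + n := by
    intro y hy; rw [Finset.mem_Ioo] at hy; omega
  have hZ : ∀ x, a ≤ x → x < a + n → (σ x ∈ (Finset.Icc a b).image σ ↔ x ≤ b) := by
    intro x h1 h2; rw [L.mem_image_iff hIZ h1 h2, Finset.mem_Icc]; omega
  have hB₀ : ∀ x, a ≤ x → x < a + n → (σ x ∈ (Finset.Ioc b g).image σ ↔ b < x ∧ x ≤ g) := by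
    intro x h1 h2; rw [L.mem_image_iff hIB h1 h2, Finset.mem_Ioc]
  have hU : ∀ x, a ≤ x → x < a + n → (σ x ∈ (Finset.Ioo g g').image σ ↔ g < x ∧ x < g') := by
    intro x h1 h2; rw [L.mem_image_iff hIU h1 h2, Finset.mem_Ioo]
  have hZc : ((Finset.Icc a b).image σ).card = b - a + 1 := by
    rw [L.card_image hIZ, Nat.card_Icc]; omega
  have hB₀c : ((Finset.Ioc b g).image σ).card = g - b := by
    rw [L.card_image hIB, Nat.card_Ioc]
  have hUc : ((Finset.Ioo g g').image σ).card = g' - g - 1 := by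
    rw [L.card_image hIU, Nat.card_Ioo]
  have hRc : ((Finset.Icc a b).filter fun x => OnPath top s ℓ (σ x)).card ≤
      (((Finset.Icc a b).image σ).filter fun v => OnPath top s ℓ v).card := by
    rw [← L.card_image (I := (Finset.Icc a b).filter fun x => OnPath top s ℓ (σ x))
      fun y hy => hIZ y (Finset.mem_filter.1 hy).1]
    refine Finset.card_le_card fun v hv => ?_
    obtain ⟨x, hx, rfl⟩ := Finset.mem_image.1 hv
    obtain ⟨h1, h2⟩ := Finset.mem_filter.1 hx
    exact Finset.mem_filter.2 ⟨Finset.mem_image_of_mem _ h1, h2⟩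
  have hRz : ((Finset.Icc a b).filter fun x => OnPath top s ℓ (σ x)).card ≤ b - a + 1 := by
    refine (Finset.card_filter_le _ _).trans ?_
    rw [Nat.card_Icc]; omega
  set Z := (Finset.Icc a b).image σ with hZdef
  set B₀ := (Finset.Ioc b g).image σ with hB₀def
  set U := (Finset.Ioo g g').image σ with hUdef
  set ρ := ((Finset.Icc a b).filter fun x => OnPath top s ℓ (σ x)).card with hρ
  set z := b - a + 1 with hz
  -- `k` halving steps reduce the error `b + m - g` in the size of `B` to at most `|Z|`
  have hex : ∃ k, b + m - g ≤ 2 ^ k * z :=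
    ⟨b + m - g, (Nat.lt_two_pow_self).le.trans (Nat.le_mul_of_pos_right _ (by omega))⟩
  obtain ⟨k, hk, hkw⟩ : ∃ k, b + m - g ≤ 2 ^ k * z ∧ w * 2 ^ k ≤ 2 * n := by
    refine ⟨Nat.find hex, Nat.find_spec hex, ?_⟩
    rcases hk : Nat.find hex with _ | k
    · omega
    · have h1 := Nat.find_min hex (m := k) (by omega)
      push Not at h1
      have h2 : w * (2 ^ k * z) ≤ n * z :=
        calc w * (2 ^ k * z) ≤ w * (g' - g + (b - a)) := Nat.mul_le_mul_left _ (by omega)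
          _ ≤ n * ρ := hdense
          _ ≤ n * z := Nat.mul_le_mul_left _ hRz
      rw [← mul_assoc] at h2
      have h3 := Nat.le_of_mul_le_mul_right h2 (by omega)
      rw [pow_succ]
      calc w * (2 ^ k * 2) = 2 * (w * 2 ^ k) := by ring
        _ ≤ 2 * n := Nat.mul_le_mul_left _ h3
  obtain ⟨S, hSU, hS, hSk, D, hD, hcov⟩ :=
    L.exists_approx_set hwidth U (b + m - g) (by rw [hUc]; omega) k
  have hSz : b + m - g - S.card ≤ z := by
    have h1 : (b + m - g - S.card) * 2 ^ k ≤ z * 2 ^ k := by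
      rw [mul_comm z]; exact hSk.trans hk
    exact Nat.le_of_mul_le_mul_right h1 (by positivity)
  have hB₀S : Disjoint B₀ S := by
    rw [Finset.disjoint_left]
    intro v hv hvS
    obtain ⟨x, h1, h2, rfl⟩ := L.window_surj a v
    have h3 := (hB₀ x h1 h2).1 hv
    have h4 := (hU x h1 h2).1 (hSU hvS)
    omega
  have hBZ : Disjoint (B₀ ∪ S) Z := by
    rw [Finset.disjoint_left]
    intro v hv hvZ
    obtain ⟨x, h1, h2, rfl⟩ := L.window_surj a v
    have h3 := (hZ x h1 h2).1 hvZ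
    rcases Finset.mem_union.1 hv with h | h
    · have h4 := (hB₀ x h1 h2).1 h
      omega
    · have h4 := (hU x h1 h2).1 (hSU h)
      omega
  have hBc : (B₀ ∪ S).card = g - b + S.card := by
    rw [Finset.card_union_of_disjoint hB₀S, hB₀c]
  refine ⟨B₀ ∪ S, Finset.univ \ ((B₀ ∪ S) ∪ Z), Z, ?_, hBZ, ?_, ?_, by omega, by omega, by omega,
    ?_, ⟨σ a, Finset.mem_image_of_mem _ (Finset.mem_Icc.2 ⟨le_rfl, hab⟩), ha⟩, ?_, k, hkw,
    X (top (σ a)) ∪ X (top (σ b)) ∪ X (top (σ g')) ∪ D, ?_, ?_⟩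
  · exact Finset.disjoint_sdiff.mono_left Finset.subset_union_left
  · exact Finset.sdiff_disjoint.mono_right Finset.subset_union_right
  · ext v
    simp only [Finset.mem_union, Finset.mem_sdiff, Finset.mem_univ, true_and, iff_true]
    tauto
  · rw [hZc]; omega
  · rw [hZc]
    calc 2 * w * z = w * (2 * z) := by ring
      _ ≤ w * (g' - g + (b - a)) := Nat.mul_le_mul_left _ (by omega)
      _ ≤ n * ρ := hdense
      _ ≤ _ := Nat.mul_le_mul_left _ hRc
  · have h1 := hwidth (top (σ a))
    have h2 := hwidth (top (σ b))
    have h3 := hwidth (top (σ g'))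
    have h4 := Finset.card_union_le (X (top (σ a)) ∪ X (top (σ b)) ∪ X (top (σ g'))) D
    have h5 := Finset.card_union_le (X (top (σ a)) ∪ X (top (σ b))) (X (top (σ g')))
    have h6 := Finset.card_union_le (X (top (σ a))) (X (top (σ b)))
    rw [add_mul]
    omega
  · clear hRc hRz hdense hZc hB₀c hUc hSk hSz hBc hD hkw hex hk
    set C := X (top (σ a)) ∪ X (top (σ b)) ∪ X (top (σ g')) ∪ D with hC
    obtain ⟨hCa, hCb, hCg, hCD⟩ : (∀ v, v ∈ X (top (σ a)) → v ∈ C) ∧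
        (∀ v, v ∈ X (top (σ b)) → v ∈ C) ∧ (∀ v, v ∈ X (top (σ g')) → v ∈ C) ∧
        (∀ v, v ∈ D → v ∈ C) := by
      simp only [hC, Finset.mem_union]
      tauto
    clear_value C
    -- an edge between the gap and a vertex outside of it
    have hbranch : ∀ x y, a ≤ x → x < a + n → a ≤ y → y < a + n → g < x → x < g' →
        ¬ (g < y ∧ y < g') → G.Adj (σ x) (σ y) →
        σ x ∈ X (top (σ g')) ∨ σ y ∈ X (top (σ g')) := by
      intro x y hx hx' hy hy' h1 h2 h3 h
      obtain ⟨h4, h5⟩ := L.gap hg hg' hgap h1 h2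
      rw [L.onPath_top hg']
      refine L.edge_branch h (h4 x h1 h2) ?_
      rintro ⟨h6, h7⟩
      obtain ⟨x', h8, h9, h10⟩ := h5 _ h6 h7
      have := L.window_inj (a := a) (by omega) (by omega) hy hy' h10
      exact h3 (by omega)
    have hcross : ∀ x y, a ≤ x → x < y → y < a + n → G.Adj (σ x) (σ y) →
        ¬ ((σ x ∈ B₀ ∪ S ∧ σ y ∈ B₀ ∪ S) ∨
          (σ x ∈ Finset.univ \ ((B₀ ∪ S) ∪ Z) ∧ σ y ∈ Finset.univ \ ((B₀ ∪ S) ∪ Z)) ∨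
          (σ x ∈ Z ∧ σ y ∈ Z)) →
        σ x ∈ C ∨ σ y ∈ C := by
      intro x y hax hxy hya h hne
      have hZx := hZ x hax (by omega)
      have hZy := hZ y (by omega) hya
      have hBx := hB₀ x hax (by omega)
      have hBy := hB₀ y (by omega) hya
      have hUx := hU x hax (by omega)
      have hUy := hU y (by omega) hya
      have hSx := @hSU (σ x)
      have hSy := @hSU (σ y)
      simp only [Finset.mem_union, Finset.mem_sdiff, Finset.mem_univ, true_and, hZx, hZy, hBx,
        hBy] at hne
      by_cases hyb : y ≤ b
      · exact absurd (Or.inr (Or.inr ⟨by omega, hyb⟩)) hne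
      by_cases hxb : x ≤ b
      · exact (L.edge_cyclic ha hb hax hxb (by omega) (by omega) h).elim
          (Or.imp (hCa _) (hCa _)) (Or.imp (hCb _) (hCb _))
      by_cases hxU : g < x ∧ x < g'
      · by_cases hyU : g < y ∧ y < g'
        · by_cases hxS : σ x ∈ S
          · by_cases hyS : σ y ∈ S
            · exact absurd (Or.inl ⟨Or.inr hxS, Or.inr hyS⟩) hne
            · exact (hcov _ hxS _ (Finset.mem_sdiff.2 ⟨hUy.2 hyU, hyS⟩) h).imp (hCD _) (hCD _)
          · by_cases hyS : σ y ∈ S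
            · exact ((hcov _ hyS _ (Finset.mem_sdiff.2 ⟨hUx.2 hxU, hxS⟩) h.symm).imp
                (hCD _) (hCD _)).symm
            · refine absurd (Or.inr (Or.inl ⟨?_, ?_⟩)) hne <;> rintro ((hc | hc) | hc)
              · omega
              · exact hxS hc
              · omega
              · omega
              · exact hyS hc
              · omega
        · exact (hbranch x y hax (by omega) (by omega) hya hxU.1 hxU.2 hyU h).imp (hCg _) (hCg _)
      · by_cases hyU : g < y ∧ y < g'
        · exact ((hbranch y x (by omega) hya hax (by omega) hyU.1 hyU.2 hxU h.symm).imp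
            (hCg _) (hCg _)).symm
        · have hxS : σ x ∉ S := fun hc => hxU (hUx.1 (hSx hc))
          have hyS : σ y ∉ S := fun hc => hyU (hUy.1 (hSy hc))
          by_cases hyg : y ≤ g
          · exact absurd (Or.inl ⟨Or.inl (by omega), Or.inl (by omega)⟩) hne
          by_cases hxg : x ≤ g
          · exact (L.edge_cyclic ha hg' hax (by omega) (by omega) (by omega) h).elim
              (Or.imp (hCa _) (hCa _)) (Or.imp (hCg _) (hCg _))
          · refine absurd (Or.inr (Or.inl ⟨?_, ?_⟩)) hne <;> rintro ((hc | hc) | hc)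
            · omega
            · exact hxS hc
            · omega
            · omega
            · exact hyS hc
            · omega
    intro u v huv hne
    obtain ⟨x, hx1, hx2, rfl⟩ := L.window_surj a u
    obtain ⟨y, hy1, hy2, rfl⟩ := L.window_surj a v
    rcases lt_trichotomy x y with h | h | h
    · exact hcross x y hx1 h hy2 huv hne
    · exact absurd (h ▸ huv) (G.irrefl)
    · exact (hcross y x hy1 h hx2 huv.symm fun hc => hne (hc.imp And.symm (Or.imp And.symm And.symm))).symm

end Layout

end MinBisection

/-! ### Combining the cuts -/

namespace MinBisection

/-- In the cyclic order of the vertices, either two on-path vertices are exactly `m` apart, or the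
on-path labels and their translates by `m` are disjoint. In the second case there is a dense run of
one kind in a gap of the other kind; a gap between translates turns into a gap between on-path
labels after exchanging `m` for `n - m`, that is, after exchanging the roles of `B` and `W`. -/
lemma PathData.exists_cut {V ι : Type*} [Fintype V] [Fintype ι] {G : SimpleGraph V}
    {X : ι → Finset V} {π : ι → ι} {d : ι → ℕ} {r : ι} {top : V → ι} {s : ℕ → ι} {ℓ : ℕ}
    (P : PathData G X π d r top s ℓ) {t w m : ℕ} (hwidth : ∀ i, (X i).card ≤ t)
    (hw : w = (Finset.univ.filter fun v => OnPath top s ℓ v).card) (hm : m ≤ Fintype.card V) :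
    (∃ B : Finset V, B.card = m ∧
      cutWidth3 G B (Finset.univ \ B) ∅ ≤ 2 * t * maxDeg G) ∨
    ∃ B W Z : Finset V, Disjoint B W ∧ Disjoint B Z ∧ Disjoint W Z ∧
      B ∪ W ∪ Z = Finset.univ ∧ B.card ≤ m ∧ m ≤ B.card + Z.card ∧ 0 < Z.card ∧
      2 * Z.card ≤ Fintype.card V ∧ (∃ v ∈ Z, OnPath top s ℓ v) ∧
      2 * w * Z.card ≤ Fintype.card V * (Z.filter fun v => OnPath top s ℓ v).card ∧
      ∃ k, w * 2 ^ k ≤ 2 * Fintype.card V ∧ ∃ C : Finset V, C.card ≤ (3 + k) * t ∧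
        ∀ x y, G.Adj x y → ¬ ((x ∈ B ∧ y ∈ B) ∨ (x ∈ W ∧ y ∈ W) ∨ (x ∈ Z ∧ y ∈ Z)) →
          x ∈ C ∨ y ∈ C := by
  obtain ⟨σ, L⟩ := P.exists_layout
  set n := Fintype.card V with hn
  by_cases hc : ∃ a, OnPath top s ℓ (σ a) ∧ OnPath top s ℓ (σ (a + m))
  · obtain ⟨a, ha, ham⟩ := hc
    exact Or.inl (L.exists_interval_cut hwidth hm ha ham)
  right
  push Not at hc
  have hwn : w ≤ n := by
    rw [hw, hn]
    exact Finset.card_le_univ _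
  have hw0 : 0 < w := by
    obtain ⟨v, hv⟩ := P.s_top 0 (Nat.zero_le _)
    rw [hw, Finset.card_pos]
    exact ⟨v, by simpa using ⟨0, Nat.zero_le _, hv⟩⟩
  have hper : ∀ x, OnPath top s ℓ (σ (x + n)) ↔ OnPath top s ℓ (σ x) := fun x => by rw [L.σ_per]
  rcases exists_denseRun (A := fun x => OnPath top s ℓ (σ x))
    (B := fun x => OnPath top s ℓ (σ (x + m))) L.n_pos hper
    (fun x => by rw [add_right_comm, hper]) (fun x hx => hc x hx.1 hx.2)
    ((L.count_eq 0).trans hw.symm) ((L.count_eq m).trans hw.symm) hw0 with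
    ⟨g, a, b, g', hga, hab, hbg, ha, hb, hg, hg', hgap, hdense⟩ |
    ⟨g, a, b, g', hga, hab, hbg, ha, hb, hg, hg', hgap, hdense⟩
  · refine L.exists_gap_cut hwidth (a := a) (b := b) (g := g + m) (g' := g' + m) hwn hm ha hb hg hg'
      hab (by omega) (by omega) (fun x h1 h2 => ?_) ?_
    · have : ¬ OnPath top s ℓ (σ (x - m + m)) := hgap (x - m) (by omega) (by omega)
      rwa [Nat.sub_add_cancel (by omega)] at this
    · rwa [Nat.add_sub_add_right]
  · have hfil : ((Finset.Icc a b).filter fun x => OnPath top s ℓ (σ (x + m))).card ≤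
        ((Finset.Icc (a + m) (b + m)).filter fun x => OnPath top s ℓ (σ x)).card := by
      refine Finset.card_le_card_of_injOn (fun x => x + m) (fun x hx => ?_)
        (fun x _ y _ h => Nat.add_right_cancel h)
      rw [Finset.mem_coe, Finset.mem_filter, Finset.mem_Icc] at hx ⊢
      exact ⟨⟨Nat.add_le_add_right hx.1.1 m, Nat.add_le_add_right hx.1.2 m⟩, hx.2⟩
    obtain ⟨B, W, Z, hBW, hBZ, hWZ, huniv, h1, h2, h3, h4, h5, h6, k, h7, C, h8, h9⟩ :=
      L.exists_gap_cut hwidth (m := n - m) (a := a + m) (b := b + m) (g := g + n) (g' := g' + n)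
        hwn (by omega) ha hb ((hper g).2 hg) ((hper g').2 hg') (by omega) (by omega) (by omega)
        (fun x h1 h2 => by
          have : ¬ OnPath top s ℓ (σ (x - n)) := hgap (x - n) (by omega) (by omega)
          rwa [← hper, Nat.sub_add_cancel (by omega)] at this)
        (by
          rw [Nat.add_sub_add_right, Nat.add_sub_add_right]
          exact hdense.trans (Nat.mul_le_mul_left _ hfil))
    have hcard : B.card + W.card + Z.card = n := by
      rw [← Finset.card_union_of_disjoint hBW,
        ← Finset.card_union_of_disjoint (Finset.disjoint_union_left.2 ⟨hBZ, hWZ⟩), huniv,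
        Finset.card_univ]
    refine ⟨W, B, Z, hBW.symm, hWZ, hBZ, by rw [Finset.union_comm W B, huniv], by omega, by omega,
      h3, h4, h5, h6, k, h7, C, h8, fun x y hxy hne => h9 x y hxy fun hcon => hne ?_⟩
    exact or_left_comm.1 hcon

/-- A nonredundant path gives path data: each cluster of the path contains a vertex that does not
occur closer to the root. -/
lemma IsTreeDecomp.exists_pathData {V ι : Type*} [Fintype ι] {G : SimpleGraph V}
    {T : SimpleGraph ι} {X : ι → Finset V} (hTD : IsTreeDecomp G T X) {i₀ j₀ : ι}
    (p : T.Walk i₀ j₀) (hp : p.IsPath) (h0 : X i₀ ≠ ∅)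
    (hchain : List.IsChain (fun a b => ¬ X b ⊆ X a) p.support) :
    ∃ π top, PathData G X π (T.dist i₀) i₀ top p.getVert p.length := by
  obtain ⟨π, top, H, hπ⟩ := hTD.exists_rooted i₀
  have hinj : ∀ i j, i ≤ p.length → j ≤ p.length → p.getVert i = p.getVert j → i = j :=
    fun i j hi hj h => hp.getVert_injOn hi hj h
  have hne : ∀ k < p.length, p.getVert (k + 1) ≠ i₀ := by
    intro k hk h
    have := hinj (k + 1) 0 hk (Nat.zero_le _) (by rw [h, SimpleGraph.Walk.getVert_zero])
    omega
  have hpar : ∀ k < p.length, π (p.getVert (k + 1)) = p.getVert k := by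
    intro k hk
    obtain ⟨q, hq⟩ := hTD.isTree.connected.exists_walk_length_eq_dist i₀ (π (p.getVert (k + 1)))
    have hadj := hπ _ (hne k hk)
    have hlt := H.par_lt _ (hne k hk)
    have hpath : (q.concat hadj).IsPath := by
      refine SimpleGraph.Walk.isPath_of_length_eq_dist _ (le_antisymm ?_ (SimpleGraph.dist_le _))
      rw [SimpleGraph.Walk.length_concat, hq]
      exact hlt
    have heq : (⟨q.concat hadj, hpath⟩ : T.Path _ _) = ⟨p.take (k + 1), hp.take _⟩ :=
      (hTD.isTree.isAcyclic.subsingleton_path _ _).elim _ _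
    have hpen := congrArg SimpleGraph.Walk.penultimate
      (show q.concat hadj = p.take (k + 1) from congrArg Subtype.val heq)
    rw [SimpleGraph.Walk.penultimate_concat] at hpen
    rw [hpen, SimpleGraph.Walk.penultimate, SimpleGraph.Walk.take_getVert,
      SimpleGraph.Walk.take_length]
    congr 1
    omega
  refine ⟨π, top, { H with
    s_zero := SimpleGraph.Walk.getVert_zero p
    s_par := hpar
    s_ne := hne
    s_top := ?_ }⟩
  intro k hk
  rcases k with _ | k
  · obtain ⟨x, hx⟩ := Finset.nonempty_iff_ne_empty.2 h0
    refine ⟨x, ?_⟩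
    rw [SimpleGraph.Walk.getVert_zero]
    by_contra hc
    exact (H.mem_par x i₀ hx (Ne.symm hc)).1 rfl
  · have hlen : k + 1 < p.support.length := by
      rw [SimpleGraph.Walk.length_support]; omega
    have h1 := List.isChain_iff_getElem.1 hchain k hlen
    rw [SimpleGraph.Walk.support_getElem_eq_getVert, SimpleGraph.Walk.support_getElem_eq_getVert,
      Finset.not_subset] at h1
    obtain ⟨x, hx, hx'⟩ := h1
    refine ⟨x, ?_⟩
    by_contra hc
    have := (H.mem_par x _ hx (Ne.symm hc)).2
    rw [hpar k (by omega)] at this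
    exact hx' this

lemma PathData.walkWeight_eq {V ι : Type*} [Fintype V] {G : SimpleGraph V} {T : SimpleGraph ι}
    {X : ι → Finset V} {π : ι → ι} {d : ι → ℕ} {r : ι} {top : V → ι} {i₀ j₀ : ι}
    {p : T.Walk i₀ j₀} (P : PathData G X π d r top p.getVert p.length) :
    walkWeight X p = (Finset.univ.filter fun v => OnPath top p.getVert p.length v).card := by
  unfold walkWeight
  congr 1
  ext v
  simp only [Finset.mem_biUnion, List.mem_toFinset, Finset.mem_filter, Finset.mem_univ, true_and]
  constructor
  · rintro ⟨i, hi, hv⟩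
    obtain ⟨k, rfl, hk⟩ := SimpleGraph.Walk.mem_support_iff_exists_getVert.1 hi
    exact P.onPath_of_mem hk hv
  · rintro ⟨k, hk, hv⟩
    exact ⟨p.getVert k, p.getVert_mem_support k, hv ▸ P.mem_top v⟩

end MinBisection

/-- For every graph `G` on `n` vertices, every tree decomposition `(T, X)`
of `G` of width at most `t - 1`, every nonredundant path `P ⊆ T`, and every integer
`1 ≤ m ≤ n`, there is a cut `(B, W, Z)` in `G` such that either
(1) `|B| = m`, `Z = ∅`, `e_G(B,W,Z) ≤ 2 t Δ(G)`, or
(2) `|B| ≤ m ≤ |B| + |Z|`, `0 < |Z| ≤ n/2`, `e_G(B,W,Z) ≤ t Δ(G) log₂(16/w*(P,X))`, and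
there are a tree decomposition `(T', X')` of `G[Z]` of width at most `t - 1` and a
nonredundant path `P' ⊆ T'` with `w*(P',X') ≥ 2 w*(P,X)`. -/
theorem MinBisection.double_relative_weight {V ι : Type*} [Fintype V] [Fintype ι]
    (G : SimpleGraph V) (T : SimpleGraph ι) (X : ι → Finset V) (t : ℕ)
    (hTD : IsTreeDecomp G T X) (hwidth : ∀ i, (X i).card ≤ t)
    {i₀ j₀ : ι} (p : T.Walk i₀ j₀) (hp : p.IsPath) (hnr : NonredundantPath X p)
    (m : ℕ) (hm1 : 1 ≤ m) (hmn : m ≤ Fintype.card V) :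
    ∃ B W Z : Finset V, Disjoint B W ∧ Disjoint B Z ∧ Disjoint W Z ∧
      B ∪ W ∪ Z = Finset.univ ∧
      ((B.card = m ∧ Z = ∅ ∧ cutWidth3 G B W Z ≤ 2 * t * maxDeg G) ∨
       (B.card ≤ m ∧ m ≤ B.card + Z.card ∧ 0 < Z.card ∧
        (Z.card : ℝ) ≤ (Fintype.card V : ℝ) / 2 ∧
        (cutWidth3 G B W Z : ℝ) ≤
          t * maxDeg G *
            Real.logb 2 (16 / ((walkWeight X p : ℝ) / (Fintype.card V : ℝ))) ∧
        ∃ (k : ℕ) (T' : SimpleGraph (Fin k)) (X' : Fin k → Finset (Z : Set V)),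
          IsTreeDecomp (G.induce (Z : Set V)) T' X' ∧ (∀ a, (X' a).card ≤ t) ∧
          ∃ (a b : Fin k) (q : T'.Walk a b), q.IsPath ∧ NonredundantPath X' q ∧
            2 * ((walkWeight X p : ℝ) / (Fintype.card V : ℝ)) ≤
              (walkWeight X' q : ℝ) / (Fintype.card (Z : Set V) : ℝ))) := by
  -- It suffices to treat a path starting at a nonredundant end.
  have main : ∀ {i j : ι} (p : T.Walk i j), p.IsPath → X i ≠ ∅ →
      List.IsChain (fun a b => ¬ X b ⊆ X a) p.support →
      ∃ B W Z : Finset V, Disjoint B W ∧ Disjoint B Z ∧ Disjoint W Z ∧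
        B ∪ W ∪ Z = Finset.univ ∧
        ((B.card = m ∧ Z = ∅ ∧ cutWidth3 G B W Z ≤ 2 * t * maxDeg G) ∨
         (B.card ≤ m ∧ m ≤ B.card + Z.card ∧ 0 < Z.card ∧
          (Z.card : ℝ) ≤ (Fintype.card V : ℝ) / 2 ∧
          (cutWidth3 G B W Z : ℝ) ≤
            t * maxDeg G *
              Real.logb 2 (16 / ((walkWeight X p : ℝ) / (Fintype.card V : ℝ))) ∧
          ∃ (k : ℕ) (T' : SimpleGraph (Fin k)) (X' : Fin k → Finset (Z : Set V)),
            IsTreeDecomp (G.induce (Z : Set V)) T' X' ∧ (∀ a, (X' a).card ≤ t) ∧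
            ∃ (a b : Fin k) (q : T'.Walk a b), q.IsPath ∧ NonredundantPath X' q ∧
              2 * ((walkWeight X p : ℝ) / (Fintype.card V : ℝ)) ≤
                (walkWeight X' q : ℝ) / (Fintype.card (Z : Set V) : ℝ))) := by
    intro i j p hp h0 hchain
    obtain ⟨π, top, P⟩ := hTD.exists_pathData p hp h0 hchain
    have hn : (0 : ℝ) < Fintype.card V := by exact_mod_cast (by omega : 0 < Fintype.card V)
    have hw : 0 < walkWeight X p := by
      obtain ⟨v, hv⟩ := P.s_top 0 (Nat.zero_le _)
      rw [P.walkWeight_eq, Finset.card_pos]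
      exact ⟨v, by simpa using ⟨0, Nat.zero_le _, hv⟩⟩
    rcases P.exists_cut hwidth P.walkWeight_eq hmn with ⟨B, hB, hcut⟩ |
      ⟨B, W, Z, hBW, hBZ, hWZ, huniv, h1, h2, h3, h4, h5, h6, k, h7, C, h8, h9⟩
    · exact ⟨B, Finset.univ \ B, ∅, Finset.disjoint_sdiff, Finset.disjoint_empty_right _,
        Finset.disjoint_empty_right _, by simp, Or.inl ⟨hB, rfl, hcut⟩⟩
    · obtain ⟨κ, T', X', hT', hX', a, b, q, hq, hnq, hwq⟩ := P.exists_restrict_fin hwidth Z h5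
      have hw' : (0 : ℝ) < walkWeight X p := by exact_mod_cast hw
      refine ⟨B, W, Z, hBW, hBZ, hWZ, huniv, Or.inr ⟨h1, h2, h3, ?_, ?_,
        κ, T', X', hT', hX', a, b, q, hq, hnq, ?_⟩⟩
      · rw [le_div_iff₀ two_pos, mul_comm]
        exact_mod_cast h4
      · have hcut : (cutWidth3 G B W Z : ℝ) ≤ ((3 + k) * t * maxDeg G : ℝ) := by
          exact_mod_cast (cutWidth3_le C h9).trans (Nat.mul_le_mul_right _ h8)
        have hlog : ((3 + k : ℕ) : ℝ) ≤
            Real.logb 2 (16 / ((walkWeight X p : ℝ) / (Fintype.card V : ℝ))) := by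
          rw [Real.le_logb_iff_rpow_le one_lt_two (by positivity), Real.rpow_natCast, pow_add,
            div_div_eq_mul_div, le_div_iff₀ hw']
          have : (walkWeight X p : ℝ) * 2 ^ k ≤ 2 * Fintype.card V := by exact_mod_cast h7
          linarith
        push_cast at hlog
        calc (cutWidth3 G B W Z : ℝ) ≤ (3 + k) * t * maxDeg G := hcut
          _ = t * maxDeg G * (3 + k) := by ring
          _ ≤ _ := by gcongr
      · have hZ : (Fintype.card (Z : Set V) : ℝ) = Z.card := by simp
        have hZ0 : (0 : ℝ) < Z.card := by exact_mod_cast h3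
        rw [hZ, ← mul_div_assoc, div_le_div_iff₀ hn hZ0, mul_comm (walkWeight X' q : ℝ)]
        exact_mod_cast h6.trans (Nat.mul_le_mul_left _ hwq)
  rcases hnr with ⟨h0, hchain⟩ | ⟨h0, hchain⟩
  · exact main p hp h0 hchain
  · have hrev : walkWeight X p.reverse = walkWeight X p := by
      unfold walkWeight
      rw [SimpleGraph.Walk.support_reverse, List.toFinset_reverse]
    have := main p.reverse hp.reverse h0 hchain
    rwa [hrev] at this
end

section
/- Every tree T on n vertices satisfies MinBis(T) ≤ (Δ(T)/2)·((log₂(1/diam*(T)))² + 7·log₂(1/diam*(T)) + 6), where Δ(T) is the maximum degree of T. -/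
/-!
Write `n` for the number of vertices, `D` for the maximum degree and `L = log₂ (1 / diam*)`. The
bound is `D * widthBound L` with `widthBound L = (L² + 7 L + 6) / 2`.

Deleting the edges of a longest path, with `k` vertices, splits the tree into `k` blocks, each
rooted at a path vertex. They are arranged in a cycle, giving a `Necklace`; then
`L = log₂ (n / k)`. Laying the blocks out as intervals on the integer line, periodically with
period `n`, gives cut points `s i` (`PeriodicCuts`).
`Necklace.exists_cut` shows by induction on the number of vertices that a necklace has, for every
`m`, a set of exactly `m` vertices with at most `D * widthBound L` boundary edges.

* If some cut point shifted by `m` is again a cut point, an arc of full blocks does, and at most two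
  root edges leave it. Otherwise `n ≥ 2 k` (`PeriodicCuts.two_mul_le`), so `L ≥ 1`.
* If a cut point shifted by `m` or `-m` falls inside a block of size at most `32 n / k`, that block
  is cut exactly at cost `(L + 5) D` (`exists_exact_cut`) and completed by an arc of full blocks.
* Otherwise the averaging argument `PeriodicCuts.trichotomy_aux` provides an arc of blocks, with
  `J` vertices in total, whose shifted copy lies inside one block of size `I`, and whose density of
  blocks is large compared with the overall density `k / n`. The large block is cut approximately,
  with an error of at most `J` and at a cost of about `D log₂ (I / J)` (`exists_approx_cut`). The
  error is corrected inside the arc, which is itself a necklace (`Necklace.sub`) to which the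
  induction hypothesis applies. The higher density pays for the cut (`widthBound_step`).

The case `-m` is reduced to `n - m` by periodicity, and from there to `m` by taking complements;
`Necklace.assemble` counts the boundary edges of the composed sets. Trees with `D ≤ 1`, which have
at most two vertices, are treated directly.
-/

open scoped Classical

namespace MinBisection

noncomputable section

/-! ### Cutting vertex sets in forests -/

section Forest
variable {V : Type*}

/-- The number of edges between `S` and `T`, counted as ordered pairs in `S × T`. -/
def crossCard (G : SimpleGraph V) (S T : Finset V) : ℕ :=
  ((S ×ˢ T).filter fun e => G.Adj e.1 e.2).card

/-- The part of `G` inside the vertex set `W`. -/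
def inside (G : SimpleGraph V) (W : Finset V) : SimpleGraph V where
  Adj a b := G.Adj a b ∧ a ∈ W ∧ b ∈ W
  symm := ⟨fun _ _ h => ⟨h.1.symm, h.2.2, h.2.1⟩⟩
  loopless := ⟨fun _ h => G.loopless.irrefl _ h.1⟩

lemma inside_support {G : SimpleGraph V} {W : Finset V} {a b : V} (p : (inside G W).Walk a b)
    (ha : a ∈ W) : ∀ x ∈ p.support, x ∈ W := by
  induction p with
  | nil => simpa using ha
  | cons h p ih =>
    intro x hx
    rw [SimpleGraph.Walk.support_cons, List.mem_cons] at hx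
    rcases hx with rfl | hx
    · exact ha
    · exact ih h.2.2 x hx

/-- In a forest, let `u ∉ W` and `y ∈ W`. The component `Y` of `y` in the graph induced on `W`
sends at most one edge to `u`, since two such edges would close a cycle. -/
lemma exists_branch {G : SimpleGraph V} (hG : G.IsAcyclic) (W : Finset V) {u y : V}
    (hu : u ∉ W) (hy : y ∈ W) :
    ∃ Y ⊆ W, y ∈ Y ∧ (∀ x ∈ Y, ∀ z ∈ W, G.Adj x z → z ∈ Y) ∧
      ∃ z₀ ∈ Y, ∀ x ∈ Y, G.Adj x u → x = z₀ := by
  refine ⟨W.filter fun x => (inside G W).Reachable y x, Finset.filter_subset _ _, ?_, ?_, ?_⟩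
  · simp [hy]
  · intro x hx z hz h
    rw [Finset.mem_filter] at hx ⊢
    exact ⟨hz, hx.2.trans (SimpleGraph.Adj.reachable (G := inside G W) ⟨h, hx.1, hz⟩)⟩
  · have huniq : ∀ a ∈ W, ∀ b ∈ W, (inside G W).Reachable y a → (inside G W).Reachable y b →
        G.Adj a u → G.Adj b u → a = b := by
      intro a ha b hb hya hyb hau hbu
      by_contra hne
      obtain ⟨p, hp⟩ := (hya.symm.trans hyb).exists_isPath
      have hle : inside G W ≤ G := fun _ _ h => h.1
      have hsup := inside_support p ha
      let P₁ : G.Path a b := ⟨p.mapLe hle, (SimpleGraph.Walk.isPath_mapLe hle).2 hp⟩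
      let q : G.Walk a b := .cons hau (.cons hbu.symm .nil)
      have hq : q.IsPath := by
        simp only [q, SimpleGraph.Walk.cons_isPath_iff]
        simp [hne, hau.ne, hbu.ne.symm]
      let P₂ : G.Path a b := ⟨q, hq⟩
      have h12 : P₁ = P₂ := (hG.subsingleton_path a b).elim P₁ P₂
      have : u ∈ (P₁ : G.Walk a b).support := by rw [h12]; simp [P₂, q]
      simp only [P₁, SimpleGraph.Walk.support_mapLe_eq_support] at this
      exact hu (hsup u this)
    by_cases hex : ∃ a ∈ W, (inside G W).Reachable y a ∧ G.Adj a u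
    · obtain ⟨a, ha, hya, hau⟩ := hex
      refine ⟨a, by simp [ha, hya], fun x hx hxu => ?_⟩
      rw [Finset.mem_filter] at hx
      exact huniq x hx.1 a ha hx.2 hya hxu hau
    · refine ⟨y, by simp [hy], fun x hx hxu => ?_⟩
      rw [Finset.mem_filter] at hx
      exact absurd ⟨x, hx.1, hx.2, hxu⟩ hex

lemma crossCard_comm (G : SimpleGraph V) (S T : Finset V) :
    crossCard G S T = crossCard G T S := by
  unfold crossCard
  refine Finset.card_bij' (fun e _ => e.swap) (fun e _ => e.swap) ?_ ?_ ?_ ?_ <;>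
    simp +contextual [G.adj_comm]

lemma crossCard_union_le (G : SimpleGraph V) {S₁ S₂ T : Finset V} :
    crossCard G (S₁ ∪ S₂) (T \ (S₁ ∪ S₂)) ≤
      crossCard G S₁ (T \ S₁) + crossCard G S₂ ((T \ S₁) \ S₂) := by
  unfold crossCard
  refine le_trans (Finset.card_le_card ?_) (Finset.card_union_le _ _)
  rintro ⟨x, y⟩ h
  simp only [Finset.mem_union, Finset.mem_filter, Finset.mem_product, Finset.mem_sdiff] at h ⊢
  tauto

variable [Fintype V]

/-- If a single vertex of `S` meets all edges between `S` and `T`, there are at most `D` of them. -/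
lemma crossCard_le_of_left {G : SimpleGraph V} {D : ℕ}
    (hD : ∀ v, (Finset.univ.filter (G.Adj v)).card ≤ D) {S T : Finset V} {u : V}
    (h : ∀ x ∈ S, ∀ y ∈ T, G.Adj x y → x = u) : crossCard G S T ≤ D := by
  refine le_trans ?_ (hD u)
  refine Finset.card_le_card_of_injOn Prod.snd ?_ ?_
  · rintro ⟨x, y⟩ hxy
    simp only [Finset.coe_filter, Finset.mem_product, Set.mem_ofPred_eq] at hxy
    have := h x hxy.1.1 y hxy.1.2 hxy.2
    subst this
    simp [hxy.2]
  · rintro ⟨x, y⟩ hxy ⟨x', y'⟩ hxy' (e : y = y')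
    simp only [Finset.coe_filter, Finset.mem_product, Set.mem_ofPred_eq] at hxy hxy'
    rw [h x hxy.1.1 y hxy.1.2 hxy.2, h x' hxy'.1.1 y' hxy'.1.2 hxy'.2, e]

lemma crossCard_le_of_right {G : SimpleGraph V} {D : ℕ}
    (hD : ∀ v, (Finset.univ.filter (G.Adj v)).card ≤ D) {S T : Finset V} {u : V}
    (h : ∀ x ∈ S, ∀ y ∈ T, G.Adj x y → y = u) : crossCard G S T ≤ D := by
  rw [crossCard_comm]
  exact crossCard_le_of_left hD fun x hx y hy hxy => h y hy x hx hxy.symm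

/-- A subset `S` of `T` with `t / 2 ≤ |S| ≤ t` can be cut off at the cost of one vertex degree. Let
`X` be a smallest set with at least `t` vertices all of whose edges to the rest of `T` start at a
single vertex `u ∈ X`. If `|X| > t`, every component of `X \ {u}` has fewer than `t` vertices, so
a suitable union `S` of such components works, all of its edges to `T \ S` ending in `u`. -/
lemma exists_half_cut {G : SimpleGraph V} (hG : G.IsAcyclic) {D : ℕ}
    (hD : ∀ v, (Finset.univ.filter (G.Adj v)).card ≤ D) (T : Finset V) (t : ℕ)
    (ht : t ≤ T.card) :
    ∃ S ⊆ T, S.card ≤ t ∧ t ≤ 2 * S.card ∧ crossCard G S (T \ S) ≤ D := by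
  rcases Nat.eq_zero_or_pos t with rfl | htpos
  · exact ⟨∅, by simp, by simp, by simp, by simp [crossCard]⟩
  obtain ⟨v₀, hv₀⟩ : T.Nonempty := Finset.card_pos.1 (htpos.trans_le ht)
  -- the sets of size at least `t` attached to the rest of `T` at a single vertex
  let F := T.powerset.filter fun X =>
    t ≤ X.card ∧ ∃ u ∈ X, ∀ x ∈ X, ∀ y ∈ T \ X, G.Adj x y → x = u
  have hF : F.Nonempty := ⟨T, by
    simpa [F, ht] using ⟨v₀, hv₀, fun x _ y h₁ h₂ => absurd h₁ h₂⟩⟩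
  obtain ⟨X, hXF, hmin⟩ := Finset.exists_min_image F Finset.card hF
  simp only [F, Finset.mem_filter, Finset.mem_powerset] at hXF hmin
  obtain ⟨hXT, htX, u, huX, hu⟩ := hXF
  rcases htX.eq_or_lt with heq | hlt
  · exact ⟨X, hXT, heq.ge, by omega, crossCard_le_of_left hD hu⟩
  let W := X.erase u
  have hWc : W.card = X.card - 1 := Finset.card_erase_of_mem huX
  have huW : u ∉ W := Finset.notMem_erase u X
  have hWX : W ⊆ X := Finset.erase_subset u X
  -- unions of components of `W`
  let C := W.powerset.filter fun S =>
    S.card ≤ t ∧ ∀ x ∈ S, ∀ z ∈ W, G.Adj x z → z ∈ S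
  have hC : C.Nonempty := ⟨∅, by simp [C]⟩
  obtain ⟨S, hSC, hmax⟩ := Finset.exists_max_image C Finset.card hC
  simp only [C, Finset.mem_filter, Finset.mem_powerset] at hSC hmax
  obtain ⟨hSW, hSt, hScl⟩ := hSC
  have hST : S ⊆ T := hSW.trans (hWX.trans hXT)
  refine ⟨S, hST, hSt, ?_, ?_⟩
  · by_contra hsmall
    obtain ⟨y, hyW, hyS⟩ : ∃ y ∈ W, y ∉ S := by
      apply Finset.exists_mem_notMem_of_card_lt_card
      omega
    obtain ⟨Y, hYW, hyY, hYcl, z₀, hz₀Y, hz₀⟩ := exists_branch hG W huW hyW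
    have hYt : Y.card < t := by
      by_contra hge
      have h1 : X.card ≤ Y.card := by
        refine hmin Y ⟨hYW.trans (hWX.trans hXT), by omega, z₀, hz₀Y, ?_⟩
        intro x hx y' hy' hxy
        rw [Finset.mem_sdiff] at hy'
        by_cases hyX : y' ∈ X
        · by_cases hyu : y' = u
          · subst hyu; exact hz₀ x hx hxy
          · exact absurd (hYcl x hx y' (Finset.mem_erase.2 ⟨hyu, hyX⟩) hxy) hy'.2
        · have := hu x (hWX (hYW hx)) y' (by simp [hy'.1, hyX]) hxy
          exact absurd (hYW hx) (this ▸ huW)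
      have h2 := Finset.card_le_card hYW
      have := Finset.card_pos.2 ⟨u, huX⟩
      omega
    by_cases hle : (S ∪ Y).card ≤ t
    · have := hmax (S ∪ Y) ⟨Finset.union_subset hSW hYW, hle, by
          intro a ha z hz haz
          rcases Finset.mem_union.1 ha with h | h
          · exact Finset.mem_union_left _ (hScl a h z hz haz)
          · exact Finset.mem_union_right _ (hYcl a h z hz haz)⟩
      have hlt' : S.card < (S ∪ Y).card := Finset.card_lt_card
          ⟨Finset.subset_union_left, fun h => hyS (h (Finset.mem_union_right _ hyY))⟩
      omega
    · have h3 := hmax Y ⟨hYW, hYt.le, hYcl⟩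
      have := Finset.card_union_le S Y
      omega
  · refine crossCard_le_of_right hD (u := u) ?_
    intro x hx y hy hxy
    rw [Finset.mem_sdiff] at hy
    by_cases hyX : y ∈ X
    · by_contra hyu
      exact hy.2 (hScl x hx y (Finset.mem_erase.2 ⟨hyu, hyX⟩) hxy)
    · have := hu x (hWX (hSW hx)) y (by simp [hy.1, hyX]) hxy
      exact absurd (hSW hx) (this ▸ huW)

/-- Iterating `exists_half_cut` on the remainder halves the error `j` times. -/
lemma exists_approx_cut {G : SimpleGraph V} (hG : G.IsAcyclic) {D : ℕ}
    (hD : ∀ v, (Finset.univ.filter (G.Adj v)).card ≤ D) (T : Finset V) (t : ℕ)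
    (ht : t ≤ T.card) (j : ℕ) :
    ∃ S ⊆ T, S.card ≤ t ∧ (t - S.card) * 2 ^ j ≤ t ∧ crossCard G S (T \ S) ≤ j * D := by
  induction j with
  | zero => exact ⟨∅, by simp, by simp, by simp, by simp [crossCard]⟩
  | succ j ih =>
    obtain ⟨S₁, hS₁T, h1, h2, h3⟩ := ih
    obtain ⟨S₂, hS₂T, g1, g2, g3⟩ := exists_half_cut hG hD (T \ S₁) (t - S₁.card) (by
      rw [Finset.card_sdiff_of_subset hS₁T]; omega)
    have hcard : (S₁ ∪ S₂).card = S₁.card + S₂.card :=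
      Finset.card_union_of_disjoint
        (Finset.disjoint_left.2 fun x hx hx' => (Finset.mem_sdiff.1 (hS₂T hx')).2 hx)
    refine ⟨S₁ ∪ S₂, Finset.union_subset hS₁T (hS₂T.trans Finset.sdiff_subset), ?_, ?_, ?_⟩
    · omega
    · calc (t - (S₁ ∪ S₂).card) * 2 ^ (j + 1) = ((t - (S₁ ∪ S₂).card) * 2) * 2 ^ j := by ring
        _ ≤ (t - S₁.card) * 2 ^ j := Nat.mul_le_mul_right _ (by omega)
        _ ≤ t := h2
    · calc _ ≤ _ := crossCard_union_le G
        _ ≤ j * D + D := add_le_add h3 g3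
        _ = (j + 1) * D := by ring

/-- Every size can be met exactly at logarithmic cost; passing to the complement, at most half of
`T` has to be cut off, which saves one round. -/
lemma exists_exact_cut {G : SimpleGraph V} (hG : G.IsAcyclic) {D : ℕ}
    (hD : ∀ v, (Finset.univ.filter (G.Adj v)).card ≤ D) (T : Finset V) (t : ℕ)
    (ht : t ≤ T.card) :
    ∃ S ⊆ T, S.card = t ∧ crossCard G S (T \ S) ≤ Nat.log 2 T.card * D := by
  have key : ∀ t', 2 * t' ≤ T.card → ∃ S ⊆ T, S.card = t' ∧
      crossCard G S (T \ S) ≤ Nat.log 2 T.card * D := by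
    intro t' h
    obtain ⟨S, hS, h1, h2, h3⟩ := exists_approx_cut hG hD T t' (by omega) (Nat.log 2 T.card)
    refine ⟨S, hS, ?_, h3⟩
    have h4 : T.card < 2 ^ (Nat.log 2 T.card + 1) := Nat.lt_pow_succ_log_self (by norm_num) _
    rw [pow_succ] at h4
    by_contra hne
    have h5 : 1 * 2 ^ Nat.log 2 T.card ≤ (t' - S.card) * 2 ^ Nat.log 2 T.card :=
      Nat.mul_le_mul_right _ (by omega)
    omega
  by_cases h : 2 * t ≤ T.card
  · exact key t h
  · obtain ⟨S, hS, h1, h2⟩ := key (T.card - t) (by omega)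
    refine ⟨T \ S, Finset.sdiff_subset, ?_, ?_⟩
    · rw [Finset.card_sdiff_of_subset hS]; omega
    · rw [Finset.sdiff_sdiff_eq_self hS, crossCard_comm]; exact h2

end Forest

/-! ### Periodic cut points on the integer line -/

section Numeric

/-- Partial sums along the integers, extended to negative indices. -/
lemma exists_primitive (g : ℤ → ℤ) : ∃ f : ℤ → ℤ, ∀ i, f (i + 1) = f i + g i := by
  refine ⟨fun i => ∑ l ∈ Finset.Ico 0 i, g l - ∑ l ∈ Finset.Ico i 0, g l, fun i => ?_⟩
  beta_reduce
  rcases lt_or_ge i 0 with h | h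
  · rw [Finset.Ico_eq_empty (by omega : ¬ (0 : ℤ) < i + 1),
      Finset.Ico_eq_empty (by omega : ¬ (0 : ℤ) < i)]
    have : Finset.Ico i 0 = insert i (Finset.Ico (i + 1) 0) := by
      ext x; simp only [Finset.mem_insert, Finset.mem_Ico]; omega
    rw [this, Finset.sum_insert (by simp)]
    simp
  · rw [Finset.Ico_eq_empty (by omega : ¬ i + 1 < 0), Finset.Ico_eq_empty (by omega : ¬ i < 0)]
    have : Finset.Ico 0 (i + 1) = insert i (Finset.Ico 0 i) := by
      ext x; simp only [Finset.mem_insert, Finset.mem_Ico]; omega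
    rw [this, Finset.sum_insert (by simp)]
    simp [add_comm]

lemma shift_const {f : ℤ → ℤ} {k c : ℤ}
    (h : ∀ i, f (i + 1 + k) - f (i + 1) = f (i + k) - f i) (h0 : f k - f 0 = c) (i : ℤ) :
    f (i + k) = f i + c := by
  have key : f (i + k) - f i = c := by
    induction i using Int.induction_on with
    | zero => simpa using h0
    | succ i ih => rw [h, ih]
    | pred i ih =>
      have := h (-(i : ℤ) - 1)
      rw [sub_add_cancel] at this
      omega
  omega

lemma primitive_shift {f g : ℤ → ℤ} {k : ℕ} (hf : ∀ i, f (i + 1) = f i + g i)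
    (hg : ∀ i, g (i + k) = g i) (i : ℤ) :
    f (i + k) = f i + ∑ c ∈ Finset.range k, g c := by
  refine shift_const (fun i => ?_) ?_ i
  · have e : i + 1 + (k : ℤ) = i + k + 1 := by ring
    rw [e, hf, hf, hg]; ring
  · rw [← sub_eq_zero]
    have := Finset.sum_range_sub (fun c : ℕ => f c) k
    rw [← Nat.cast_zero, ← this, ← Finset.sum_sub_distrib]
    refine Finset.sum_eq_zero fun c _ => ?_
    push_cast
    rw [hf]; ring

/-- `s` lists the left ends of consecutive intervals on the integer line, which is periodic:
`k` intervals make up one period of length `n`. -/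
structure PeriodicCuts (s : ℤ → ℤ) (k : ℕ) (n : ℤ) : Prop where
  pos : 0 < k
  lt : ∀ i, s i < s (i + 1)
  shift : ∀ i, s (i + k) = s i + n

namespace PeriodicCuts
variable {s : ℤ → ℤ} {k : ℕ} {n : ℤ} (hs : PeriodicCuts s k n)
include hs

lemma strictMono : StrictMono s := strictMono_int_of_lt_succ hs.lt

lemma sub_le {i j : ℤ} (h : i ≤ j) : j - i ≤ s j - s i := by
  induction j, h using Int.leInduction with
  | base => simp
  | succ j h ih => have := hs.lt j; omega

lemma exists_ge (t : ℤ) : ∃ p, s (p - 1) < t ∧ t ≤ s p := by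
  obtain ⟨p, hp, hmin⟩ := Int.exists_least_of_bdd (P := fun p => t ≤ s p)
    ⟨-|t - s 0|, fun z hz => by
      by_contra hlt
      have h0 := abs_nonneg (t - s 0)
      have := hs.sub_le (i := z) (j := 0) (by omega)
      have := neg_abs_le (t - s 0)
      omega⟩
    ⟨|t - s 0|, by
      have h0 := abs_nonneg (t - s 0)
      have := hs.sub_le (i := 0) (j := |t - s 0|) h0
      have := le_abs_self (t - s 0)
      omega⟩
  refine ⟨p, ?_, hp⟩
  by_contra h
  have := hmin (p - 1) (by omega)
  omega

lemma weight_sum : ∑ c ∈ Finset.range k, (s (c + 1) - s c) = n := by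
  have := Finset.sum_range_sub (fun c : ℕ => s c) k
  push_cast at this
  rw [this]
  have := hs.shift 0
  rw [zero_add] at this
  omega

/-- The interval with index `c` contains a left end shifted by `μ` in its interior. -/
def Hit (s : ℤ → ℤ) (μ c : ℤ) : Prop := ∃ x, s c < s x + μ ∧ s x + μ < s (c + 1)

omit hs in
/-- The total length, over one period, of the intervals which are hit. -/
def hitLength (s : ℤ → ℤ) (k : ℕ) (μ : ℤ) : ℤ :=
  ∑ c ∈ Finset.range k, if Hit s μ c then s (c + 1) - s c else 0

lemma hit_shift (μ c : ℤ) : Hit s μ (c + k) ↔ Hit s μ c := by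
  have e : c + (k : ℤ) + 1 = c + 1 + k := by ring
  constructor
  · rintro ⟨x, h1, h2⟩
    refine ⟨x - k, ?_⟩
    have h3 := hs.shift (x - k)
    rw [sub_add_cancel] at h3
    rw [e, hs.shift] at h2
    rw [hs.shift] at h1
    omega
  · rintro ⟨x, h1, h2⟩
    refine ⟨x + k, ?_⟩
    rw [e, hs.shift, hs.shift, hs.shift]
    omega

/-- Chooses for each `c` the first left end `p c` which is not before `s c - μ`. -/
lemma exists_pointer (μ : ℤ) (hne : ∀ i j, s j ≠ s i + μ) :
    ∃ p : ℤ → ℤ, (∀ c, s (p c - 1) < s c - μ ∧ s c - μ < s (p c)) ∧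
      (∀ c, p c ≤ p (c + 1)) ∧ ∀ c, p (c + k) = p c + k := by
  choose p h1 h2 using fun c => hs.exists_ge (s c - μ)
  have h3 : ∀ c, s c - μ < s (p c) := fun c =>
    lt_of_le_of_ne (h2 c) fun h => hne (p c) c (by omega)
  refine ⟨p, fun c => ⟨h1 c, h3 c⟩, fun c => ?_, fun c => ?_⟩
  · by_contra h
    have := hs.strictMono.monotone (show p (c + 1) ≤ p c - 1 by omega)
    have := h1 c
    have := h3 (c + 1)
    have := hs.lt c
    omega
  · have a1 := h1 (c + k)
    have a2 := h3 (c + k)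
    rw [hs.shift] at a1 a2
    have b1 := h1 c
    have b2 := h3 c
    have c1 := hs.shift (p c)
    have c2 := hs.shift (p c - 1)
    have d1 : p (c + k) - 1 < p c + k := hs.strictMono.lt_iff_lt.1 (by omega)
    have d2 : p c - 1 + k < p (c + k) := hs.strictMono.lt_iff_lt.1 (by omega)
    omega

omit hs in
/-- Telescoping along a sequence of indices that advances by one period. -/
lemma pointer_sum {p : ℤ → ℤ} (hp : ∀ c, p (c + k) = p c + k) {f : ℤ → ℤ} {d : ℤ}
    (hf : ∀ i, f (i + k) = f i + d) :
    ∑ c ∈ Finset.range k, (f (p (c + 1)) - f (p c)) = d := by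
  have := Finset.sum_range_sub (fun c : ℕ => f (p c)) k
  push_cast at this
  rw [this]
  have h := hp 0
  rw [zero_add] at h
  rw [h, hf]
  ring

/-- If no left end is a shifted left end, then a period contains twice as many points as
intervals. -/
lemma two_mul_le (μ : ℤ) (hne : ∀ i j, s j ≠ s i + μ) : 2 * (k : ℤ) ≤ n := by
  obtain ⟨p, hp, hmono, hper⟩ := hs.exists_pointer μ hne
  have h1 := pointer_sum hper (f := id) (d := k) (fun i => rfl)
  have h2 : ∑ c ∈ Finset.range k, (id (p (c + 1)) - id (p c) + 1) ≤
      ∑ c ∈ Finset.range k, (s (c + 1) - s c) := by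
    refine Finset.sum_le_sum fun c _ => ?_
    have a1 := (hp c).2
    have a2 := (hp (c + 1)).1
    have a3 := hs.lt c
    simp only [id]
    rcases (hmono c).eq_or_lt with h | h
    · omega
    · have := hs.sub_le (show p c ≤ p (c + 1) - 1 by omega)
      omega
  rw [Finset.sum_add_distrib, h1, hs.weight_sum] at h2
  simp at h2
  omega

/-- Double counting of the intervals that lie inside a single interval of the shifted copy. -/
lemma shift_count (μ : ℤ) (hne : ∀ i j, s j ≠ s i + μ)
    (hheavy : ∀ c, Hit s μ c → 32 * n < (s (c + 1) - s c) * k)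
    (hno : ∀ j p q, p < q → s j ≤ s p + μ → s q + μ ≤ s (j + 1) →
      80 * ((q - p) * n) < 31 * (k * (3 * (s q - s p) + (s (j + 1) - s j)))) :
    (∃ h : ℤ, 32 * h ≤ k ∧
      80 * (((k : ℤ) - h) * n) < 31 * (k * (3 * (n - hitLength s k (-μ)) + n))) ∧
    n - hitLength s k (-μ) ≤ hitLength s k μ := by
  have hk : (0 : ℤ) < k := by exact_mod_cast hs.pos
  have hn : 0 < n := by
    have := hs.sub_le (show (0 : ℤ) ≤ 0 + k by omega)
    have := hs.shift 0
    omega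
  obtain ⟨p, hp, hmono, hper⟩ := hs.exists_pointer μ hne
  obtain ⟨f, hf⟩ := exists_primitive fun i => if Hit s (-μ) i then s (i + 1) - s i else 0
  have hfs : ∀ i, f (i + k) = f i + hitLength s k (-μ) := by
    refine primitive_shift hf fun i => ?_
    simp only [hs.hit_shift]
    have e : i + (k : ℤ) + 1 = i + 1 + k := by ring
    rw [e, hs.shift, hs.shift]
    split_ifs <;> ring
  have hhit : ∀ c, p c < p (c + 1) → Hit s μ c := fun c h => by
    refine ⟨p c, ?_⟩
    have a1 := (hp c).2
    have a2 := (hp (c + 1)).1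
    have := hs.strictMono.monotone (show p c ≤ p (c + 1) - 1 by omega)
    omega
  -- `J c` is the total length of the intervals inside the interval `c` of the shifted copy
  let J : ℤ → ℤ := fun c => (s (p (c + 1)) - s (p c)) - (f (p (c + 1)) - f (p c))
  have hJ0 : ∀ c, p c = p (c + 1) → J c = 0 := fun c h => by simp [J, h]
  have hJ : ∀ c, p c < p (c + 1) → J c = s (p (c + 1) - 1) - s (p c) := by
    intro c h
    have hconst : ∀ i, p c ≤ i → i ≤ p (c + 1) - 1 → f i = f (p c) := by
      intro i hi
      induction i, hi using Int.leInduction with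
      | base => simp
      | succ i hi ih =>
        intro hle
        rw [hf, ih (by omega), if_neg, add_zero]
        rintro ⟨x, h1, h2⟩
        have a1 := (hp c).2
        have a2 := (hp (c + 1)).1
        have b1 := hs.strictMono.monotone hi
        have b2 := hs.strictMono.monotone hle
        have c1 : c < x := hs.strictMono.lt_iff_lt.1 (by omega)
        have c2 : x < c + 1 := hs.strictMono.lt_iff_lt.1 (by omega)
        omega
    have h1 := hconst (p (c + 1) - 1) (by omega) le_rfl
    have h2 := hf (p (c + 1) - 1)
    rw [sub_add_cancel, if_pos ⟨c + 1, by have := hp (c + 1); omega, by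
      have := hp (c + 1); rw [sub_add_cancel]; omega⟩] at h2
    simp only [J]
    rw [h2, h1]
    ring
  have hJsum : ∑ c ∈ Finset.range k, J c = n - hitLength s k (-μ) := by
    simp only [J]
    rw [Finset.sum_sub_distrib, pointer_sum hper hs.shift, pointer_sum hper hfs]
  constructor
  -- the witness is the number of intervals in one period that are hit
  · refine ⟨∑ c ∈ Finset.range k, if Hit s μ (c : ℕ) then 1 else 0, ?_, ?_⟩
    · have : ∑ c ∈ Finset.range k, (32 * n) * (if Hit s μ (c : ℕ) then 1 else 0) ≤
          ∑ c ∈ Finset.range k, (s (c + 1) - s c) * k := by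
        refine Finset.sum_le_sum fun c _ => ?_
        split_ifs with h
        · have := hheavy c h; omega
        · have := hs.lt c
          rw [mul_zero]
          exact mul_nonneg (by omega) hk.le
      rw [← Finset.mul_sum, ← Finset.sum_mul, hs.weight_sum] at this
      refine le_of_mul_le_mul_left (a := n) ?_ hn
      linarith
    · have h1 := pointer_sum hper (f := id) (d := k) (fun i => rfl)
      have : ∑ c ∈ Finset.range k,
          (80 * n) * ((id (p (c + 1)) - id (p c)) - if Hit s μ (c : ℕ) then 1 else 0) <
          ∑ c ∈ Finset.range k, 31 * k * (3 * J c + (s (c + 1) - s c)) := by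
        refine Finset.sum_lt_sum_of_nonempty ⟨0, by simpa using hs.pos⟩ fun c _ => ?_
        have hw := hs.lt c
        have hrhs : 0 < 31 * k * (s (c + 1) - s c) := by
          apply mul_pos (by omega); omega
        simp only [id]
        rcases (hmono c).eq_or_lt with h | h
        · rw [hJ0 _ h, ← h]
          split_ifs <;> nlinarith
        · rw [if_pos (hhit c h), hJ _ h]
          rcases (show p c ≤ p (c + 1) - 1 by omega).eq_or_lt with h' | h'
          · rw [← h']
            have : p (c + 1) - p c - 1 = 0 := by omega
            rw [this]; simp only [sub_self, mul_zero, zero_add]; exact hrhs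
          · have := hno c (p c) (p (c + 1) - 1) h' (by have := hp c; omega)
              (by have := hp (c + 1); omega)
            have e : p (c + 1) - 1 - p c = p (c + 1) - p c - 1 := by ring
            rw [e] at this
            linarith
      rw [← Finset.mul_sum, ← Finset.mul_sum, Finset.sum_sub_distrib, Finset.sum_add_distrib,
        ← Finset.mul_sum, h1, hJsum, hs.weight_sum] at this
      linarith
  · rw [← hJsum]
    refine Finset.sum_le_sum fun c _ => ?_
    have hw := hs.lt c
    rcases (hmono c).eq_or_lt with h | h
    · rw [hJ0 _ h]; split_ifs <;> omega
    · rw [if_pos (hhit c h), hJ _ h]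
      have := (hp c).2
      have := (hp (c + 1)).1
      omega

/-- If no cut point is a cut point shifted by `m`, then for `μ = m` or `μ = -m` either some interval
containing a shifted cut point in its interior is short, or a run of consecutive intervals,
shifted by `μ`, lies in a single interval and is dense enough in intervals compared with the two
lengths. Indeed, otherwise `shift_count` bounds, for both signs, the number of intervals hit by
`k / 32` and the number of the remaining ones by the length they cover; as every interval not hit by
one shift is covered by intervals hit by the other, these bounds add up to a contradiction. -/
lemma trichotomy_aux (m : ℤ) (hne : ∀ i j, s j ≠ s i + m)
    (hheavy : ∀ μ, μ = m ∨ μ = -m → ∀ c, Hit s μ c → 32 * n < (s (c + 1) - s c) * k)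
    (hno : ∀ μ, μ = m ∨ μ = -m → ∀ j p q, p < q → s j ≤ s p + μ → s q + μ ≤ s (j + 1) →
      80 * ((q - p) * n) < 31 * (k * (3 * (s q - s p) + (s (j + 1) - s j)))) : False := by
  obtain ⟨⟨h₁, a₁, b₁⟩, c₁⟩ := hs.shift_count m hne (hheavy m (.inl rfl)) (hno m (.inl rfl))
  obtain ⟨⟨h₂, a₂, b₂⟩, -⟩ := hs.shift_count (-m) (fun i j h => hne j i (by omega))
    (hheavy (-m) (.inr rfl)) (hno (-m) (.inr rfl))
  rw [neg_neg] at b₂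
  have hk : (0 : ℤ) < k := by exact_mod_cast hs.pos
  have hn : 0 < n := by
    have := hs.sub_le (show (0 : ℤ) ≤ 0 + k by omega)
    have := hs.shift 0
    omega
  have e1 : 0 ≤ n * (2 * k - 32 * h₁ - 32 * h₂) := mul_nonneg hn.le (by omega)
  have e2 : 0 ≤ (k : ℤ) * (hitLength s k m + hitLength s k (-m) - n) :=
    mul_nonneg hk.le (by omega)
  nlinarith

end PeriodicCuts

end Numeric

/-! ### Cyclic block structures -/

section Necklace
variable {V : Type*}

/-- A cyclic arrangement of the vertex set `U` into `k` pairwise disjoint blocks, each with a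
root, such that all edges inside `U` lie within a block or join the roots of two consecutive
blocks. The blocks and roots are indexed periodically by the integers. -/
structure Necklace (G : SimpleGraph V) (U : Finset V) (k : ℕ) (Bl : ℤ → Finset V) (r : ℤ → V) :
    Prop where
  pos : 0 < k
  block_shift : ∀ i, Bl (i + k) = Bl i
  root_shift : ∀ i, r (i + k) = r i
  root_mem : ∀ i, r i ∈ Bl i
  disj : ∀ i j : ℤ, i < j → j < i + k → Disjoint (Bl i) (Bl j)
  mem_iff : ∀ x, x ∈ U ↔ ∃ i, x ∈ Bl i
  adj : ∀ x ∈ U, ∀ y ∈ U, G.Adj x y → (∃ i, x ∈ Bl i ∧ y ∈ Bl i) ∨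
    ∃ l, (x = r l ∧ y = r (l + 1)) ∨ (x = r (l + 1) ∧ y = r l)

/-- The union of the blocks with indices in `[p, q)`. -/
def arc (Bl : ℤ → Finset V) (p q : ℤ) : Finset V := (Finset.Ico p q).biUnion Bl

lemma mem_arc {Bl : ℤ → Finset V} {p q : ℤ} {x : V} :
    x ∈ arc Bl p q ↔ ∃ i, (p ≤ i ∧ i < q) ∧ x ∈ Bl i := by
  simp [arc]

namespace Necklace
variable {G : SimpleGraph V} {U : Finset V} {k : ℕ} {Bl : ℤ → Finset V} {r : ℤ → V}
  (N : Necklace G U k Bl r)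
include N

/-- Every index has a representative in the window `[a, a + k)`. -/
lemma window (a i : ℤ) :
    ∃ j, a ≤ j ∧ j < a + k ∧ Bl j = Bl i ∧ r j = r i ∧ r (j + 1) = r (i + 1) := by
  have hk : (0 : ℤ) < k := by exact_mod_cast N.pos
  have hB : Function.Periodic Bl (k : ℤ) := N.block_shift
  have hr : Function.Periodic r (k : ℤ) := N.root_shift
  refine ⟨i - (i - a) / k * k, ?_, ?_, hB.sub_int_mul_eq _, hr.sub_int_mul_eq _, ?_⟩
  · have := Int.ediv_mul_le (i - a) hk.ne'
    omega
  · have := Int.lt_ediv_add_one_mul_self (i - a) hk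
    rw [add_mul, one_mul] at this
    omega
  · rw [show i - (i - a) / k * k + 1 = i + 1 - (i - a) / k * k by ring]
    exact hr.sub_int_mul_eq _

lemma unique {a i j : ℤ} {x : V} (hi : a ≤ i) (hi' : i < a + k) (hj : a ≤ j) (hj' : j < a + k)
    (hx : x ∈ Bl i) (hx' : x ∈ Bl j) : i = j := by
  rcases lt_trichotomy i j with h | h | h
  · exact absurd hx' (Finset.disjoint_left.1 (N.disj i j h (by omega)) hx)
  · exact h
  · exact absurd hx (Finset.disjoint_left.1 (N.disj j i h (by omega)) hx')

lemma exists_index {x : V} (hx : x ∈ U) (a : ℤ) : ∃ i, a ≤ i ∧ i < a + k ∧ x ∈ Bl i := by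
  obtain ⟨i, hi⟩ := (N.mem_iff x).1 hx
  obtain ⟨j, h1, h2, h3, -⟩ := N.window a i
  exact ⟨j, h1, h2, h3 ▸ hi⟩

lemma block_subset (i : ℤ) : Bl i ⊆ U := fun _ hx => (N.mem_iff _).2 ⟨i, hx⟩

lemma arc_subset (p q : ℤ) : arc Bl p q ⊆ U := by
  intro x hx
  obtain ⟨i, -, h⟩ := mem_arc.1 hx
  exact N.block_subset i h

lemma arc_period (a : ℤ) : arc Bl a (a + k) = U := by
  refine (N.arc_subset _ _).antisymm fun x hx => mem_arc.2 ?_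
  obtain ⟨i, h1, h2, h3⟩ := N.exists_index hx a
  exact ⟨i, ⟨h1, h2⟩, h3⟩

lemma mem_arc_iff {p q i : ℤ} {x : V} (hq : q ≤ p + k) (hi : p ≤ i) (hi' : i < p + k)
    (hx : x ∈ Bl i) : x ∈ arc Bl p q ↔ i < q := by
  constructor
  · intro h
    obtain ⟨i', ⟨h1, h2⟩, h3⟩ := mem_arc.1 h
    rw [N.unique hi hi' h1 (by omega) hx h3]
    exact h2
  · exact fun h => mem_arc.2 ⟨i, ⟨hi, h⟩, hx⟩

lemma arc_card {s : ℤ → ℤ} (hs : ∀ i, s (i + 1) = s i + (Bl i).card) {p q : ℤ} (h : p ≤ q) :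
    q ≤ p + k → ((arc Bl p q).card : ℤ) = s q - s p := by
  induction q, h using Int.leInduction with
  | base => simp [arc]
  | succ q h ih =>
    intro hq
    have e : arc Bl p (q + 1) = arc Bl p q ∪ Bl q := by
      ext x
      simp only [Finset.mem_union, mem_arc]
      constructor
      · rintro ⟨i, ⟨h1, h2⟩, h3⟩
        rcases (show i ≤ q by omega).eq_or_lt with rfl | h4
        · exact .inr h3
        · exact .inl ⟨i, ⟨h1, h4⟩, h3⟩
      · rintro (⟨i, ⟨h1, h2⟩, h3⟩ | h3)
        · exact ⟨i, ⟨h1, by omega⟩, h3⟩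
        · exact ⟨q, ⟨h, by omega⟩, h3⟩
    rw [e, Finset.card_union_of_disjoint, hs]
    · push_cast
      rw [ih (by omega)]; ring
    · refine Finset.disjoint_left.2 fun x hx hx' => ?_
      have := (N.mem_arc_iff (by omega) h (by omega) hx').1 hx
      omega

lemma exists_cuts : ∃ s : ℤ → ℤ, (∀ i, s (i + 1) = s i + (Bl i).card) ∧
    PeriodicCuts s k U.card := by
  obtain ⟨s, hs⟩ := exists_primitive fun i => ((Bl i).card : ℤ)
  refine ⟨s, hs, N.pos, fun i => ?_, fun i => ?_⟩
  · have := Finset.card_pos.2 ⟨r i, N.root_mem i⟩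
    have := hs i
    omega
  · have := N.arc_card hs (show i ≤ i + k by omega) le_rfl
    rw [N.arc_period] at this
    omega

/-- An arc of a necklace is a necklace, after joining its ends. -/
lemma sub {p : ℤ} {k' : ℕ} (hk' : 0 < k') (hle : k' ≤ k) :
    Necklace G (arc Bl p (p + k')) k' (fun i => Bl (p + i % k')) (fun i => r (p + i % k')) := by
  have hk : (0 : ℤ) < k' := by exact_mod_cast hk'
  have h0 : ∀ i : ℤ, 0 ≤ i % k' := fun i => Int.emod_nonneg i hk.ne'
  have h1 : ∀ i : ℤ, i % k' < k' := fun i => Int.emod_lt_of_pos i hk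
  refine ⟨hk', fun i => by simp, fun i => by simp, fun i => N.root_mem _, fun i j hij hj => ?_,
    fun x => ?_, fun x hx y hy hxy => ?_⟩
  · have hne : p + i % k' ≠ p + j % k' := by
      intro h
      have h2 : (k' : ℤ) ∣ j - i := Int.ModEq.dvd (show i % k' = j % k' by omega)
      have := Int.le_of_dvd (by omega) h2
      omega
    refine Finset.disjoint_left.2 fun x hx hx' => hne ?_
    have := h0 i; have := h0 j; have := h1 i; have := h1 j
    exact N.unique (a := p) (by omega) (by omega) (by omega) (by omega) hx hx'
  · rw [mem_arc]
    constructor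
    · rintro ⟨i, ⟨h2, h3⟩, h4⟩
      refine ⟨i - p, ?_⟩
      rw [Int.emod_eq_of_lt (by omega) (by omega)]
      simpa using h4
    · rintro ⟨i, h2⟩
      have := h0 i; have := h1 i
      exact ⟨_, ⟨by omega, by omega⟩, h2⟩
  · have hroot : ∀ l, r l ∈ arc Bl p (p + k') → r (l + 1) ∈ arc Bl p (p + k') →
        ∃ l', r l = r (p + l' % k') ∧ r (l + 1) = r (p + (l' + 1) % k') := by
      intro l hl hl1
      obtain ⟨m, hm, hm', -, em, em'⟩ := N.window p l
      rw [← em] at hl ⊢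
      rw [← em'] at hl1 ⊢
      have hlt := (N.mem_arc_iff (by omega) hm hm' (N.root_mem m)).1 hl
      refine ⟨m - p, ?_, ?_⟩
      · rw [Int.emod_eq_of_lt (by omega) (by omega), add_sub_cancel]
      · by_cases h : m + 1 < p + k'
        · rw [Int.emod_eq_of_lt (by omega) (by omega)]
          congr 1; omega
        · have e : m - p + 1 = k' := by omega
          rw [e, Int.emod_self, add_zero]
          have e' : m + 1 = p + k' := by omega
          rcases hle.eq_or_lt with rfl | hlt'
          · rw [e', N.root_shift]
          · have := (N.mem_arc_iff (by omega) (by omega) (by omega) (N.root_mem (m + 1))).1 hl1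
            omega
    rcases N.adj x (N.arc_subset _ _ hx) y (N.arc_subset _ _ hy) hxy with
      ⟨i, hxi, hyi⟩ | ⟨l, ⟨rfl, rfl⟩ | ⟨rfl, rfl⟩⟩
    · obtain ⟨j, ⟨h2, h3⟩, h4⟩ := mem_arc.1 hx
      left
      refine ⟨j - p, ?_⟩
      rw [Int.emod_eq_of_lt (by omega) (by omega), add_sub_cancel]
      refine ⟨h4, ?_⟩
      obtain ⟨m, hm, hm', em, -⟩ := N.window p i
      rw [← em] at hxi hyi
      rwa [← N.unique hm hm' h2 (by omega) hxi h4]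
    · obtain ⟨l', h2, h3⟩ := hroot l hx hy
      exact .inr ⟨l', .inl ⟨h2, h3⟩⟩
    · obtain ⟨l₀, h2, h3⟩ := hroot l hy hx
      exact .inr ⟨l₀, .inr ⟨h3, h2⟩⟩

/-- A set composed of a part `B'` of an arc, the full arc following it, and a part `S'` of the
block after that: only three root edges can cross its boundary in addition to the edges
crossing the boundary of `B'` in the arc and of `S'` in the block. -/
lemma assemble {s : ℤ → ℤ} (hs : ∀ i, s (i + 1) = s i + (Bl i).card) {p q j : ℤ}
    (hpq : p ≤ q) (hqj : q ≤ j) (hj : j < p + k) {B' S' : Finset V} (hB' : B' ⊆ arc Bl p q)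
    (hS' : S' ⊆ Bl j) :
    ∃ B ⊆ U, (B.card : ℤ) = B'.card + (s j - s q) + S'.card ∧
      crossCard G B (U \ B) ≤ crossCard G B' (arc Bl p q \ B') + crossCard G S' (Bl j \ S') + 3 ∧
      (p = q → crossCard G B (U \ B) ≤
        crossCard G B' (arc Bl p q \ B') + crossCard G S' (Bl j \ S') + 2) := by
  set B := B' ∪ arc Bl q j ∪ S' with hB
  have hBU : B ⊆ U := Finset.union_subset (Finset.union_subset (hB'.trans (N.arc_subset _ _))
    (N.arc_subset _ _)) (hS'.trans (N.block_subset _))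
  have hmB' : ∀ i x, p ≤ i → i < p + k → x ∈ Bl i → x ∈ B' → i < q := fun i x h1 h2 h3 h4 =>
    (N.mem_arc_iff (by omega) h1 h2 h3).1 (hB' h4)
  have hmS' : ∀ i x, p ≤ i → i < p + k → x ∈ Bl i → x ∈ S' → i = j := fun i x h1 h2 h3 h4 =>
    N.unique h1 h2 (by omega) hj h3 (hS' h4)
  have hmA : ∀ i x, p ≤ i → i < p + k → x ∈ Bl i → (x ∈ arc Bl q j ↔ q ≤ i ∧ i < j) := by
    intro i x h1 h2 h3
    constructor
    · intro h
      obtain ⟨i', ⟨h4, h5⟩, h6⟩ := mem_arc.1 h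
      rw [N.unique h1 h2 (by omega) (by omega) h3 h6]
      exact ⟨h4, h5⟩
    · exact fun h => mem_arc.2 ⟨i, h, h3⟩
  have hmB : ∀ i x, p ≤ i → i < p + k → x ∈ Bl i →
      (x ∈ B ↔ (i < q ∧ x ∈ B') ∨ (q ≤ i ∧ i < j) ∨ (i = j ∧ x ∈ S')) := by
    intro i x h1 h2 h3
    rw [hB, Finset.mem_union, Finset.mem_union, hmA i x h1 h2 h3]
    have := hmB' i x h1 h2 h3
    have := hmS' i x h1 h2 h3
    tauto
  refine ⟨B, hBU, ?_, ?_⟩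
  · rw [hB, Finset.card_union_of_disjoint, Finset.card_union_of_disjoint]
    · push_cast
      rw [N.arc_card hs hqj (by omega)]
    · refine Finset.disjoint_left.2 fun x hx hx' => ?_
      obtain ⟨i, ⟨h4, h5⟩, h6⟩ := mem_arc.1 hx'
      have := hmB' i x (by omega) (by omega) h6 hx
      omega
    · refine Finset.disjoint_left.2 fun x hx hx' => ?_
      rcases Finset.mem_union.1 hx with h | h
      · have := hmB' j x (by omega) (by omega) (hS' hx') h
        omega
      · have := (hmA j x (by omega) (by omega) (hS' hx')).1 h
        omega
  -- `e l` orients the root edge with index `l` away from `B`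
  let e : ℤ → V × V := fun l => if r l ∈ B then (r l, r (l + 1)) else (r (l + 1), r l)
  have he : ∀ l x y, x ∈ B → y ∉ B → (x = r l ∧ y = r (l + 1)) ∨ (x = r (l + 1) ∧ y = r l) →
      (x, y) = e l := by
    rintro l x y hx hy (⟨rfl, rfl⟩ | ⟨rfl, rfl⟩)
    · simp [e, hx]
    · simp [e, hy]
  have hek : ∀ l, e (l + k) = e l := by
    intro l
    simp only [e]
    rw [N.root_shift, show l + (k : ℤ) + 1 = l + 1 + k by ring, N.root_shift]
  let js : ℤ := if r j ∈ B then j else j - 1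
  have hsub : ((B ×ˢ (U \ B)).filter fun e => G.Adj e.1 e.2) ⊆
      (((B' ×ˢ (arc Bl p q \ B')).filter fun e => G.Adj e.1 e.2) ∪
        ((S' ×ˢ (Bl j \ S')).filter fun e => G.Adj e.1 e.2)) ∪
      ({p - 1, q - 1, js} : Finset ℤ).image e := by
    rintro ⟨x, y⟩ hxy
    simp only [Finset.mem_filter, Finset.mem_product, Finset.mem_sdiff] at hxy
    obtain ⟨⟨hx, hyU, hy⟩, hadj⟩ := hxy
    simp only [Finset.mem_union, Finset.mem_filter, Finset.mem_product, Finset.mem_sdiff]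
    rcases N.adj x (hBU hx) y hyU hadj with ⟨i₀, hxi, hyi⟩ | ⟨l₀, hl₀⟩
    · obtain ⟨i, h1, h2, ei, -⟩ := N.window p i₀
      rw [← ei] at hxi hyi
      left
      rw [hmB i x h1 h2 hxi] at hx
      rw [hmB i y h1 h2 hyi] at hy
      rcases hx with ⟨h3, h4⟩ | h3 | ⟨rfl, h4⟩
      · left
        refine ⟨⟨h4, mem_arc.2 ⟨i, ⟨h1, h3⟩, hyi⟩, fun h => hy (.inl ⟨h3, h⟩)⟩, hadj⟩
      · exact absurd (.inr (.inl h3)) hy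
      · exact .inr ⟨⟨h4, hyi, fun h => hy (.inr (.inr ⟨rfl, h⟩))⟩, hadj⟩
    · obtain ⟨l, h1, h2, -, el, el'⟩ := N.window p l₀
      rw [← el, ← el'] at hl₀
      have hr0 := N.root_mem l
      have hr1 := N.root_mem (l + 1)
      by_cases hsp : l = q - 1 ∨ l = p + k - 1 ∨ l = js
      · right
        rw [he l x y hx hy hl₀]
        rcases hsp with rfl | rfl | rfl
        · exact Finset.mem_image_of_mem _ (by simp)
        · rw [show p + (k : ℤ) - 1 = p - 1 + k by ring, hek]
          exact Finset.mem_image_of_mem _ (by simp)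
        · exact Finset.mem_image_of_mem _ (by simp)
      · push Not at hsp
        obtain ⟨n1, n2, n3⟩ := hsp
        have b0 := hmB l (r l) h1 h2 hr0
        have b1 := hmB (l + 1) (r (l + 1)) (by omega) (by omega) hr1
        by_cases hlq : l < q
        · left; left
          have a0 : r l ∈ arc Bl p q := mem_arc.2 ⟨l, ⟨h1, hlq⟩, hr0⟩
          have a1 : r (l + 1) ∈ arc Bl p q := mem_arc.2 ⟨l + 1, ⟨by omega, by omega⟩, hr1⟩
          have hlq' : l + 1 < q := by omega
          rcases hl₀ with ⟨rfl, rfl⟩ | ⟨rfl, rfl⟩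
          · refine ⟨⟨?_, a1, fun h => hy (b1.2 (.inl ⟨hlq', h⟩))⟩, hadj⟩
            rcases b0.1 hx with h | h | h
            · exact h.2
            · omega
            · omega
          · refine ⟨⟨?_, a0, fun h => hy (b0.2 (.inl ⟨hlq, h⟩))⟩, hadj⟩
            rcases b1.1 hx with h | h | h
            · exact h.2
            · omega
            · omega
        · exfalso
          have hsame : r l ∈ B ↔ r (l + 1) ∈ B := by
            by_cases hrj : r j ∈ B
            · have hjs : js = j := if_pos hrj
              rcases lt_trichotomy l j with h | h | h
              · have t0 : r l ∈ B := b0.2 (.inr (.inl ⟨by omega, h⟩))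
                rcases (show l + 1 ≤ j by omega).eq_or_lt with h' | h'
                · rw [h']; exact ⟨fun _ => hrj, fun _ => t0⟩
                · exact ⟨fun _ => b1.2 (.inr (.inl ⟨by omega, h'⟩)), fun _ => t0⟩
              · omega
              · rw [b0, b1]
                constructor <;> rintro (h | h | h) <;> omega
            · have hjs : js = j - 1 := if_neg hrj
              rcases lt_trichotomy l j with h | h | h
              · have t0 : r l ∈ B := b0.2 (.inr (.inl ⟨by omega, h⟩))
                exact ⟨fun _ => b1.2 (.inr (.inl ⟨by omega, by omega⟩)), fun _ => t0⟩
              · subst h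
                refine ⟨fun h => absurd h hrj, fun h => ?_⟩
                rcases b1.1 h with h | h | h <;> omega
              · rw [b0, b1]
                constructor <;> rintro (h | h | h) <;> omega
          rcases hl₀ with ⟨rfl, rfl⟩ | ⟨rfl, rfl⟩
          · exact hy (hsame.1 hx)
          · exact hy (hsame.2 hx)
  have hcard : ∀ c, ({p - 1, q - 1, js} : Finset ℤ).card ≤ c → crossCard G B (U \ B) ≤
      crossCard G B' (arc Bl p q \ B') + crossCard G S' (Bl j \ S') + c := by
    intro c hc
    unfold crossCard
    refine (Finset.card_le_card hsub).trans ((Finset.card_union_le _ _).trans ?_)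
    exact add_le_add (Finset.card_union_le _ _) (Finset.card_image_le.trans hc)
  refine ⟨hcard 3 Finset.card_le_three, ?_⟩
  rintro rfl
  refine hcard 2 ?_
  rw [Finset.insert_eq_of_mem (by simp)]
  exact Finset.card_le_two

end Necklace
end Necklace

/-! ### Narrow cuts of necklaces -/

section Induction

/-- The bound, in units of the maximum degree, in terms of `L = log₂ (1 / diam*)`. -/
def widthBound (L : ℝ) : ℝ := (L ^ 2 + 7 * L + 6) / 2

lemma three_le_widthBound {L : ℝ} (hL : 0 ≤ L) : 3 ≤ widthBound L := by
  unfold widthBound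
  nlinarith [sq_nonneg L]

lemma add_six_le_widthBound {L : ℝ} (hL : 1 ≤ L) : L + 6 ≤ widthBound L := by
  unfold widthBound
  nlinarith

/-- The gain of the recursion: an arc with `N` blocks and `J` vertices is so much denser in blocks
than the whole necklace that the bound drops by at least `e + 3 / 2`. With `ρ = I / J`, the drop
of `L` is at least `log₂ ((31 / 20) (3 + ρ) / 4)`, where `((3 + ρ) / 4) ^ 4 ≥ ρ ≥ 2 ^ (e - 1)`. -/
lemma widthBound_step {n k J N I : ℝ} {e : ℕ} (hn : 0 < n) (hk : 0 < k) (hJ : 0 < J) (hN : 0 < N)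
    (hI : 0 < I) (hp : 31 * (k * (3 * J + I)) ≤ 80 * (N * n)) (he : 2 ^ e * J ≤ 2 * I)
    (hL : 1 ≤ Real.logb 2 (n / k)) (hL' : 0 ≤ Real.logb 2 (J / N)) :
    e + 3 / 2 + widthBound (Real.logb 2 (J / N)) ≤ widthBound (Real.logb 2 (n / k)) := by
  set x := (n / k) / (J / N) with hx
  set ρ := I / J with hρ
  have hρ0 : 0 < ρ := div_pos hI hJ
  have hlog : Real.logb 2 x = Real.logb 2 (n / k) - Real.logb 2 (J / N) :=
    Real.logb_div (by positivity) (by positivity)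
  have h1 : 31 / 20 * ((3 + ρ) / 4) ≤ x := by
    have e1 : x = n * N / (k * J) := by rw [hx]; field_simp
    have e2 : 31 / 20 * ((3 + ρ) / 4) = 31 * (3 * J + I) / (80 * J) := by
      rw [hρ]; field_simp; ring
    rw [e1, e2, div_le_div_iff₀ (by positivity) (by positivity)]
    nlinarith
  have h2 : ρ ≤ ((3 + ρ) / 4) ^ 4 := by
    nlinarith [sq_nonneg ((3 + ρ) / 4 - 1), sq_nonneg (((3 + ρ) / 4) ^ 2 - 1)]
  have h3 : (2 : ℝ) ^ e ≤ 2 * ρ := by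
    rw [hρ, ← mul_div_assoc, le_div_iff₀ hJ]; exact he
  have h4 : (2 : ℝ) ^ (2 * e + 3) ≤ x ^ 8 := by
    calc (2 : ℝ) ^ (2 * e + 3) = 8 * ((2 : ℝ) ^ e) ^ 2 := by rw [pow_add, pow_mul']; ring
      _ ≤ 8 * (2 * ρ) ^ 2 := by gcongr
      _ = 32 * ρ ^ 2 := by ring
      _ ≤ (31 / 20) ^ 8 * ρ ^ 2 := by gcongr; norm_num
      _ ≤ (31 / 20) ^ 8 * (((3 + ρ) / 4) ^ 4) ^ 2 := by gcongr
      _ = (31 / 20 * ((3 + ρ) / 4)) ^ 8 := by ring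
      _ ≤ x ^ 8 := by gcongr
  have h5 := Real.logb_le_logb_of_le (b := 2) (by norm_num) (by positivity) h4
  rw [Real.logb_pow, Real.logb_pow, Real.logb_self_eq_one (by norm_num), hlog] at h5
  push_cast at h5
  unfold widthBound
  nlinarith [Nat.cast_nonneg (α := ℝ) e]

variable {V : Type*} [Fintype V]

/-- In a necklace with `k` blocks in a forest of maximum degree at most `D`, every size `m` is
attained by a vertex set with at most `D * widthBound (log₂ (|U| / k))` boundary edges. The
induction is on the number of vertices. -/
theorem Necklace.exists_cut {G : SimpleGraph V} (hG : G.IsAcyclic) {D : ℕ} (hD2 : 2 ≤ D)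
    (hD : ∀ v, (Finset.univ.filter (G.Adj v)).card ≤ D) (c : ℕ) :
    ∀ {U : Finset V} {k : ℕ} {Bl : ℤ → Finset V} {r : ℤ → V}, U.card = c →
      Necklace G U k Bl r → ∀ m ≤ U.card, ∃ B ⊆ U, B.card = m ∧
        (crossCard G B (U \ B) : ℝ) ≤ D * widthBound (Real.logb 2 (U.card / k)) := by
  induction c using Nat.strong_induction_on with
  | _ c ih =>
  intro U k Bl r hc N m hm
  obtain ⟨s, hs, P⟩ := N.exists_cuts
  set n := U.card with hn
  set L := Real.logb 2 (n / k) with hLdef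
  have hkpos := N.pos
  have hkn : k ≤ n := by
    have h1 := P.sub_le (show (0 : ℤ) ≤ 0 + k by omega)
    have h2 := P.shift 0
    omega
  have hnpos : 0 < n := by omega
  have hkR : (0 : ℝ) < k := by exact_mod_cast hkpos
  have hnR : (0 : ℝ) < n := by exact_mod_cast hnpos
  have hDR : (2 : ℝ) ≤ D := by exact_mod_cast hD2
  have hL0 : 0 ≤ L := by
    refine Real.logb_nonneg (by norm_num) ?_
    rw [le_div_iff₀ hkR, one_mul]
    exact_mod_cast hkn
  have hF := three_le_widthBound hL0
  -- `Q μ` says that a set of `μ` vertices with a narrow boundary exists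
  let Q : ℤ → Prop := fun μ => ∃ B ⊆ U, (B.card : ℤ) = μ ∧
    (crossCard G B (U \ B) : ℝ) ≤ D * widthBound L
  have hQc : ∀ μ, Q (n - μ) → Q μ := by
    rintro μ ⟨B, hB, h1, h2⟩
    refine ⟨U \ B, Finset.sdiff_subset, ?_, ?_⟩
    · have := Finset.card_le_card hB
      rw [Finset.card_sdiff_of_subset hB]
      omega
    · rwa [Finset.sdiff_sdiff_eq_self hB, crossCard_comm]
  suffices hQ : Q m by
    obtain ⟨B, h1, h2, h3⟩ := hQ
    exact ⟨B, h1, by exact_mod_cast h2, h3⟩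
  have hempty : ∀ S : Finset V, crossCard G ∅ S = 0 := fun S => by simp [crossCard]
  have hQ0 : Q 0 := by
    refine ⟨∅, by simp, by simp, ?_⟩
    rw [hempty, Nat.cast_zero]
    positivity
  rcases Nat.eq_zero_or_pos m with rfl | hmpos
  · exact_mod_cast hQ0
  rcases hm.eq_or_lt with rfl | hmlt
  · exact hQc _ (by simpa using hQ0)
  -- one block is cut, next to an arc of full blocks
  have hcut : ∀ μ : ℤ, 0 < μ → μ < n → ∀ i j, s j ≤ s i + μ → s i + μ < s (j + 1) →
      ∀ S' ⊆ Bl j, (S'.card : ℤ) = s i + μ - s j →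
      (crossCard G S' (Bl j \ S') + 2 : ℝ) ≤ D * widthBound L → Q μ := by
    intro μ h0 hlt i j h1 h2 S' hS' hSc hcost
    have hij : i < j + 1 := P.strictMono.lt_iff_lt.1 (by omega)
    have hjk : j < i + k := P.strictMono.lt_iff_lt.1 (by rw [P.shift]; omega)
    obtain ⟨B, hBU, hBc, -, hB⟩ := N.assemble hs le_rfl (show i ≤ j by omega) hjk
      (Finset.empty_subset _) hS'
    refine ⟨B, hBU, ?_, ?_⟩
    · rw [hBc, hSc]; simp
    · have := hB rfl
      rw [hempty, zero_add] at this
      refine le_trans ?_ hcost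
      exact_mod_cast this
  by_cases hne : ∀ i j, s j ≠ s i + m
  swap
  · push Not at hne
    obtain ⟨i, j, h⟩ := hne
    refine hcut m (by omega) (by omega) i j h.le (by have := P.lt j; omega) ∅ (by simp)
      (by rw [h]; simp) ?_
    rw [hempty, Nat.cast_zero, zero_add]
    nlinarith
  have hL1 : 1 ≤ L := by
    rw [hLdef, Real.le_logb_iff_rpow_le (by norm_num) (by positivity), Real.rpow_one,
      le_div_iff₀ hkR]
    exact_mod_cast P.two_mul_le m hne
  have hF6 := add_six_le_widthBound hL1
  have hlight : ∀ μ : ℤ, 0 < μ → μ < n → ∀ i j, s j ≤ s i + μ → s i + μ < s (j + 1) →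
      (s (j + 1) - s j) * k ≤ 32 * n → Q μ := by
    intro μ h0 hlt i j h1 h2 h3
    have hI := hs j
    obtain ⟨S', hS', hSc, hcost⟩ := exists_exact_cut hG hD (Bl j) (s i + μ - s j).toNat (by omega)
    refine hcut μ h0 hlt i j h1 h2 S' hS' (by omega) ?_
    have hIpos : 0 < (Bl j).card := by omega
    have hlog : (Nat.log 2 (Bl j).card : ℝ) ≤ L + 5 := by
      calc (Nat.log 2 (Bl j).card : ℝ) ≤ Real.logb 2 (Bl j).card := by
            exact_mod_cast Real.natLog_le_logb (Bl j).card 2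
        _ ≤ Real.logb 2 (2 ^ 5 * (n / k)) := by
            refine Real.logb_le_logb_of_le (by norm_num) (by exact_mod_cast hIpos) ?_
            rw [← mul_div_assoc, le_div_iff₀ hkR]
            have h4 : ((Bl j).card : ℤ) * k ≤ 32 * n := by
              rwa [show ((Bl j).card : ℤ) = s (j + 1) - s j by omega]
            have h5 : ((Bl j).card : ℝ) * k ≤ 32 * n := by exact_mod_cast h4
            linarith
        _ = L + 5 := by
            rw [Real.logb_mul (by positivity) (by positivity), Real.logb_pow,
              Real.logb_self_eq_one (by norm_num)]
            push_cast; ring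
    have hcost' : (crossCard G S' (Bl j \ S') : ℝ) ≤ Nat.log 2 (Bl j).card * D := by
      exact_mod_cast hcost
    nlinarith
  -- one block is cut approximately, and the error is corrected in an arc of smaller blocks
  have hsplit : ∀ μ : ℤ, 0 < μ → μ < n → ∀ j p q, p < q → s j ≤ s p + μ →
      s q + μ ≤ s (j + 1) →
      31 * (k * (3 * (s q - s p) + (s (j + 1) - s j))) ≤ 80 * ((q - p) * n) → Q μ := by
    intro μ h0 hlt j p q hpq h1 h2 h3
    have hqj : q < j + 1 := P.strictMono.lt_iff_lt.1 (by omega)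
    have hjk : j < p + k := P.strictMono.lt_iff_lt.1 (by rw [P.shift]; omega)
    obtain ⟨k', hk'⟩ : ∃ k' : ℕ, q = p + k' := ⟨(q - p).toNat, by omega⟩
    have hk'pos : 0 < k' := by omega
    have hJI : s q - s p ≤ s (j + 1) - s j := by omega
    have hJ := N.arc_card hs hpq.le (by omega)
    have hI := hs j
    have hJk : (k' : ℤ) ≤ (arc Bl p q).card := by
      have := P.sub_le hpq.le
      omega
    set J := (arc Bl p q).card with hJdef
    set I := (Bl j).card with hIdef
    have hJpos : 0 < J := by omega
    have hJI' : J ≤ I := by omega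
    -- the accuracy `e` is the least one for which the error fits into the arc
    obtain ⟨e, he1, he2⟩ : ∃ e : ℕ, I ≤ 2 ^ e * J ∧ 2 ^ e * J ≤ 2 * I := by
      have hex : ∃ e : ℕ, I ≤ 2 ^ e * J :=
        ⟨I, (Nat.lt_two_pow_self (n := I)).le.trans (Nat.le_mul_of_pos_right _ hJpos)⟩
      refine ⟨Nat.find hex, Nat.find_spec hex, ?_⟩
      rcases Nat.eq_zero_or_pos (Nat.find hex) with h | h
      · rw [h]; omega
      · have := Nat.find_min hex (Nat.sub_lt h one_pos)
        obtain ⟨f, hf⟩ : ∃ f, Nat.find hex = f + 1 := ⟨_, (Nat.succ_pred_eq_of_pos h).symm⟩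
        rw [hf] at this ⊢
        rw [Nat.add_sub_cancel] at this
        rw [pow_succ]
        lia
    obtain ⟨t, ht⟩ : ∃ t : ℕ, (t : ℤ) = s q + μ - s j :=
      ⟨(s q + μ - s j).toNat, by have := P.strictMono hpq; omega⟩
    have htI : t ≤ I := by omega
    obtain ⟨S', hS', g1, g2, g3⟩ := exists_approx_cut hG hD (Bl j) t htI e
    have hdiff : t - S'.card ≤ J := by
      refine le_of_mul_le_mul_right (a := 2 ^ e) ?_ (by positivity)
      rw [mul_comm J]
      omega
    have hJn : J < n := by
      have hdisj : Disjoint (arc Bl p q) (Bl j) := by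
        refine Finset.disjoint_left.2 fun x hx hx' => ?_
        have := (N.mem_arc_iff (by omega) (by omega) hjk hx').1 hx
        omega
      have h4 := Finset.card_le_card (Finset.union_subset (N.arc_subset p q) (N.block_subset j))
      rw [Finset.card_union_of_disjoint hdisj] at h4
      omega
    obtain ⟨B', hB', f1, f2⟩ := ih J (hc ▸ hJn) (by rw [hJdef, hk'])
      (N.sub (p := p) hk'pos (by omega)) (t - S'.card) (by rw [← hk']; exact hdiff)
    rw [← hk', ← hJdef] at f2
    rw [← hk'] at hB'
    obtain ⟨B, hBU, hBc, hB, -⟩ := N.assemble hs hpq.le (show q ≤ j by omega) hjk hB' hS'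
    refine ⟨B, hBU, by omega, ?_⟩
    have hB2 : (crossCard G B (U \ B) : ℝ) ≤
        crossCard G B' (arc Bl p q \ B') + crossCard G S' (Bl j \ S') + 3 := by exact_mod_cast hB
    have g3' : (crossCard G S' (Bl j \ S') : ℝ) ≤ e * D := by exact_mod_cast g3
    have hk'R : (0 : ℝ) < k' := by exact_mod_cast hk'pos
    have hJR : (0 : ℝ) < J := by exact_mod_cast hJpos
    have key := widthBound_step (n := n) (k := k) (J := J) (N := k') (I := I) (e := e) hnR hkR hJR
      hk'R (by exact_mod_cast hJpos.trans_le hJI')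
      (by
        rw [show s q - s p = (J : ℤ) by omega, show s (j + 1) - s j = (I : ℤ) by omega,
          show q - p = (k' : ℤ) by omega] at h3
        exact_mod_cast h3)
      (by exact_mod_cast he2) hL1
      (Real.logb_nonneg (by norm_num) (by
        rw [le_div_iff₀ hk'R, one_mul]; exact_mod_cast hJk))
    nlinarith
  by_contra hQm
  have hQm' : ¬ Q (n - m) := fun h => hQm (hQc _ h)
  refine P.trichotomy_aux m hne ?_ ?_
  · rintro μ (rfl | rfl) j ⟨x, h1, h2⟩ <;> by_contra! hle
    · exact hQm (hlight _ (by omega) (by omega) x j h1.le h2 hle)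
    · have h3 := P.shift (x - k)
      rw [sub_add_cancel] at h3
      exact hQm' (hlight _ (by omega) (by omega) (x - k) j (by omega) (by omega) hle)
  · rintro μ (rfl | rfl) j p q hpq h1 h2 <;> by_contra! hle
    · exact hQm (hsplit _ (by omega) (by omega) j p q hpq h1 h2 hle)
    · have h3 := P.shift (p - k)
      have h4 := P.shift (q - k)
      rw [sub_add_cancel] at h3 h4
      refine hQm' (hsplit _ (by omega) (by omega) j (p - k) (q - k) (by omega) (by omega)
        (by omega) ?_)
      rw [show q - (k : ℤ) - (p - k) = q - p by ring,
        show s (q - (k : ℤ)) - s (p - k) = s q - s p by omega]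
      exact hle

end Induction

/-! ### From trees to necklaces -/

section Tree
variable {V : Type*}

/-- The graph `G` without the edges of the walk `p`. -/
def offWalk (G : SimpleGraph V) {u v : V} (p : G.Walk u v) : SimpleGraph V :=
  G.deleteEdges {e | ∃ c < p.length, e = s(p.getVert c, p.getVert (c + 1))}

lemma offWalk_adj_or {G : SimpleGraph V} {u v : V} (p : G.Walk u v) {x y : V} (h : G.Adj x y) :
    (offWalk G p).Adj x y ∨ ∃ c < p.length, (x = p.getVert c ∧ y = p.getVert (c + 1)) ∨
      (x = p.getVert (c + 1) ∧ y = p.getVert c) := by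
  by_cases hc : ∃ c < p.length, s(x, y) = s(p.getVert c, p.getVert (c + 1))
  · obtain ⟨c, h1, h2⟩ := hc
    exact .inr ⟨c, h1, Sym2.eq_iff.1 h2⟩
  · exact .inl (SimpleGraph.deleteEdges_adj.2 ⟨h, hc⟩)

/-- Different vertices of a path in an acyclic graph are separated by deleting the path's edges. -/
lemma not_reachable_offWalk {G : SimpleGraph V} (hG : G.IsAcyclic) {u v : V} {p : G.Walk u v}
    (hp : p.IsPath) {a b : ℕ} (hab : a < b) (hb : b ≤ p.length) :
    ¬ (offWalk G p).Reachable (p.getVert a) (p.getVert b) := by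
  intro h
  have hadj : G.Adj (p.getVert a) (p.getVert (a + 1)) := p.adj_getVert_succ (by omega)
  have hbr := SimpleGraph.isAcyclic_iff_forall_adj_isBridge.1 hG hadj
  rw [SimpleGraph.isBridge_iff] at hbr
  have hinj := hp.getVert_injOn
  refine hbr ((h.mono ?_).trans ?_)
  · intro x y hxy
    obtain ⟨h1, h2⟩ := SimpleGraph.deleteEdges_adj.1 hxy
    refine SimpleGraph.deleteEdges_adj.2 ⟨h1, fun h3 => h2 ⟨a, by omega, h3⟩⟩
  · have key : ∀ c, a + 1 ≤ c → c ≤ p.length →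
        (G.deleteEdges {s(p.getVert a, p.getVert (a + 1))}).Reachable (p.getVert (a + 1))
          (p.getVert c) := by
      intro c hc
      induction c, hc using Nat.le_induction with
      | base => exact fun _ => .refl _
      | succ c hc ih =>
        intro hle
        refine (ih (by omega)).trans (SimpleGraph.Adj.reachable ?_)
        refine SimpleGraph.deleteEdges_adj.2 ⟨p.adj_getVert_succ (by omega), fun h3 => ?_⟩
        rcases Sym2.eq_iff.1 h3 with ⟨h4, -⟩ | ⟨-, h4⟩
        · have := hinj (show c ≤ p.length by omega) (show a ≤ p.length by omega) h4
          omega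
        · have := hinj (show c + 1 ≤ p.length by omega) (show a ≤ p.length by omega) h4
          omega
    exact (key b hab hb).symm

variable [Fintype V]

/-- A path of a tree, with the branches hanging off its vertices, is a necklace. -/
lemma exists_necklace {G : SimpleGraph V} (hT : G.IsTree) {u v : V} {p : G.Walk u v}
    (hp : p.IsPath) : ∃ Bl r, Necklace G Finset.univ (p.length + 1) Bl r := by
  set k := p.length + 1 with hk
  have hk0 : (0 : ℤ) < k := by omega
  let a : ℤ → ℕ := fun i => (i % k).toNat
  have ha : ∀ i, ((a i : ℕ) : ℤ) = i % k := fun i =>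
    Int.toNat_of_nonneg (Int.emod_nonneg i hk0.ne')
  have hak : ∀ i, a i ≤ p.length := fun i => by
    have := Int.emod_lt_of_pos i hk0
    have := ha i
    omega
  have hac : ∀ c : ℕ, c ≤ p.length → a c = c := fun c hc => by
    have := ha c
    rw [Int.emod_eq_of_lt (by omega) (by omega)] at this
    omega
  have has : ∀ i, a (i + k) = a i := fun i => by simp [a]
  let r : ℤ → V := fun i => p.getVert (a i)
  let Bl : ℤ → Finset V := fun i => Finset.univ.filter fun x => (offWalk G p).Reachable (r i) x
  have hmem : ∀ i x, x ∈ Bl i ↔ (offWalk G p).Reachable (r i) x := fun i x => by simp [Bl]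
  have hrmem : ∀ i, r i ∈ Bl i := fun i => (hmem _ _).2 (.refl _)
  have hcov : ∀ x, ∃ i, x ∈ Bl i := by
    have key : ∀ x y, G.Adj x y → (∃ i, x ∈ Bl i) → ∃ i, y ∈ Bl i := by
      rintro x y hxy ⟨i, hi⟩
      rcases offWalk_adj_or p hxy with h | ⟨c, hc, ⟨-, rfl⟩ | ⟨-, rfl⟩⟩
      · exact ⟨i, (hmem _ _).2 (((hmem _ _).1 hi).trans h.reachable)⟩
      · exact ⟨(c + 1 : ℕ), by simpa only [r, hac (c + 1) hc] using hrmem (c + 1 : ℕ)⟩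
      · exact ⟨(c : ℕ), by simpa only [r, hac c hc.le] using hrmem (c : ℕ)⟩
    intro x
    obtain ⟨w⟩ := hT.connected.preconnected (r 0) x
    have : ∀ {y z : V} (w : G.Walk y z), (∃ i, y ∈ Bl i) → ∃ i, z ∈ Bl i := by
      intro y z w
      induction w with
      | nil => exact id
      | cons h _ ih => exact fun hy => ih (key _ _ h hy)
    exact this w ⟨0, hrmem 0⟩
  refine ⟨Bl, r, by omega, fun i => by simp only [Bl, r, has], fun i => by simp only [r, has],
    hrmem, fun i j hij hj => ?_, fun x => by simpa using hcov x, fun x _ y _ hxy => ?_⟩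
  · refine Finset.disjoint_left.2 fun x hx hx' => ?_
    have hreach := ((hmem _ _).1 hx).trans ((hmem _ _).1 hx').symm
    have hne : a i ≠ a j := by
      intro h
      have h2 : (k : ℤ) ∣ j - i := Int.ModEq.dvd (show i % k = j % k by rw [← ha, ← ha, h])
      have := Int.le_of_dvd (by omega) h2
      omega
    rcases hne.lt_or_gt with h | h
    · exact not_reachable_offWalk hT.isAcyclic hp h (hak j) hreach
    · exact not_reachable_offWalk hT.isAcyclic hp h (hak i) hreach.symm
  · rcases offWalk_adj_or p hxy with h | ⟨c, hc, h⟩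
    · obtain ⟨i, hi⟩ := hcov x
      exact .inl ⟨i, hi, (hmem _ _).2 (((hmem _ _).1 hi).trans h.reachable)⟩
    · have e1 : r c = p.getVert c := by simp only [r, hac c hc.le]
      have e2 : r (c + 1) = p.getVert (c + 1) := by
        have := hac (c + 1) hc
        push_cast at this
        simp only [r, this]
      exact .inr ⟨c, by rwa [e1, e2]⟩

lemma cutWidth_le_crossCard (G : SimpleGraph V) (B : Finset V) :
    cutWidth G B ≤ crossCard G B (Finset.univ \ B) := by
  unfold cutWidth crossCard
  rw [← Nat.card_eq_finsetCard]
  refine Nat.card_le_card_of_surjective (fun e => ⟨s(e.1.1, e.1.2), e.1.1, e.1.2, ?_⟩) ?_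
  · have := e.2
    simp only [Finset.mem_filter, Finset.mem_product, Finset.mem_sdiff, Finset.mem_univ,
      true_and] at this
    exact ⟨this.2, this.1.1, this.1.2, rfl⟩
  · rintro ⟨_, x, y, h, hx, hy, rfl⟩
    exact ⟨⟨(x, y), by simp [h, hx, hy]⟩, rfl⟩

lemma minBis_le_crossCard (G : SimpleGraph V) {B : Finset V} (hB : B.card = Fintype.card V / 2) :
    minBis G ≤ crossCard G B (Finset.univ \ B) := by
  have h : IsBisection B := by
    have := Finset.card_compl B
    unfold IsBisection
    omega
  exact le_trans (Nat.sInf_le ⟨B, h, rfl⟩) (cutWidth_le_crossCard G B)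

lemma card_adj_le_maxDeg (G : SimpleGraph V) (v : V) :
    (Finset.univ.filter (G.Adj v)).card ≤ maxDeg G := by
  have : (Finset.univ.filter (G.Adj v)).card = Nat.card {u // G.Adj v u} := by
    rw [Nat.card_eq_fintype_card, Fintype.card_subtype]
  rw [this]
  exact Finset.le_sup (f := fun v => Nat.card {u // G.Adj v u}) (Finset.mem_univ v)

lemma exists_longest_path (G : SimpleGraph V) [Nonempty V] :
    ∃ (u v : V) (p : G.Walk u v), p.IsPath ∧ longestPathCard G = p.length + 1 := by
  obtain ⟨v₀⟩ := ‹Nonempty V›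
  have := Nat.sSup_mem
    (s := {k | ∃ (u v : V) (p : G.Walk u v), p.IsPath ∧ k = p.support.length})
    ⟨_, v₀, v₀, .nil, by simp, rfl⟩ ⟨Fintype.card V, by
      rintro _ ⟨u, v, p, hp, rfl⟩
      have := hp.length_lt
      rw [SimpleGraph.Walk.length_support]
      omega⟩
  obtain ⟨u, v, p, hp, h⟩ := this
  exact ⟨u, v, p, hp, by rw [longestPathCard, h, SimpleGraph.Walk.length_support]⟩

/-- A tree of maximum degree at most one has at most two vertices. -/
lemma card_le_two {G : SimpleGraph V} (hT : G.IsTree) (h : maxDeg G ≤ 1) :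
    Fintype.card V ≤ 2 := by
  have h1 := hT.card_edgeFinset
  have h2 := G.sum_degrees_eq_twice_card_edges
  have h3 : ∑ v, G.degree v ≤ ∑ _v : V, 1 := by
    refine Finset.sum_le_sum fun v _ => ?_
    have := card_adj_le_maxDeg G v
    rw [← SimpleGraph.neighborFinset_eq_filter, SimpleGraph.card_neighborFinset_eq_degree] at this
    omega
  simp only [Finset.sum_const, Finset.card_univ, smul_eq_mul, mul_one] at h3
  omega

end Tree

end

end MinBisection

/-- Every tree `T` on `n` vertices satisfies
`MinBis(T) ≤ (Δ(T)/2) ((log₂(1/diam*(T)))² + 7 log₂(1/diam*(T)) + 6)`. -/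
theorem MinBisection.minBis_le_tree_improved {V : Type*} [Fintype V] (G : SimpleGraph V)
    (hT : G.IsTree) :
    (minBis G : ℝ) ≤ (maxDeg G : ℝ) / 2 *
      ((Real.logb 2 (1 / diamStar G)) ^ 2 + 7 * Real.logb 2 (1 / diamStar G) + 6) := by
  have : Nonempty V := hT.connected.nonempty
  obtain ⟨u, v, p, hp, hlen⟩ := exists_longest_path G
  set D := maxDeg G
  have hratio : 1 / diamStar G = (Fintype.card V : ℝ) / ((p.length + 1 : ℕ) : ℝ) := by
    rw [diamStar, hlen, one_div_div]
  set L := Real.logb 2 (1 / diamStar G) with hL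
  have hrhs : (D : ℝ) / 2 * (L ^ 2 + 7 * L + 6) = D * widthBound L := by
    unfold widthBound; ring
  rw [hrhs]
  have hbis : ∀ B : Finset V, B.card = Fintype.card V / 2 →
      (crossCard G B (Finset.univ \ B) : ℝ) ≤ D * widthBound L →
        (minBis G : ℝ) ≤ D * widthBound L :=
    fun B hB h => le_trans (by exact_mod_cast minBis_le_crossCard G hB) h
  rcases le_or_gt D 1 with hD | hD
  · have hn := card_le_two hT hD
    have hL0 : 0 ≤ L := by
      refine Real.logb_nonneg (by norm_num) ?_
      rw [hratio, le_div_iff₀ (by positivity), one_mul]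
      exact_mod_cast hp.length_lt
    obtain ⟨B, -, hB⟩ := Finset.exists_subset_card_eq
      (show Fintype.card V / 2 ≤ (Finset.univ : Finset V).card from Nat.div_le_self _ _)
    refine hbis B hB ?_
    have hcross : crossCard G B (Finset.univ \ B) ≤ D := by
      obtain ⟨w, hw⟩ : ∃ w, B ⊆ {w} := Finset.card_le_one_iff_subset_singleton.1 (by omega)
      exact crossCard_le_of_left (card_adj_le_maxDeg G)
        fun x hx _ _ _ => Finset.mem_singleton.1 (hw hx)
    have := three_le_widthBound hL0
    have h1 : (crossCard G B (Finset.univ \ B) : ℝ) ≤ D := by exact_mod_cast hcross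
    nlinarith [Nat.cast_nonneg (α := ℝ) D]
  · obtain ⟨Bl, r, N⟩ := exists_necklace hT hp
    obtain ⟨B, -, hB, hcost⟩ := N.exists_cut hT.isAcyclic hD (card_adj_le_maxDeg G) _ rfl
      (Fintype.card V / 2) (Nat.div_le_self _ _)
    rw [Finset.card_univ, ← hratio] at hcost
    exact hbis B hB hcost
end

section
/- Every tree T on n vertices admits a tree decomposition (T',X') of width one such that r(T',X') ≥ diam*(T). -/
/-! Root the tree `G` at a vertex `r`, let `par v` be the next vertex on the path from `v` to `r`
(with `par r = r`), and take `G` itself as the decomposition tree, with clusters `{v, par v}`.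
Every edge joins a vertex to its parent, so it lies in a cluster, and the nodes whose clusters
contain `x` are `x` and its children, which form a star in `G`; this gives a tree decomposition
(`exists_parent`, `isTreeDecomp_parent`). Since `v` lies in the cluster of `v`, the clusters along
a path of `G` cover the path, so a longest path has weight at least its number of vertices.
Relabelling the nodes by `Fin n` (`IsTreeDecomp.comp_iso`) changes nothing. -/

open scoped Classical

namespace MinBisection

open SimpleGraph

/-- Every tree has a parent function, sending a vertex to the next one on its path to a chosen
root; fixed points are allowed in the statement since the root is its own parent. -/
lemma exists_parent {V : Type*} {G : SimpleGraph V} (hT : G.IsTree) :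
    ∃ par : V → V, (∀ v, par v = v ∨ G.Adj v (par v)) ∧
      ∀ u v, G.Adj u v → par u = v ∨ par v = u := by
  obtain ⟨r⟩ := hT.1.nonempty
  have hex : ∀ v, ∃ p : G.Walk v r, p.IsPath := fun v => by
    obtain ⟨p, hp⟩ := hT.1.exists_isPath v r
    exact ⟨p, hp⟩
  choose f hf using hex
  refine ⟨fun v => (f v).snd, fun v => ?_, fun u v huv => ?_⟩
  · by_cases hn : (f v).Nil
    · left
      have h := hn.eq
      subst h
      simp [Walk.eq_nil_iff_nil.mpr hn]
    · exact Or.inr ((f v).adj_snd hn)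
  · by_cases hv : v ∈ (f u).support
    · left
      have h1 : (f u).takeUntil v hv = Walk.cons huv Walk.nil :=
        congrArg Subtype.val ((hT.2.subsingleton_path _ _).elim ⟨_, (hf u).takeUntil hv⟩
          ⟨Walk.cons huv Walk.nil, by simp [huv.ne]⟩)
      have h2 := Walk.snd_takeUntil huv.ne' (f u) hv
      rw [h1] at h2
      simpa using h2.symm
    · right
      have h1 : f v = Walk.cons huv.symm (f u) :=
        congrArg Subtype.val ((hT.2.subsingleton_path _ _).elim ⟨_, hf v⟩
          ⟨Walk.cons huv.symm (f u), by simp [hf u, hv]⟩)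
      simp [h1]

/-- The clusters `{v, par v}` form a tree decomposition of a tree over itself. -/
lemma isTreeDecomp_parent {V : Type*} {G : SimpleGraph V} (hT : G.IsTree) {par : V → V}
    (h1 : ∀ v, par v = v ∨ G.Adj v (par v))
    (h2 : ∀ u v, G.Adj u v → par u = v ∨ par v = u) :
    IsTreeDecomp G G (fun v => ({v, par v} : Finset V)) where
  isTree := hT
  mem_cluster v := ⟨v, by simp⟩
  edge_cluster u v huv := by
    rcases h2 u v huv with h | h
    · exact ⟨u, by simp [h]⟩
    · exact ⟨v, by simp [h]⟩
  inter_subset i j p hp h hh x hx := by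
    simp only [Finset.mem_inter, Finset.mem_insert, Finset.mem_singleton] at hx ⊢
    obtain ⟨hxi, hxj⟩ := hx
    -- A path in a tree is determined by its ends, so its vertices can be read off any other path.
    have key : ∀ q : G.Walk i j, q.IsPath → h ∈ q.support := fun q hq => by
      have : p = q := congrArg Subtype.val ((hT.2.subsingleton_path _ _).elim ⟨p, hp⟩ ⟨q, hq⟩)
      exact this ▸ hh
    have adj : ∀ k, x ≠ k → x = par k → G.Adj k x := fun k hk hx => by
      rcases h1 k with h | h
      · exact absurd (hx.trans h) hk
      · exact hx ▸ h
    by_cases hij : i = j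
    · subst hij
      have := key Walk.nil (by simp)
      simp at this
      subst this
      exact hxi
    by_cases hi : x = i
    · subst hi
      have hj := hxj.resolve_left hij
      have := key (Walk.cons (adj j hij hj).symm Walk.nil) (by simp [hij])
      simp at this
      rcases this with rfl | rfl
      · exact Or.inl rfl
      · exact hxj
    have hi' := hxi.resolve_left hi
    by_cases hj : x = j
    · subst hj
      have := key (Walk.cons (adj i hi hi') Walk.nil) (by simp [hij])
      simp at this
      rcases this with rfl | rfl
      · exact hxi
      · exact Or.inl rfl
    have hj' := hxj.resolve_left hj
    have := key (Walk.cons (adj i hi hi') (Walk.cons (adj j hj hj').symm Walk.nil))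
      (by simp [hij, hj, Ne.symm hi])
    simp at this
    rcases this with rfl | rfl | rfl
    · exact hxi
    · exact Or.inl rfl
    · exact hxj

lemma IsTreeDecomp.comp_iso {V ι κ : Type*} {G : SimpleGraph V} {T : SimpleGraph ι}
    {T' : SimpleGraph κ} {X : ι → Finset V} (h : IsTreeDecomp G T X) (e : T ≃g T') :
    IsTreeDecomp G T' (X ∘ e.symm) where
  isTree := e.isTree_iff.mp h.isTree
  mem_cluster v := by
    obtain ⟨i, hi⟩ := h.mem_cluster v
    exact ⟨e i, by simpa using hi⟩
  edge_cluster u v huv := by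
    obtain ⟨i, hi⟩ := h.edge_cluster huv
    exact ⟨e i, by simpa using hi⟩
  inter_subset i j p hp k hk :=
    h.inter_subset (p.map e.symm.toHom) (hp.map e.symm.injective) (e.symm k)
      (by rw [Walk.support_map]; exact List.mem_map_of_mem hk)

/-- If `v` lies in the cluster of its own node `e v`, then the decomposition has a path at least
as heavy as a longest path of `G`. -/
lemma diamStar_le_rTD {V ι : Type*} [Fintype V] {G : SimpleGraph V} {T : SimpleGraph ι}
    {X : ι → Finset V} (e : G ≃g T) (hX : ∀ v, v ∈ X (e v)) : diamStar G ≤ rTD T X := by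
  unfold diamStar rTD longestPathCard
  refine div_le_div_of_nonneg_right (Nat.cast_le.mpr (csSup_le' ?_)) (Nat.cast_nonneg _)
  rintro k ⟨u, v, p, hp, rfl⟩
  have hb : BddAbove {w : ℕ | ∃ (i j : ι) (p : T.Walk i j), p.IsPath ∧ w = walkWeight X p} := by
    refine ⟨Fintype.card V, ?_⟩
    rintro w ⟨i, j, p, -, rfl⟩
    exact Finset.card_le_univ _
  refine le_trans ?_ (le_csSup hb ⟨_, _, p.map e.toHom, hp.map e.injective, rfl⟩)
  rw [← List.toFinset_card_of_nodup hp.support_nodup]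
  refine Finset.card_le_card fun x hx => ?_
  rw [Finset.mem_biUnion]
  refine ⟨e x, ?_, hX x⟩
  rw [List.mem_toFinset] at hx ⊢
  rw [Walk.support_map]
  exact List.mem_map_of_mem (f := e.toHom) hx

end MinBisection

/-- Every tree `T` on `n` vertices admits a tree decomposition `(T', X')`
of width one such that `r(T', X') ≥ diam*(T)`. -/
theorem MinBisection.tree_decomp_of_tree {V : Type*} [Fintype V] (G : SimpleGraph V)
    (hT : G.IsTree) :
    ∃ (k : ℕ) (T' : SimpleGraph (Fin k)) (X' : Fin k → Finset V),
      IsTreeDecomp G T' X' ∧ (∀ a, (X' a).card ≤ 2) ∧ diamStar G ≤ rTD T' X' := by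
  obtain ⟨par, h1, h2⟩ := exists_parent hT
  let e := SimpleGraph.Iso.map (Fintype.equivFin V) G
  refine ⟨Fintype.card V, _, _, (isTreeDecomp_parent hT h1 h2).comp_iso e, fun a => ?_,
    diamStar_le_rTD e fun v => ?_⟩
  · exact Finset.card_le_two
  · simp
end
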